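/- arXiv:0712.2440 — 2 statements merged into one kernel-verified Lean document; each statement's English description precedes it below -/
import Mathlib

section
/- There exists ε₀ > 0 with B̄(0,ε₀) ⊂ U such that for every 0 < ε ≤ ε₀ and every θ ∈ ℝ: (i) X_θ ∩ S(0,ε) is the union of the three pairwise disjoint sets E_θ ∩ S(0,ε), V ∩ S(0,ε) and E_{θ+π} ∩ S(0,ε), where E_θ ∩ S(0,ε) and E_{θ+π} ∩ S(0,ε) are exactly the fibres of the Milnor map φ(x) = f(x)/‖f(x)‖ over the antipodal points exp(iθ) and −exp(iθ) of the unit circle; and (ii) X_θ ∩ S(0,ε) is homeomorphic to {x ∈ U : Re f(x) = 0} ∩ S(0,ε), the link of the real analytic hypersurface {Re f = 0}. -/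
/-!
The decomposition (i) is elementary. For (ii), on a small sphere there is a continuous vector field `v`, tangent to the sphere
and zero on `V = {f = 0}`, along which `f` turns with angular speed one while `log |f|` changes with bounded speed `K`
(`exists_isMilnorField`). A trajectory starting off `V` never reaches `V`, and trajectories starting near `V` hardly move, so
the flow exists for all times, is the identity on `V` and is continuous (`IsMilnorField.exists_flow`). The time `π/2 - θ` map
carries `X_θ ∩ S` to `{Re f = 0} ∩ S`, and the time `θ - π/2` map is its inverse.

The field `v` is the component `G` of `i grad (log f)` tangent to the sphere, divided by `‖G‖²` (`milnorField`). Two estimates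
are needed. Near a zero of `f`, the function is small compared with its derivative (`HolAt.le_norm_fderiv`). And
`‖grad (log f)‖ ≤ K ‖G‖`; by linear algebra (`norm_le_of_radial`) this follows once at each `z` near `0` off `V` there is a vector
`w` close to a bounded multiple `B z`, `B ≥ 1`, with `df(w) / f` close to a number `A ≥ 1` (`exists_radialGood`). Both estimates
are proved by contradiction, along an ultrafilter of bad points, and local uniformization: these points lift through a holomorphic
chart in which `f`, and for the second estimate also the equation of the exceptional divisor of the blow-up of `0`, is a monomial
times a unit. The vector `w` is then the image of the Euler field `∑ uᵢ ∂/∂uᵢ`, along which the logarithmic derivative of a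
monomial is its degree. This replaces the curve selection lemma.

Local uniformization along an ultrafilter (`uProp`) is proved by induction on the dimension and, for fixed dimension, on the
order of `f` in the last variable (`wProp`): after a Tschirnhausen shift the coefficients, and the differences of suitable powers
of them, are made monomial by induction, so that after a ramification the Newton polygon has a single edge with slope given by a
monomial `u^γ`. Along the ultrafilter either `y = O(u^γ)`, and `y = u^γ (z + s)` lowers the order, or `u^γ = o(y)`, and the
leading power of `y` dominates (`unif_core`).
-/

/-- The member `X_θ` of the canonical pencil of `f`. -/
def Xset {α : Type} (U : Set α) (f : α → ℂ) (θ : ℝ) : Set α :=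
  {x ∈ U | ∃ t : ℝ, f x = t * Complex.exp (θ * Complex.I)}

/-- The open half `E_θ`. -/
def Eset {α : Type} (U : Set α) (f : α → ℂ) (θ : ℝ) : Set α :=
  {x ∈ U | ∃ t : ℝ, 0 < t ∧ f x = t * Complex.exp (θ * Complex.I)}

section MilnorFlow
open Set Filter Topology Metric

/-! ### Holomorphic germs -/

section Hol
variable {E F G : Type*} [NormedAddCommGroup E] [NormedSpace ℂ E]
  [NormedAddCommGroup F] [NormedSpace ℂ F] [NormedAddCommGroup G] [NormedSpace ℂ G]

/-- `f` is holomorphic near `p`: complex differentiable on a neighbourhood of `p`. -/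
def HolAt (f : E → F) (p : E) : Prop := ∀ᶠ z in 𝓝 p, DifferentiableAt ℂ f z

/-- Cauchy estimate for the derivative of a function of several variables, obtained by restricting
to complex lines. -/
lemma norm_fderiv_le_of_ball {f : E → ℂ} {z : E} {R M : ℝ} (hR : 0 < R) (hM : 0 ≤ M)
    (hd : ∀ x ∈ ball z R, DifferentiableAt ℂ f x) (hb : ∀ x ∈ ball z R, ‖f x‖ ≤ M) :
    ‖fderiv ℂ f z‖ ≤ 2 * M / R := by
  refine ContinuousLinearMap.opNorm_le_bound _ (by positivity) fun v => ?_
  rcases eq_or_ne v 0 with rfl | hv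
  · simp
  have hv' : 0 < ‖v‖ := norm_pos_iff.2 hv
  set ρ := R / 2 / ‖v‖ with hρ
  have hρ0 : 0 < ρ := by positivity
  have hmem : ∀ t : ℂ, ‖t‖ ≤ ρ → z + t • v ∈ ball z R := by
    intro t ht
    rw [mem_ball, dist_eq_norm, add_sub_cancel_left, norm_smul]
    calc ‖t‖ * ‖v‖ ≤ ρ * ‖v‖ := by gcongr
      _ = R / 2 := by rw [hρ]; field_simp
      _ < R := by linarith
  have hl : ∀ t : ℂ, HasFDerivAt (fun t : ℂ => z + t • v)
      ((ContinuousLinearMap.id ℂ ℂ).smulRight v) t := by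
    intro t
    exact (((ContinuousLinearMap.id ℂ ℂ).smulRight v).hasFDerivAt).const_add z
  have hdd : DifferentiableOn ℂ (fun t : ℂ => f (z + t • v)) (closedBall 0 ρ) := by
    intro t ht
    exact ((hd _ (hmem t (by simpa using ht))).comp t (hl t).differentiableAt).differentiableWithinAt
  have := Complex.norm_deriv_le_of_forall_mem_sphere_norm_le (c := 0) (f := fun t : ℂ => f (z + t • v))
    hρ0 ((hdd.mono closure_ball_subset_closedBall).diffContOnCl) (C := M)
    (fun t ht => hb _ (hmem t (by simp at ht; exact ht.le)))
  have h2 : deriv (fun t : ℂ => f (z + t • v)) 0 = fderiv ℂ f z v := by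
    have h3 := (hd z (mem_ball_self hR)).hasFDerivAt
    have h4 : HasFDerivAt f (fderiv ℂ f z) (z + (0 : ℂ) • v) := by simpa using h3
    have := (h4.comp (0 : ℂ) (hl 0)).hasDerivAt
    simpa using! this.deriv
  rw [h2] at this
  refine this.trans (le_of_eq ?_)
  rw [hρ]; field_simp

lemma HolAt.exists_ball {f : E → F} {p : E} (h : HolAt f p) :
    ∃ r > 0, ∀ x ∈ ball p r, DifferentiableAt ℂ f x := by
  obtain ⟨r, hr, h⟩ := Metric.eventually_nhds_iff_ball.1 h
  exact ⟨r, hr, h⟩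

lemma HolAt.eventually {f : E → F} {p : E} (h : HolAt f p) : ∀ᶠ z in 𝓝 p, HolAt f z :=
  eventually_eventually_nhds.2 h

lemma HolAt.differentiableAt {f : E → F} {p : E} (h : HolAt f p) : DifferentiableAt ℂ f p :=
  h.self_of_nhds

lemma HolAt.continuousAt {f : E → F} {p : E} (h : HolAt f p) : ContinuousAt f p :=
  h.differentiableAt.continuousAt

/-- The derivative of a holomorphic function is continuous. -/
lemma HolAt.continuousAt_fderiv {f : E → ℂ} {p : E} (h : HolAt f p) :
    ContinuousAt (fderiv ℂ f) p := by
  have hb : ∀ᶠ z in 𝓝 p, ‖f z‖ < ‖f p‖ + 1 :=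
    h.continuousAt.norm.eventually_lt continuousAt_const (by linarith)
  obtain ⟨r, hr, H⟩ := Metric.eventually_nhds_iff_ball.1 (h.and hb)
  set M := ‖f p‖ + 1
  have hM : 0 ≤ M := by positivity
  set L := 2 * M / (r / 2) with hL
  have hL0 : 0 ≤ L := by positivity
  have hlip : ∀ x ∈ ball p (r/2), ∀ y ∈ ball p (r/2), ‖f y - f x‖ ≤ L * ‖y - x‖ := by
    intro x hx y hy
    refine (convex_ball p (r/2)).norm_image_sub_le_of_norm_fderiv_le (𝕜 := ℂ)
      (fun z hz => (H z (ball_subset_ball (by linarith) hz)).1) (fun z hz => ?_) hx hy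
    have hsub : ball z (r/2) ⊆ ball p r := ball_subset_ball' (by rw [mem_ball] at hz; linarith)
    exact norm_fderiv_le_of_ball (by linarith) hM (fun w hw => (H w (hsub hw)).1)
      (fun w hw => (H w (hsub hw)).2.le)
  -- apply the Cauchy estimate to the increment of `f`
  have key : ∀ q ∈ ball p (r/4), ‖fderiv ℂ f q - fderiv ℂ f p‖ ≤ 2 * (L * ‖q - p‖) / (r/4) := by
    intro q hq
    have hs : ∀ x ∈ ball p (r/4), x + (q - p) ∈ ball p (r/2) := by
      intro x hx
      rw [mem_ball, dist_eq_norm] at *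
      calc ‖x + (q - p) - p‖ = ‖(x - p) + (q - p)‖ := by congr 1; abel
        _ ≤ _ := norm_add_le _ _
        _ < r/2 := by linarith
    have hs' : ∀ x ∈ ball p (r/4), x ∈ ball p (r/2) := fun x hx => ball_subset_ball (by linarith) hx
    have hbig : ∀ x ∈ ball p (r/2), DifferentiableAt ℂ f x := fun x hx =>
      (H x (ball_subset_ball (by linarith) hx)).1
    have h1 : ∀ x ∈ ball p (r/4), DifferentiableAt ℂ (fun x => f (x + (q - p)) - f x) x := by
      intro x hx
      refine DifferentiableAt.sub ?_ (hbig x (hs' x hx))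
      exact (hbig _ (hs x hx)).comp x (differentiableAt_id.add_const _)
    have h2 := norm_fderiv_le_of_ball (z := p) (R := r/4) (M := L * ‖q - p‖) (by linarith)
      (by positivity) h1 (fun x hx => by
        have := hlip x (hs' x hx) _ (hs x hx)
        rwa [add_sub_cancel_left] at this)
    have h3 : fderiv ℂ (fun x => f (x + (q - p)) - f x) p = fderiv ℂ f q - fderiv ℂ f p := by
      have ha : DifferentiableAt ℂ (fun x => f (x + (q - p))) p :=
        (hbig _ (hs p (mem_ball_self (by linarith)))).comp p (differentiableAt_id.add_const _)
      rw [fderiv_fun_sub ha (hbig p (mem_ball_self (by linarith))), fderiv_comp_add_right]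
      congr 2; abel
    rwa [h3] at h2
  rw [ContinuousAt, tendsto_iff_norm_sub_tendsto_zero]
  have hz : Tendsto (fun q => 2 * (L * ‖q - p‖) / (r/4)) (𝓝 p) (𝓝 0) := by
    have : Continuous fun q : E => 2 * (L * ‖q - p‖) / (r/4) := by fun_prop
    simpa using this.tendsto p
  refine squeeze_zero' (Eventually.of_forall fun _ => norm_nonneg _) ?_ hz
  filter_upwards [ball_mem_nhds p (show 0 < r/4 by linarith)] with q hq using key q hq

lemma HolAt.contDiffAt_one {f : E → ℂ} {p : E} (h : HolAt f p) : ContDiffAt ℂ 1 f p := by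
  rw [contDiffAt_one_iff]
  refine ⟨fderiv ℂ f, {z | HolAt f z}, h.eventually, fun z hz => ?_, fun z hz => ?_⟩
  · exact (HolAt.continuousAt_fderiv hz).continuousWithinAt
  · exact (HolAt.differentiableAt hz).hasFDerivAt

/-- Holomorphic dependence on parameters of an integral over an interval. -/
lemma holAt_intervalIntegral [FiniteDimensional ℂ E] [FiniteDimensional ℂ F] {g : F → ℂ} {p : E} {a b : ℝ}
    (A : ℝ → E →L[ℂ] F) (hA : Continuous A) (c : ℝ → F) (hc : Continuous c)
    (k : ℝ → ℂ) (hk : Continuous k) (hg : ∀ t ∈ uIcc a b, HolAt g (A t p + c t)) :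
    HolAt (fun x => ∫ t in a..b, k t * g (A t x + c t)) p := by
  have hm : Continuous fun q : E × ℝ => A q.2 q.1 + c q.2 := by fun_prop
  have h1 : ∀ᶠ x in 𝓝 p, ∀ t ∈ uIcc a b, HolAt g (A t x + c t) := by
    refine isCompact_uIcc.eventually_forall_of_forall_eventually fun t ht => ?_
    exact (hm.tendsto (p, t)).eventually (hg t ht).eventually
  have : ProperSpace E := FiniteDimensional.proper ℂ E
  obtain ⟨r, hr, H⟩ := Metric.eventually_nhds_iff_ball.1 h1
  -- on a smaller closed ball the integrand and its derivative are continuous, hence bounded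
  have hcd : ∀ x ∈ ball p r, ∀ t ∈ uIcc a b, ContinuousAt
      (fun q : E × ℝ => k q.2 • (fderiv ℂ g (A q.2 q.1 + c q.2)).comp (A q.2)) (x, t) := by
    intro x hx t ht
    have := (H x hx t ht).continuousAt_fderiv.comp (f := fun q : E × ℝ => A q.2 q.1 + c q.2)
      (x := (x, t)) hm.continuousAt
    refine ContinuousAt.smul (f := fun q : E × ℝ => k q.2) (by fun_prop) ?_
    exact ContinuousAt.clm_comp this (hA.comp continuous_snd).continuousAt
  have hcont : ∀ x ∈ ball p r, ContinuousOn (fun t => k t * g (A t x + c t)) (uIcc a b) := by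
    intro x hx t ht
    have := (H x hx t ht).continuousAt.comp (f := fun t => A t x + c t) (x := t)
      (by fun_prop)
    exact (hk.continuousAt.mul this).continuousWithinAt
  have hK : IsCompact (closedBall p (r/2) ×ˢ uIcc a b) := (isCompact_closedBall _ _).prod isCompact_uIcc
  obtain ⟨C, hC⟩ := hK.exists_bound_of_continuousOn
    (f := fun q : E × ℝ => k q.2 • (fderiv ℂ g (A q.2 q.1 + c q.2)).comp (A q.2))
    (fun q hq => (hcd q.1 (closedBall_subset_ball (by linarith) hq.1) q.2 hq.2).continuousWithinAt)
  filter_upwards [ball_mem_nhds p (show 0 < r/4 by linarith)] with x hx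
  have hxs : ball x (r/4) ⊆ closedBall p (r/2) := by
    refine (ball_subset_ball' (ε₂ := r/2) ?_).trans ball_subset_closedBall
    rw [mem_ball] at hx; linarith
  have hxr : ball x (r/4) ⊆ ball p r := hxs.trans (closedBall_subset_ball (by linarith))
  refine (intervalIntegral.hasFDerivAt_integral_of_dominated_of_fderiv_le (𝕜 := ℂ) (bound := fun _ => C)
    (F := fun x t => k t * g (A t x + c t))
    (F' := fun x t => k t • (fderiv ℂ g (A t x + c t)).comp (A t))
    (ball_mem_nhds x (show 0 < r/4 by linarith)) ?_ ?_ ?_ ?_ ?_ ?_).differentiableAt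
  · filter_upwards [ball_mem_nhds x (show 0 < r/4 by linarith)] with y hy
    exact ((hcont y (hxr hy)).mono uIoc_subset_uIcc).aestronglyMeasurable measurableSet_uIoc
  · exact (hcont x (hxr (mem_ball_self (by linarith)))).intervalIntegrable
  · refine ContinuousOn.aestronglyMeasurable (fun t ht => ?_) measurableSet_uIoc
    have := (hcd x (hxr (mem_ball_self (by linarith))) t (uIoc_subset_uIcc ht))
    have h2 : ContinuousAt (fun t : ℝ => (x, t)) t := by fun_prop
    exact (ContinuousAt.comp (f := fun t : ℝ => (x, t)) this h2).continuousWithinAt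
  · exact Eventually.of_forall fun t ht y hy => hC (y, t) ⟨hxs hy, uIoc_subset_uIcc ht⟩
  · exact intervalIntegrable_const
  · refine Eventually.of_forall fun t ht y hy => ?_
    have := (H y (hxr hy) t (uIoc_subset_uIcc ht)).differentiableAt.hasFDerivAt
    exact (this.comp y ((A t).hasFDerivAt.add_const _)).const_mul (k t)

/-- Directional derivatives of holomorphic functions are holomorphic. -/
lemma HolAt.fderiv_apply [FiniteDimensional ℂ E] {f : E → ℂ} {p : E} (h : HolAt f p) (v : E) :
    HolAt (fun z => fderiv ℂ f z v) p := by
  obtain ⟨r, hr, H⟩ := h.exists_ball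
  set ρ := r / 4 / (‖v‖ + 1) with hρ
  have hρ0 : 0 < ρ := by positivity
  have hρv : ρ * ‖v‖ ≤ r / 4 := by
    rw [hρ, div_mul_eq_mul_div, div_le_iff₀ (by positivity)]
    nlinarith [norm_nonneg v]
  have hmem : ∀ z ∈ ball p (r/2), ∀ t : ℂ, ‖t‖ ≤ ρ → z + t • v ∈ ball p r := by
    intro z hz t ht
    rw [mem_ball, dist_eq_norm] at *
    calc ‖z + t • v - p‖ = ‖(z - p) + t • v‖ := by congr 1; abel
      _ ≤ ‖z - p‖ + ‖t‖ * ‖v‖ := by rw [← norm_smul]; exact norm_add_le _ _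
      _ ≤ ‖z - p‖ + ρ * ‖v‖ := by gcongr
      _ < r := by linarith
  have hl : ∀ (z : E) (t : ℂ), HasFDerivAt (fun t : ℂ => z + t • v)
      ((ContinuousLinearMap.id ℂ ℂ).smulRight v) t := by
    intro z t
    exact (((ContinuousLinearMap.id ℂ ℂ).smulRight v).hasFDerivAt).const_add z
  have hform : ∀ z ∈ ball p (r/2), fderiv ℂ f z v =
      (2 * Real.pi * Complex.I)⁻¹ * ∫ θ in (0:ℝ)..(2 * Real.pi),
        (deriv (circleMap 0 ρ) θ * (1 / (circleMap 0 ρ θ) ^ 2)) *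
          f ((ContinuousLinearMap.id ℂ E) z + circleMap 0 ρ θ • v) := by
    intro z hz
    have hdd : DifferentiableOn ℂ (fun t : ℂ => f (z + t • v)) (closedBall 0 ρ) := by
      intro t ht
      exact ((H _ (hmem z hz t (by simpa using ht))).comp t
        (hl z t).differentiableAt).differentiableWithinAt
    have h1 := hdd.deriv_eq_smul_circleIntegral hρ0
    have h2 : deriv (fun t : ℂ => f (z + t • v)) 0 = fderiv ℂ f z v := by
      have h3 := (H z (ball_subset_ball (by linarith) hz)).hasFDerivAt
      have h4 : HasFDerivAt f (fderiv ℂ f z) (z + (0 : ℂ) • v) := by simpa using h3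
      have := (h4.comp (0 : ℂ) (hl z 0)).hasDerivAt
      simpa using! this.deriv
    rw [h2] at h1
    rw [circleIntegral] at h1
    have h5 : (2 * Real.pi * Complex.I : ℂ) ≠ 0 := Complex.two_pi_I_ne_zero
    rw [eq_inv_mul_iff_mul_eq₀ h5, ← smul_eq_mul, ← h1]
    refine intervalIntegral.integral_congr fun θ _ => ?_
    simp [mul_assoc]
  have hintg := holAt_intervalIntegral (p := p) (a := 0) (b := 2 * Real.pi) (g := f)
    (fun _ => ContinuousLinearMap.id ℂ E) continuous_const
    (fun θ => circleMap 0 ρ θ • v) (by fun_prop)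
    (fun θ => deriv (circleMap 0 ρ) θ * (1 / (circleMap 0 ρ θ) ^ 2))
    (by
      simp only [deriv_circleMap]
      refine Continuous.mul (by fun_prop) ?_
      refine continuous_const.div (by fun_prop) fun θ => ?_
      exact pow_ne_zero _ (by simp [circleMap, hρ0.ne']))
    (fun t _ => by
      have : (ContinuousLinearMap.id ℂ E) p + circleMap 0 ρ t • v ∈ ball p r :=
        hmem p (mem_ball_self (by linarith)) _ (by simp [abs_of_pos hρ0])
      exact Filter.eventually_of_mem (isOpen_ball.mem_nhds this) H)
  unfold HolAt at hintg ⊢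
  filter_upwards [hintg, (isOpen_ball.mem_nhds (mem_ball_self (show 0 < r/2 by linarith)) : ball p (r/2) ∈ 𝓝 p)]
    with z hz hzb
  refine (hz.const_mul (2 * Real.pi * Complex.I)⁻¹).congr_of_eventuallyEq ?_
  filter_upwards [isOpen_ball.mem_nhds hzb] with y hy using hform y hy

lemma HolAt.congr {f g : E → F} {p : E} (h : HolAt f p) (e : g =ᶠ[𝓝 p] f) : HolAt g p := by
  filter_upwards [h, e.eventuallyEq_nhds] with z hz he using hz.congr_of_eventuallyEq he

lemma HolAt.comp {g : F → G} {f : E → F} {p : E} (hg : HolAt g (f p)) (hf : HolAt f p) :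
    HolAt (fun x => g (f x)) p := by
  filter_upwards [hf, hf.continuousAt.eventually hg] with z h1 h2 using h2.comp z h1

lemma HolAt.comp_of_eq {g : F → G} {f : E → F} {p : E} {q : F} (hg : HolAt g q) (hf : HolAt f p)
    (e : f p = q) : HolAt (fun x => g (f x)) p := by
  subst e; exact hg.comp hf

lemma Differentiable.holAt {f : E → F} (h : Differentiable ℂ f) (p : E) : HolAt f p :=
  Eventually.of_forall fun z => h z

lemma HolAt.add {f g : E → F} {p : E} (hf : HolAt f p) (hg : HolAt g p) :
    HolAt (fun x => f x + g x) p := by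
  filter_upwards [hf, hg] with z h1 h2 using h1.add h2

lemma HolAt.sub {f g : E → F} {p : E} (hf : HolAt f p) (hg : HolAt g p) :
    HolAt (fun x => f x - g x) p := by
  filter_upwards [hf, hg] with z h1 h2 using h1.sub h2

lemma HolAt.mul {f g : E → ℂ} {p : E} (hf : HolAt f p) (hg : HolAt g p) :
    HolAt (fun x => f x * g x) p := by
  filter_upwards [hf, hg] with z h1 h2 using h1.mul h2

lemma HolAt.smul {f : E → ℂ} {g : E → F} {p : E} (hf : HolAt f p) (hg : HolAt g p) :
    HolAt (fun x => f x • g x) p := by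
  filter_upwards [hf, hg] with z h1 h2 using h1.smul h2

lemma HolAt.pow {f : E → ℂ} {p : E} (hf : HolAt f p) (n : ℕ) : HolAt (fun x => f x ^ n) p := by
  filter_upwards [hf] with z h1 using h1.pow n

lemma HolAt.inv {f : E → ℂ} {p : E} (hf : HolAt f p) (h0 : f p ≠ 0) :
    HolAt (fun x => (f x)⁻¹) p := by
  filter_upwards [hf, hf.continuousAt.eventually_ne h0] with z h1 h2 using h1.inv h2

lemma HolAt.prodMk {f : E → F} {g : E → G} {p : E} (hf : HolAt f p) (hg : HolAt g p) :
    HolAt (fun x => (f x, g x)) p := by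
  filter_upwards [hf, hg] with z h1 h2 using h1.prodMk h2

lemma holAt_const (c : F) (p : E) : HolAt (fun _ => c) p := (differentiable_const c).holAt p

lemma HolAt.sum {ι : Type*} (s : Finset ι) {f : ι → E → F} {p : E} (h : ∀ i ∈ s, HolAt (f i) p) :
    HolAt (fun x => ∑ i ∈ s, f i x) p := by
  have := (Finset.eventually_all s).2 h
  filter_upwards [this] with z hz
  exact DifferentiableAt.fun_sum hz

lemma HolAt.prod {ι : Type*} (s : Finset ι) {f : ι → E → ℂ} {p : E} (h : ∀ i ∈ s, HolAt (f i) p) :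
    HolAt (fun x => ∏ i ∈ s, f i x) p := by
  classical
  induction s using Finset.induction_on with
  | empty => simpa using holAt_const (1 : ℂ) p
  | insert a s ha ih =>
    simp only [Finset.prod_insert ha]
    exact (h a (by simp)).mul (ih fun i hi => h i (by simp [hi]))

lemma holAt_pi {ι : Type*} [Fintype ι] {f : E → ι → ℂ} {p : E} :
    HolAt f p ↔ ∀ i, HolAt (fun x => f x i) p := by
  simp only [HolAt, differentiableAt_pi, ← eventually_all]

/-- Identity theorem on a convex open set. -/
lemma eqOn_zero_of_eventuallyEq {f : E → ℂ} {S : Set E} (hS : IsOpen S) (hc : Convex ℝ S)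
    (hf : ∀ x ∈ S, DifferentiableAt ℂ f x) {q : E} (hq : q ∈ S) (h0 : f =ᶠ[𝓝 q] 0) :
    ∀ x ∈ S, f x = 0 := by
  intro x hx
  set ℓ : ℂ → E := fun t => q + t • (x - q)
  have hℓ : Differentiable ℂ ℓ := by fun_prop
  set T : Set ℂ := ℓ ⁻¹' S
  have hT : IsOpen T := hS.preimage hℓ.continuous
  have hTc : Convex ℝ T := by
    intro s hs t ht a b ha hb hab
    have : ℓ (a • s + b • t) = a • ℓ s + b • ℓ t := by
      have e1 : q = a • q + b • q := by rw [← add_smul, hab, one_smul]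
      simp only [ℓ, smul_add, add_smul, smul_assoc]
      nth_rewrite 1 [e1]
      abel
    change ℓ _ ∈ S
    rw [this]; exact hc hs ht ha hb hab
  have han : AnalyticOnNhd ℂ (fun t => f (ℓ t)) T := by
    refine DifferentiableOn.analyticOnNhd (fun t ht => ?_) hT
    exact ((hf _ ht).comp t (hℓ t)).differentiableWithinAt
  have h0T : (0 : ℂ) ∈ T := by simpa [T, ℓ] using hq
  have h1T : (1 : ℂ) ∈ T := by simpa [T, ℓ] using hx
  have := han.eqOn_zero_of_preconnected_of_eventuallyEq_zero hTc.isPreconnected h0T (by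
    have hq0 : ℓ 0 = q := by simp [ℓ]
    have : Tendsto ℓ (𝓝 0) (𝓝 q) := by simpa [hq0] using hℓ.continuous.tendsto 0
    exact this.eventually h0)
  simpa [ℓ] using this h1T

/-- Germs of holomorphic functions form a domain. -/
lemma HolAt.eventuallyEq_zero_or {f g : E → ℂ} {p : E} (hf : HolAt f p) (hg : HolAt g p)
    (h : ∀ᶠ x in 𝓝 p, f x * g x = 0) : (∀ᶠ x in 𝓝 p, f x = 0) ∨ (∀ᶠ x in 𝓝 p, g x = 0) := by
  obtain ⟨r, hr, H⟩ := Metric.eventually_nhds_iff_ball.1 ((hf.and hg).and h)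
  by_cases hall : ∀ x ∈ ball p r, g x = 0
  · exact Or.inr (eventually_of_mem (ball_mem_nhds p hr) hall)
  push Not at hall
  obtain ⟨q, hq, hgq⟩ := hall
  refine Or.inl (eventually_of_mem (ball_mem_nhds p hr) ?_)
  refine eqOn_zero_of_eventuallyEq isOpen_ball (convex_ball p r) (fun x hx => (H x hx).1.1) hq ?_
  filter_upwards [isOpen_ball.mem_nhds hq, (H q hq).1.2.continuousAt.eventually_ne hgq] with x hx hgx
  exact (mul_eq_zero.1 (H x hx).2).resolve_right hgx

end Hol

/-! ### Division, Taylor expansion and the Tschirnhausen transformation -/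

section Division
variable {E : Type*} [NormedAddCommGroup E] [NormedSpace ℂ E] [FiniteDimensional ℂ E]

/-- Division with remainder by a linear form `ℓ`: the increment of `g` in the direction `e` from the
point `x - ℓ x • e` to `x` is a holomorphic multiple of `ℓ x`. -/
lemma HolAt.exists_div {g : E → ℂ} {p : E} (hg : HolAt g p) (l : E →L[ℂ] ℂ) (e : E) (hp : l p = 0) :
    ∃ g₁ : E → ℂ, HolAt g₁ p ∧ ∀ᶠ x in 𝓝 p, g x = g (x - l x • e) + l x * g₁ x := by
  set P : E →L[ℂ] E := l.smulRight e
  have hP : ∀ x, P x = l x • e := fun x => rfl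
  set A : ℝ → E →L[ℂ] E := fun t => ContinuousLinearMap.id ℂ E - (1 - (t : ℂ)) • P
  have hA : Continuous A := by fun_prop
  have hAp : ∀ t, A t p = p := by intro t; simp [A, hP, hp]
  refine ⟨fun x => ∫ t in (0:ℝ)..1, (1 : ℂ) * (fun z => fderiv ℂ g z e) (A t x + 0), ?_, ?_⟩
  · refine holAt_intervalIntegral (g := fun z => fderiv ℂ g z e) A hA (fun _ => 0) continuous_const (fun _ => 1) continuous_const ?_
    intro t _
    simpa [hAp] using hg.fderiv_apply e
  · have h1 : ∀ᶠ x in 𝓝 p, ∀ t ∈ uIcc (0:ℝ) 1, HolAt g (A t x) := by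
      refine isCompact_uIcc.eventually_forall_of_forall_eventually fun t ht => ?_
      have hm : Continuous fun q : E × ℝ => A q.2 q.1 := by fun_prop
      have := hm.tendsto (p, t)
      simp only [hAp] at this
      exact this.eventually hg.eventually
    filter_upwards [h1] with x hx
    have hd : ∀ t : ℝ, HasDerivAt (fun t : ℝ => A t x) (l x • e) t := by
      intro t
      have h0 : HasDerivAt (fun t : ℝ => (1 - (t:ℂ))) (-1) t := by
        simpa using (Complex.ofRealCLM.hasDerivAt (x := t)).const_sub 1
      have : HasDerivAt (fun t : ℝ => x - (1 - (t:ℂ)) • (l x • e)) (-((-1 : ℂ) • (l x • e))) t :=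
        (h0.smul_const (l x • e)).const_sub x
      simpa [A, hP] using! this
    have hd2 : ∀ t ∈ uIcc (0:ℝ) 1, HasDerivAt (fun t : ℝ => g (A t x)) (l x * fderiv ℂ g (A t x) e) t := by
      intro t ht
      have := ((hx t ht).differentiableAt.hasFDerivAt.restrictScalars ℝ).comp_hasDerivAt t (hd t)
      simpa using! this
    have hintg : IntervalIntegrable (fun t : ℝ => l x * fderiv ℂ g (A t x) e) MeasureTheory.volume 0 1 := by
      refine ContinuousOn.intervalIntegrable fun t ht => ?_
      have h2 : ContinuousAt (fun t : ℝ => A t x) t := by fun_prop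
      have := ((hx t ht).fderiv_apply e).continuousAt.comp (f := fun t : ℝ => A t x) (x := t) h2
      exact (this.const_mul (l x)).continuousWithinAt
    have := intervalIntegral.integral_eq_sub_of_hasDerivAt hd2 hintg
    rw [intervalIntegral.integral_const_mul] at this
    simp only [add_zero, one_mul]
    rw [this]
    simp [A, hP]

end Division

section dY
variable {E : Type*} [NormedAddCommGroup E] [NormedSpace ℂ E]

/-- The partial derivative of a function on `E × ℂ` with respect to the last variable. -/
noncomputable def dY (g : E × ℂ → ℂ) : E × ℂ → ℂ := fun q => fderiv ℂ g q (0, 1)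

lemma dY_congr {g h : E × ℂ → ℂ} {p : E × ℂ} (e : g =ᶠ[𝓝 p] h) : dY g =ᶠ[𝓝 p] dY h := by
  filter_upwards [e.fderiv (𝕜 := ℂ)] with q hq
  simp [dY, hq]

lemma dY_iter_congr {g h : E × ℂ → ℂ} {p : E × ℂ} (e : g =ᶠ[𝓝 p] h) (k : ℕ) :
    dY^[k] g =ᶠ[𝓝 p] dY^[k] h := by
  induction k with
  | zero => simpa using e
  | succ k ih => rw [Function.iterate_succ_apply', Function.iterate_succ_apply']; exact dY_congr ih

lemma HolAt.derivY [FiniteDimensional ℂ E] {g : E × ℂ → ℂ} {p : E × ℂ} (h : HolAt g p) : HolAt (dY g) p :=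
  h.fderiv_apply _

lemma HolAt.derivY_iter [FiniteDimensional ℂ E] {g : E × ℂ → ℂ} {p : E × ℂ} (h : HolAt g p) (k : ℕ) :
    HolAt (dY^[k] g) p := by
  induction k with
  | zero => simpa using h
  | succ k ih => rw [Function.iterate_succ_apply']; exact ih.derivY

lemma dY_eq {g : E × ℂ → ℂ} {q : E × ℂ} {g' : E × ℂ →L[ℂ] ℂ} (h : HasFDerivAt g g' q) :
    dY g q = g' (0, 1) := by rw [dY, h.fderiv]

lemma holAt_fst (p : E × ℂ) : HolAt (fun q : E × ℂ => q.1) p := differentiable_fst.holAt p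
lemma holAt_snd (p : E × ℂ) : HolAt (fun q : E × ℂ => q.2) p := differentiable_snd.holAt p

lemma dY_snd_mul {g : E × ℂ → ℂ} {p : E × ℂ} (h : HolAt g p) :
    dY (fun q => q.2 * g q) =ᶠ[𝓝 p] fun q => q.2 * dY g q + g q := by
  filter_upwards [h] with q hq
  have := hasFDerivAt_snd (𝕜 := ℂ) (E := E) (F := ℂ) (p := q) |>.mul hq.hasFDerivAt
  rw [dY_eq (g := fun q => q.2 * g q) this]
  simp [dY]

lemma dY_add_fst {g : E × ℂ → ℂ} {a : E → ℂ} {p : E × ℂ} (h : HolAt g p) (ha : HolAt a p.1) :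
    dY (fun q => a q.1 + g q) =ᶠ[𝓝 p] dY g := by
  filter_upwards [h, continuous_fst.continuousAt.eventually ha] with q hq ha
  have := (ha.hasFDerivAt.comp q hasFDerivAt_fst).add hq.hasFDerivAt
  rw [dY_eq (g := fun q => a q.1 + g q) this]
  simp [dY]

lemma dY_add {g h : E × ℂ → ℂ} {p : E × ℂ} (hg : HolAt g p) (hh : HolAt h p) :
    dY (fun q => g q + h q) =ᶠ[𝓝 p] fun q => dY g q + dY h q := by
  filter_upwards [hg, hh] with q h1 h2
  simp only [dY]; rw [fderiv_fun_add h1 h2]; simp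

variable [FiniteDimensional ℂ E]

lemma dY_iter_snd_mul {g : E × ℂ → ℂ} {p : E × ℂ} (h : HolAt g p) (j : ℕ) :
    dY^[j+1] (fun q => q.2 * g q) =ᶠ[𝓝 p] fun q => q.2 * dY^[j+1] g q + (j+1) * dY^[j] g q := by
  induction j with
  | zero => simpa using dY_snd_mul h
  | succ j ih =>
    rw [Function.iterate_succ_apply' dY (j+1)]
    refine (dY_congr ih).trans ?_
    have h1 := h.derivY_iter (j+1)
    have h2 := h.derivY_iter j
    refine (dY_add ((holAt_snd p).mul h1) ((holAt_const _ p).mul h2)).trans ?_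
    filter_upwards [dY_snd_mul h1, h2] with q hq1 hq2
    rw [hq1]
    have : dY (fun q => ((j:ℂ)+1) * dY^[j] g q) q = (j+1) * dY^[j+1] g q := by
      rw [Function.iterate_succ_apply', dY_eq (hq2.hasFDerivAt.const_mul _)]; simp [dY]
    rw [this, ← Function.iterate_succ_apply' dY (j+1)]
    push_cast; ring

/-- Taylor expansion in the last variable, with holomorphic coefficients and remainder. -/
lemma HolAt.taylor {g : E × ℂ → ℂ} {p : E} (hg : HolAt g (p, 0)) (N : ℕ) :
    ∃ c : E × ℂ → ℂ, HolAt c (p, 0) ∧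
      (∀ᶠ q in 𝓝 (p, 0), g q = ∑ i ∈ Finset.range N,
        (dY^[i] g (q.1, 0) / i.factorial) * q.2 ^ i + q.2 ^ N * c q) ∧
      ∀ j, ∀ᶠ x in 𝓝 p, dY^[j] c (x, 0) * (N + j).factorial = j.factorial * dY^[N + j] g (x, 0) := by
  induction N with
  | zero =>
    refine ⟨g, hg, by simp, fun j => Eventually.of_forall fun x => ?_⟩
    simp [mul_comm]
  | succ N ih =>
    obtain ⟨c, hc, hexp, hder⟩ := ih
    obtain ⟨c', hc', hdiv⟩ := hc.exists_div (ContinuousLinearMap.snd ℂ E ℂ) (0, 1) rfl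
    have hdiv' : c =ᶠ[𝓝 (p, 0)] fun q => c (q.1, 0) + q.2 * c' q := by
      filter_upwards [hdiv] with q hq
      rw [hq]; simp
      congr 2; ext <;> simp
    have hins : HolAt (fun x : E => (x, (0:ℂ))) p := Differentiable.holAt (by fun_prop) p
    have hca : HolAt (fun x => c (x, 0)) p := HolAt.comp (f := fun x : E => (x, (0:ℂ))) hc hins
    have hcont : Tendsto (fun x : E => (x, (0:ℂ))) (𝓝 p) (𝓝 (p, 0)) := hins.continuousAt
    refine ⟨c', hc', ?_, fun j => ?_⟩
    · have h0 := continuous_fst.continuousAt (x := (p, (0:ℂ))) |>.eventually (hder 0)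
      filter_upwards [hexp, hdiv', h0] with q h1 h2 h0
      rw [h1, h2, Finset.sum_range_succ]
      have : c (q.1, 0) = dY^[N] g (q.1, 0) / N.factorial := by
        rw [eq_div_iff (by exact_mod_cast N.factorial_ne_zero)]; simpa using h0
      rw [this]; ring
    · have h1 : dY^[j+1] c =ᶠ[𝓝 (p, 0)] fun q => q.2 * dY^[j+1] c' q + (j+1) * dY^[j] c' q := by
        refine (dY_iter_congr hdiv' _).trans ?_
        refine EventuallyEq.trans ?_ (dY_iter_snd_mul hc' j)
        rw [Function.iterate_succ_apply, Function.iterate_succ_apply]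
        exact dY_iter_congr (dY_add_fst ((holAt_snd _).mul hc') hca) j
      filter_upwards [hder (j+1), hcont.eventually h1] with x h2 h3
      rw [h3] at h2
      simp only [zero_mul, zero_add] at h2
      rw [show N + 1 + j = N + (j + 1) by ring]
      rw [Nat.factorial_succ j] at h2
      have : ((j:ℂ) + 1) ≠ 0 := by exact_mod_cast Nat.succ_ne_zero j
      apply mul_left_cancel₀ this
      push_cast at h2
      rw [← mul_assoc, h2]; ring

lemma dY_iter_shift {g : E × ℂ → ℂ} {p : E × ℂ} {η : E → ℂ} (hη : HolAt η p.1)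
    (hg : HolAt g (p.1, η p.1 + p.2)) (k : ℕ) :
    dY^[k] (fun q => g (q.1, η q.1 + q.2)) =ᶠ[𝓝 p] fun q => dY^[k] g (q.1, η q.1 + q.2) := by
  have hη' : HolAt (fun q : E × ℂ => η q.1) p := hη.comp (holAt_fst p)
  have hs : HolAt (fun q : E × ℂ => (q.1, η q.1 + q.2)) p :=
    (holAt_fst p).prodMk (hη'.add (holAt_snd p))
  induction k with
  | zero => simp
  | succ k ih =>
    rw [Function.iterate_succ_apply', Function.iterate_succ_apply']
    refine (dY_congr ih).trans ?_
    filter_upwards [hη', hs.continuousAt.eventually (hg.derivY_iter k)] with q h1 h2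
    have h3 := (hasFDerivAt_fst (𝕜 := ℂ) (E := E) (F := ℂ) (p := q)).prodMk
      (h1.hasFDerivAt.add (hasFDerivAt_snd (𝕜 := ℂ) (E := E) (F := ℂ) (p := q)))
    have h4 : fderiv ℂ (fun q : E × ℂ => η q.1) q (0, 1) = 0 := by
      have hd : HasDerivAt (fun t : ℂ => (q.1, q.2 + t)) (0, 1) 0 :=
        (hasDerivAt_const (0:ℂ) q.1).prodMk ((hasDerivAt_id (0:ℂ)).const_add q.2)
      have h5 : HasFDerivAt (fun q : E × ℂ => η q.1) (fderiv ℂ (fun q : E × ℂ => η q.1) q)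
        (q.1, q.2 + 0) := by simpa using h1.hasFDerivAt
      have := h5.comp_hasDerivAt (0:ℂ) hd
      exact this.unique (hasDerivAt_const (0:ℂ) (η q.1))
    have h6 := h2.hasFDerivAt.comp q h3
    rw [dY_eq (g := fun q => dY^[k] g (q.1, η q.1 + q.2)) h6]
    simp [dY, h4]

/-- Tschirnhausen transformation: a function of order `e + 1` in the last variable takes, after a
shift of that variable, a form without term of degree `e`. -/
lemma HolAt.tschirnhausen {g : E × ℂ → ℂ} (hg : HolAt g 0) (e : ℕ)
    (hlow : ∀ i ≤ e, dY^[i] g 0 = 0) (htop : dY^[e+1] g 0 ≠ 0) :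
    ∃ (η : E → ℂ) (a : ℕ → E → ℂ) (c : E × ℂ → ℂ), HolAt η 0 ∧ η 0 = 0 ∧
      (∀ i, HolAt (a i) 0) ∧ (∀ i ≤ e, a i 0 = 0) ∧ HolAt c 0 ∧ c 0 ≠ 0 ∧
      ∀ᶠ q in 𝓝 (0 : E × ℂ), g (q.1, η q.1 + q.2) =
        ∑ i ∈ Finset.range e, a i q.1 * q.2 ^ i + q.2 ^ (e+1) * c q := by
  set K := dY^[e] g with hK
  have hKh : HolAt K 0 := hg.derivY_iter e
  have hK1 : dY K 0 ≠ 0 := by rwa [hK, ← Function.iterate_succ_apply' dY]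
  have hcomp : CompleteSpace E := FiniteDimensional.complete ℂ E
  have hinv : (fderiv ℂ K 0 ∘L ContinuousLinearMap.inr ℂ E ℂ).IsInvertible := by
    refine ⟨ContinuousLinearEquiv.unitsEquivAut ℂ (Units.mk0 _ hK1), ?_⟩
    ext
    simp [dY]
  set η := hKh.contDiffAt_one.implicitFunction one_ne_zero hinv with hηd
  have hη0 : η 0 = 0 := hKh.contDiffAt_one.implicitFunction_apply_self one_ne_zero hinv
  have hηK : ∀ᶠ x in 𝓝 (0:E), K (x, η x) = 0 := by
    have := hKh.contDiffAt_one.eventually_apply_implicitFunction one_ne_zero hinv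
    filter_upwards [this] with x hx
    exact hx.trans (hlow e le_rfl)
  have hηh : HolAt η 0 := by
    have h1 := hKh.contDiffAt_one.contDiffAt_implicitFunction one_ne_zero hinv
    filter_upwards [h1.eventually (by simp)] with x hx
    exact hx.differentiableAt one_ne_zero
  set G : E × ℂ → ℂ := fun q => g (q.1, η q.1 + q.2) with hG
  have hz : ((0 : E × ℂ).1, η (0 : E × ℂ).1 + (0 : E × ℂ).2) = 0 := by simp [hη0]
  have hgz : HolAt g ((0 : E × ℂ).1, η (0 : E × ℂ).1 + (0 : E × ℂ).2) := by rw [hz]; exact hg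
  have hGh : HolAt G 0 :=
    HolAt.comp (g := g) (f := fun q : E × ℂ => (q.1, η q.1 + q.2)) hgz
      ((holAt_fst _).prodMk ((HolAt.comp (f := fun q : E × ℂ => q.1) hηh (holAt_fst _)).add (holAt_snd _)))
  have hder : ∀ k, dY^[k] G =ᶠ[𝓝 0] fun q => dY^[k] g (q.1, η q.1 + q.2) := fun k =>
    dY_iter_shift (p := (0 : E × ℂ)) hηh hgz k
  have hder0 : ∀ k, dY^[k] G 0 = dY^[k] g 0 := fun k => by
    rw [(hder k).self_of_nhds]; simp only [hz]
  have hins : HolAt (fun x : E => (x, (0:ℂ))) 0 := Differentiable.holAt (by fun_prop) 0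
  have hcont : Tendsto (fun x : E => (x, (0:ℂ))) (𝓝 0) (𝓝 0) := hins.continuousAt
  obtain ⟨c, hc, hexp, hc0⟩ := HolAt.taylor (p := (0:E)) (g := G) hGh (e+1)
  refine ⟨η, fun i x => dY^[i] G (x, 0) / i.factorial, c, hηh, hη0, fun i => ?_, fun i hi => ?_,
    hc, ?_, ?_⟩
  · have := HolAt.comp (f := fun x : E => (x, (0:ℂ))) (g := dY^[i] G) (p := 0) (hGh.derivY_iter i) hins
    simpa [div_eq_mul_inv] using this.mul (holAt_const ((i.factorial : ℂ)⁻¹) 0)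
  · change dY^[i] G 0 / _ = 0
    rw [hder0, hlow i hi, zero_div]
  · have := (hc0 0).self_of_nhds
    intro h
    change c 0 * _ = _ * dY^[e+1] G 0 at this
    rw [h, hder0] at this
    simp at this
    exact htop this.symm
  · have h1 : ∀ᶠ x in 𝓝 (0:E), dY^[e] G (x, 0) = 0 := by
      filter_upwards [hcont.eventually (hder e), hηK] with x h1 h2
      rw [h1]; simpa using h2
    have h2 := (continuous_fst (X := E) (Y := ℂ)).continuousAt (x := 0) |>.eventually h1
    filter_upwards [hexp, h2] with q hq h2
    change G q = _
    rw [hq, Finset.sum_range_succ, h2]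
    simp

end dY

/-! ### Monomials -/

section Monomial
variable {n m : ℕ}

/-- The monomial `u ^ α`. -/
def mono (α : Fin n → ℕ) (u : Fin n → ℂ) : ℂ := ∏ i, u i ^ α i

/-- Near the origin, `g` is a monomial times a nowhere vanishing holomorphic function. -/
def IsMon (g : (Fin n → ℂ) → ℂ) : Prop :=
  ∃ (α : Fin n → ℕ) (ε : (Fin n → ℂ) → ℂ), HolAt ε 0 ∧ ε 0 ≠ 0 ∧ ∀ᶠ u in 𝓝 0, g u = mono α u * ε u

lemma holAt_coord (i : Fin n) (p : Fin n → ℂ) : HolAt (fun u : Fin n → ℂ => u i) p :=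
  Differentiable.holAt (by fun_prop) p

lemma differentiable_mono (α : Fin n → ℕ) : Differentiable ℂ (mono α) := by
  unfold mono; fun_prop

lemma holAt_mono (α : Fin n → ℕ) (p : Fin n → ℂ) : HolAt (mono α) p := (differentiable_mono α).holAt p

lemma mono_add (α β : Fin n → ℕ) (u : Fin n → ℂ) : mono (α + β) u = mono α u * mono β u := by
  simp [mono, pow_add, Finset.prod_mul_distrib]

lemma mono_zero (u : Fin n → ℂ) : mono 0 u = 1 := by simp [mono]

lemma mono_single (i : Fin n) (u : Fin n → ℂ) : mono (Pi.single i 1) u = u i := by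
  rw [mono, Finset.prod_eq_single i] <;> simp +contextual

lemma mono_smul (k : ℕ) (α : Fin n → ℕ) (u : Fin n → ℂ) : mono (k • α) u = mono α u ^ k := by
  simp [mono, ← Finset.prod_pow, pow_mul, mul_comm k]

lemma mono_pow_arg (k : ℕ) (α : Fin n → ℕ) (u : Fin n → ℂ) :
    mono α (fun i => u i ^ k) = mono (k • α) u := by
  simp [mono, pow_mul]

lemma mono_ne_zero {α : Fin n → ℕ} {u : Fin n → ℂ} (h : ∀ i, u i ≠ 0) : mono α u ≠ 0 :=
  Finset.prod_ne_zero_iff.2 fun i _ => pow_ne_zero _ (h i)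

lemma mono_at_zero {α : Fin n → ℕ} (h : α ≠ 0) : mono α 0 = 0 := by
  obtain ⟨i, hi⟩ := Function.ne_iff.1 h
  exact Finset.prod_eq_zero (Finset.mem_univ i) (by simpa using hi)

lemma IsMon.holAt {g : (Fin n → ℂ) → ℂ} (h : IsMon g) : HolAt g 0 := by
  obtain ⟨α, ε, h1, _, h3⟩ := h
  exact ((holAt_mono α 0).mul h1).congr h3

lemma IsMon.congr {g g' : (Fin n → ℂ) → ℂ} (h : IsMon g) (e : ∀ᶠ u in 𝓝 0, g' u = g u) : IsMon g' := by
  obtain ⟨α, ε, h1, h2, h3⟩ := h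
  exact ⟨α, ε, h1, h2, by filter_upwards [e, h3] with u a b using a.trans b⟩

lemma isMon_unit {g : (Fin n → ℂ) → ℂ} (h : HolAt g 0) (h0 : g 0 ≠ 0) : IsMon g :=
  ⟨0, g, h, h0, by simp [mono_zero]⟩

lemma isMon_mono (α : Fin n → ℕ) : IsMon (mono α) := ⟨α, fun _ => 1, holAt_const _ _, one_ne_zero, by simp⟩

lemma isMon_coord (i : Fin n) : IsMon (fun u => u i) :=
  (isMon_mono (Pi.single i 1)).congr (Eventually.of_forall fun u => (mono_single i u).symm)

lemma IsMon.mul {g h : (Fin n → ℂ) → ℂ} (hg : IsMon g) (hh : IsMon h) : IsMon (fun u => g u * h u) := by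
  obtain ⟨α, ε, h1, h2, h3⟩ := hg
  obtain ⟨β, η, k1, k2, k3⟩ := hh
  refine ⟨α + β, fun u => ε u * η u, h1.mul k1, mul_ne_zero h2 k2, ?_⟩
  filter_upwards [h3, k3] with u a b
  rw [a, b, mono_add]; ring

lemma IsMon.pow {g : (Fin n → ℂ) → ℂ} (hg : IsMon g) (k : ℕ) : IsMon (fun u => g u ^ k) := by
  induction k with
  | zero => simpa using isMon_unit (holAt_const (1:ℂ) (0 : Fin n → ℂ)) one_ne_zero
  | succ k ih => simpa [pow_succ] using ih.mul hg

lemma IsMon.prod {κ : Type*} (s : Finset κ) {g : κ → (Fin n → ℂ) → ℂ} (h : ∀ i ∈ s, IsMon (g i)) :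
    IsMon (fun u => ∏ i ∈ s, g i u) := by
  classical
  induction s using Finset.induction_on with
  | empty => simpa using isMon_unit (holAt_const (1:ℂ) (0 : Fin n → ℂ)) one_ne_zero
  | insert a s ha ih =>
    simp only [Finset.prod_insert ha]
    exact (h a (by simp)).mul (ih fun i hi => h i (by simp [hi]))

/-- Pullback along a map whose components are monomials times units. -/
lemma IsMon.comp {g : (Fin n → ℂ) → ℂ} (hg : IsMon g) {σ : (Fin m → ℂ) → (Fin n → ℂ)}
    (hσ : ∀ i, IsMon (fun u => σ u i)) (h0 : σ 0 = 0) : IsMon (fun u => g (σ u)) := by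
  obtain ⟨α, ε, h1, h2, h3⟩ := hg
  have hs : HolAt σ 0 := holAt_pi.2 fun i => (hσ i).holAt
  have hs' : Tendsto σ (𝓝 0) (𝓝 0) := by simpa [ContinuousAt, h0] using hs.continuousAt
  have : IsMon (fun u => (∏ i, σ u i ^ α i) * ε (σ u)) :=
    (IsMon.prod Finset.univ fun i _ => (hσ i).pow (α i)).mul
      (isMon_unit (HolAt.comp_of_eq h1 hs h0) (by simpa [h0] using h2))
  exact this.congr (hs'.eventually h3)

lemma frequently_coords_ne : ∃ᶠ u in 𝓝 (0 : Fin n → ℂ), ∀ i, u i ≠ 0 := by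
  intro h
  have ht : Tendsto (fun t : ℂ => (fun _ => t : Fin n → ℂ)) (𝓝[≠] 0) (𝓝 0) := by
    refine Tendsto.mono_left ?_ nhdsWithin_le_nhds
    have : Continuous (fun t : ℂ => (fun _ => t : Fin n → ℂ)) := by fun_prop
    exact this.tendsto 0
  obtain ⟨t, ht1, ht2⟩ := ((ht.eventually h).and self_mem_nhdsWithin).exists
  exact ht1 fun _ => ht2

lemma IsMon.not_eventually_zero {g : (Fin n → ℂ) → ℂ} (hg : IsMon g) : ¬ ∀ᶠ u in 𝓝 0, g u = 0 := by
  obtain ⟨α, ε, h1, h2, h3⟩ := hg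
  intro h
  obtain ⟨u, hu, a, b, c⟩ := (frequently_coords_ne.and_eventually
    (h.and (h3.and (h1.continuousAt.eventually_ne h2)))).exists
  rw [a] at b
  exact mul_ne_zero (mono_ne_zero hu) c b.symm

lemma HolAt.exists_div_coord {g : (Fin n → ℂ) → ℂ} (hg : HolAt g 0) (i : Fin n)
    (h0 : ∀ᶠ u in 𝓝 (0 : Fin n → ℂ), g (u - u i • Pi.single i 1) = 0) :
    ∃ g₁, HolAt g₁ 0 ∧ ∀ᶠ u in 𝓝 0, g u = u i * g₁ u := by
  obtain ⟨g₁, h1, h2⟩ := hg.exists_div (ContinuousLinearMap.proj i) (Pi.single i 1) rfl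
  refine ⟨g₁, h1, ?_⟩
  filter_upwards [h2, h0] with u a b
  rw [a]; simp only [ContinuousLinearMap.proj_apply]; rw [b, zero_add]

/-- Factors of monomials are monomials, up to units. -/
lemma IsMon.of_mul {g h : (Fin n → ℂ) → ℂ} (hg : HolAt g 0) (hh : HolAt h 0)
    (H : IsMon (fun u => g u * h u)) : IsMon g := by
  obtain ⟨α, ε, hε, hε0, hH⟩ := H
  induction hk : ∑ i, α i generalizing α g h with
  | zero =>
    have hα : α = 0 := by
      funext i; simpa using (Finset.sum_eq_zero_iff.1 hk) i
    refine isMon_unit hg fun h0 => hε0 ?_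
    have := hH.self_of_nhds
    simp only [hα, mono_zero, h0] at this
    simpa using this.symm
  | succ k ih =>
    obtain ⟨i, hi⟩ : ∃ i, α i ≠ 0 := by
      by_contra! hcon
      simp [hcon] at hk
    obtain ⟨β, hβ⟩ : ∃ β : Fin n → ℕ, α = β + Pi.single i 1 := by
      refine ⟨α - Pi.single i 1, ?_⟩
      refine (tsub_add_cancel_of_le ?_).symm
      intro j
      rcases eq_or_ne j i with rfl | hj
      · simpa using Nat.one_le_iff_ne_zero.2 hi
      · simp [hj]
    have hβk : ∑ i, β i = k := by
      rw [hβ] at hk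
      simp only [Pi.add_apply, Finset.sum_add_distrib] at hk
      simpa using hk
    set π : (Fin n → ℂ) → (Fin n → ℂ) := fun u => u - u i • Pi.single i 1 with hπ
    have hπh : HolAt π 0 := Differentiable.holAt (by fun_prop) 0
    have hπ0 : π 0 = 0 := by simp [hπ]
    have hπt : Tendsto π (𝓝 0) (𝓝 0) := by simpa [ContinuousAt, hπ0] using hπh.continuousAt
    have hz : ∀ᶠ u in 𝓝 (0 : Fin n → ℂ), g (π u) * h (π u) = 0 := by
      filter_upwards [hπt.eventually hH] with u hu
      rw [hu, hβ, mono_add, mono_single]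
      simp [hπ]
    have hcan : ∀ {a b : (Fin n → ℂ) → ℂ}, HolAt a 0 → HolAt b 0 →
        (∀ᶠ u in 𝓝 0, u i * a u = u i * b u) → ∀ᶠ u in 𝓝 0, a u = b u := by
      intro a b ha hb hab
      have := HolAt.eventuallyEq_zero_or (f := fun u : Fin n → ℂ => u i) (g := fun u => a u - b u)
        (holAt_coord i 0) (ha.sub hb) (by filter_upwards [hab] with u hu; rw [mul_sub, hu, sub_self])
      rcases this with h1 | h1
      · exact absurd h1 (isMon_coord i).not_eventually_zero
      · filter_upwards [h1] with u hu using sub_eq_zero.1 hu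
    rcases HolAt.eventuallyEq_zero_or (f := fun u => g (π u)) (g := fun u => h (π u))
      (hg.comp_of_eq hπh hπ0) (hh.comp_of_eq hπh hπ0) hz with h1 | h1
    · obtain ⟨g₁, hg₁, hgg⟩ := hg.exists_div_coord i h1
      have : IsMon g₁ := by
        refine ih hg₁ hh β ?_ hβk
        refine hcan (hg₁.mul hh) ((holAt_mono β 0).mul hε) ?_
        filter_upwards [hH, hgg] with u a b
        rw [b, hβ, mono_add, mono_single] at a
        linear_combination a
      exact ((isMon_coord i).mul this).congr hgg
    · obtain ⟨h₁, hh₁, hhh⟩ := hh.exists_div_coord i h1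
      refine ih hg hh₁ β ?_ hβk
      refine hcan (hg.mul hh₁) ((holAt_mono β 0).mul hε) ?_
      filter_upwards [hH, hhh] with u a b
      rw [b, hβ, mono_add, mono_single] at a
      linear_combination a

lemma IsMon.of_prod {κ : Type*} (s : Finset κ) {g : κ → (Fin n → ℂ) → ℂ} (hg : ∀ i ∈ s, HolAt (g i) 0)
    (H : IsMon (fun u => ∏ i ∈ s, g i u)) : ∀ i ∈ s, IsMon (g i) := by
  classical
  intro i hi
  refine IsMon.of_mul (h := fun u => ∏ j ∈ s.erase i, g j u) (hg i hi)
    (HolAt.prod _ fun j hj => hg j (Finset.mem_of_mem_erase hj)) ?_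
  refine H.congr (Eventually.of_forall fun u => ?_)
  exact Finset.mul_prod_erase s (fun j => g j u) hi

/-- Comparison of orders of vanishing in one variable; the factor `ψ` on the right is a unit. -/
lemma ord_le {p q : ℕ} {φ ψ : ℂ → ℂ} (hφ : ContinuousAt φ 0) (hψ : ContinuousAt ψ 0) (h0 : ψ 0 ≠ 0)
    (h : ∀ᶠ t in 𝓝 0, t ^ p * φ t = t ^ q * ψ t) : p ≤ q := by
  by_contra! hlt
  obtain ⟨k, rfl⟩ := Nat.exists_eq_add_of_lt hlt
  have h1 : ∀ᶠ t in 𝓝[≠] (0:ℂ), t ^ (k+1) * φ t = ψ t := by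
    filter_upwards [h.filter_mono nhdsWithin_le_nhds, self_mem_nhdsWithin] with t ht ht0
    have : t ^ q ≠ 0 := pow_ne_zero _ ht0
    apply mul_left_cancel₀ this
    rw [← ht]; ring
  have h2 : Tendsto (fun t : ℂ => t ^ (k+1) * φ t) (𝓝[≠] 0) (𝓝 (0 ^ (k+1) * φ 0)) :=
    (((continuous_pow (k+1)).continuousAt (x := (0:ℂ))).mul hφ).tendsto.mono_left nhdsWithin_le_nhds
  have h3 := (h2.congr' h1)
  have := tendsto_nhds_unique h3 (hψ.tendsto.mono_left nhdsWithin_le_nhds)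
  simp at this
  exact h0 this.symm

/-- If the difference of two monomials (with units) is a monomial with a unit or vanishes, then one of
the two monomials divides the other. The exponents are compared by restricting to test curves. -/
lemma mono_comparable {a b : Fin n → ℕ} {ε η D : (Fin n → ℂ) → ℂ} (hε : HolAt ε 0) (hε0 : ε 0 ≠ 0)
    (hη : HolAt η 0) (hη0 : η 0 ≠ 0) (hD : IsMon D ∨ ∀ᶠ u in 𝓝 0, D u = 0)
    (h : ∀ᶠ u in 𝓝 0, mono a u * ε u - mono b u * η u = D u) : a ≤ b ∨ b ≤ a := by
  classical
  -- the test curves: coordinates in `S` equal to `t`, the others equal to a small constant `τ`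
  set pt : Finset (Fin n) → ℂ → ℂ → Fin n → ℂ := fun S τ t i => if i ∈ S then t else τ with hpt
  have hmono : ∀ S τ t (α : Fin n → ℕ),
      mono α (pt S τ t) = t ^ (∑ i ∈ S, α i) * τ ^ (∑ i ∈ Sᶜ, α i) := by
    intro S τ t α
    rw [mono, ← Finset.prod_mul_prod_compl S, ← Finset.prod_pow_eq_pow_sum, ← Finset.prod_pow_eq_pow_sum]
    congr 1
    · exact Finset.prod_congr rfl fun i hi => by simp [hpt, hi]
    · exact Finset.prod_congr rfl fun i hi => by simp [hpt, Finset.mem_compl.1 hi]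
  have hptc : ∀ S τ, Continuous (pt S τ) := by
    intro S τ
    refine continuous_pi fun i => ?_
    by_cases hi : i ∈ S <;> simp [hpt, hi] <;> fun_prop
  -- transfer an eventual property to the test curves for some nonzero `τ`
  have hev : ∀ {P : (Fin n → ℂ) → Prop}, (∀ᶠ u in 𝓝 0, P u) →
      ∃ τ : ℂ, τ ≠ 0 ∧ ∀ S, ∀ᶠ t in 𝓝 (0:ℂ), P (pt S τ t) := by
    intro P hP
    have hc : Tendsto (fun τ : ℂ => fun S => pt S τ 0) (𝓝[≠] 0) (𝓝 fun _ => 0) := by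
      refine Tendsto.mono_left ?_ nhdsWithin_le_nhds
      have : Continuous (fun τ : ℂ => fun S => pt S τ 0) := by
        refine continuous_pi fun S => continuous_pi fun i => ?_
        by_cases hi : i ∈ S <;> simp [hpt, hi] <;> fun_prop
      have h2 := this.tendsto 0
      convert h2 using 2
      funext S i; simp [hpt]
    have h2 : ∀ᶠ τ in 𝓝[≠] (0:ℂ), ∀ S, ∀ᶠ u in 𝓝 (pt S τ 0), P u := by
      rw [tendsto_pi_nhds] at hc
      exact eventually_all.2 fun S => (hc S).eventually (eventually_eventually_nhds.2 hP)
    obtain ⟨τ, hτ, hτ0⟩ := (h2.and self_mem_nhdsWithin).exists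
    exact ⟨τ, hτ0, fun S => (hptc S τ).continuousAt.eventually (hτ S)⟩
  by_contra! hcon
  obtain ⟨hab, hba⟩ := hcon
  simp only [Pi.le_def, not_forall, not_le] at hab hba
  obtain ⟨i, hi⟩ := hab
  obtain ⟨j, hj⟩ := hba
  have hij : i ≠ j := by rintro rfl; omega
  rcases hD with hD | hD
  · obtain ⟨c, ζ, hζ, hζ0, hDc⟩ := hD
    obtain ⟨τ, hτ, H⟩ := hev ((((hε.and hη).and hζ).and ((hε.continuousAt.eventually_ne hε0).and
      ((hη.continuousAt.eventually_ne hη0).and (hζ.continuousAt.eventually_ne hζ0)))).and (h.and hDc))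
    have hcont : ∀ S, ContinuousAt (fun t => ε (pt S τ t)) 0 ∧ ContinuousAt (fun t => η (pt S τ t)) 0 ∧
        ContinuousAt (fun t => ζ (pt S τ t)) 0 := fun S => by
      have := (H S).self_of_nhds
      exact ⟨this.1.1.1.1.continuousAt.comp (hptc S τ).continuousAt,
        this.1.1.1.2.continuousAt.comp (hptc S τ).continuousAt,
        this.1.1.2.continuousAt.comp (hptc S τ).continuousAt⟩
    have hne : ∀ S, ε (pt S τ 0) ≠ 0 ∧ η (pt S τ 0) ≠ 0 ∧ ζ (pt S τ 0) ≠ 0 := fun S =>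
      (H S).self_of_nhds.1.2
    have hid : ∀ S, ∀ᶠ t in 𝓝 (0:ℂ), t ^ (∑ i ∈ S, a i) * τ ^ (∑ i ∈ Sᶜ, a i) * ε (pt S τ t) -
        t ^ (∑ i ∈ S, b i) * τ ^ (∑ i ∈ Sᶜ, b i) * η (pt S τ t) =
        t ^ (∑ i ∈ S, c i) * τ ^ (∑ i ∈ Sᶜ, c i) * ζ (pt S τ t) := fun S => by
      filter_upwards [H S] with t ht
      have := ht.2.1.trans ht.2.2
      rwa [hmono, hmono, hmono] at this
    have h1 : c j ≤ a j := by
      have hc := hcont {j}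
      obtain ⟨k, hk⟩ := Nat.exists_eq_add_of_lt hj
      refine ord_le (φ := fun t => τ ^ (∑ i ∈ {j}ᶜ, c i) * ζ (pt {j} τ t))
        (ψ := fun t => τ ^ (∑ i ∈ {j}ᶜ, a i) * ε (pt {j} τ t) -
          t ^ (k+1) * (τ ^ (∑ i ∈ {j}ᶜ, b i) * η (pt {j} τ t)))
        (hc.2.2.const_mul _) ((hc.1.const_mul _).sub
          ((continuous_pow (k+1)).continuousAt.mul (hc.2.1.const_mul _))) ?_ ?_
      · simp [hτ, (hne {j}).1]
      · filter_upwards [hid {j}] with t ht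
        simp only [Finset.sum_singleton, hk] at ht
        linear_combination -ht
    have h2 : c i ≤ b i := by
      have hc := hcont {i}
      obtain ⟨k, hk⟩ := Nat.exists_eq_add_of_lt hi
      refine ord_le (φ := fun t => τ ^ (∑ i ∈ {i}ᶜ, c i) * ζ (pt {i} τ t))
        (ψ := fun t => t ^ (k+1) * (τ ^ (∑ i ∈ {i}ᶜ, a i) * ε (pt {i} τ t)) -
          (τ ^ (∑ i ∈ {i}ᶜ, b i) * η (pt {i} τ t)))
        (hc.2.2.const_mul _) (((continuous_pow (k+1)).continuousAt.mul (hc.1.const_mul _)).sub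
          (hc.2.1.const_mul _)) ?_ ?_
      · simp [hτ, (hne {i}).2.1]
      · filter_upwards [hid {i}] with t ht
        simp only [Finset.sum_singleton, hk] at ht
        linear_combination -ht
    have h3 : b i + a j + 1 ≤ c i + c j := by
      have hc := hcont {i, j}
      obtain ⟨k, hk⟩ := Nat.exists_eq_add_of_lt hi
      obtain ⟨l, hl⟩ := Nat.exists_eq_add_of_lt hj
      refine ord_le (ψ := fun t => τ ^ (∑ i ∈ {i, j}ᶜ, c i) * ζ (pt {i, j} τ t))
        (φ := fun t => t ^ k * (τ ^ (∑ i ∈ {i, j}ᶜ, a i) * ε (pt {i, j} τ t)) -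
          t ^ l * (τ ^ (∑ i ∈ {i, j}ᶜ, b i) * η (pt {i, j} τ t)))
        (((continuous_pow k).continuousAt.mul (hc.1.const_mul _)).sub
          ((continuous_pow l).continuousAt.mul (hc.2.1.const_mul _))) (hc.2.2.const_mul _) ?_ ?_
      · simp [hτ, (hne {i, j}).2.2]
      · filter_upwards [hid {i, j}] with t ht
        simp only [Finset.sum_pair hij, hk, hl] at ht
        rw [hl] at *
        linear_combination ht
    omega
  · obtain ⟨τ, hτ, H⟩ := hev (((hε.and hη).and ((hε.continuousAt.eventually_ne hε0).and
      (hη.continuousAt.eventually_ne hη0))).and (h.and hD))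
    have := (H {i}).self_of_nhds
    have h1 : a i ≤ b i := by
      refine ord_le (φ := fun t => τ ^ (∑ k ∈ {i}ᶜ, a k) * ε (pt {i} τ t))
        (ψ := fun t => τ ^ (∑ k ∈ {i}ᶜ, b k) * η (pt {i} τ t))
        ((this.1.1.1.continuousAt.comp (hptc {i} τ).continuousAt).const_mul _)
        ((this.1.1.2.continuousAt.comp (hptc {i} τ).continuousAt).const_mul _) ?_ ?_
      · exact mul_ne_zero (pow_ne_zero _ hτ) this.1.2.2
      · filter_upwards [H {i}] with t ht
        have := ht.2.1.trans ht.2.2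
        rw [hmono, hmono, Finset.sum_singleton, Finset.sum_singleton] at this
        linear_combination this
    omega

end Monomial

/-! ### Lifting along an ultrafilter -/

section Lift
variable {ι : Type*} {X Y Z : Type*} [NormedAddCommGroup X] [NormedSpace ℂ X]
  [NormedAddCommGroup Y] [NormedSpace ℂ Y] [NormedAddCommGroup Z] [NormedSpace ℂ Z]

/-- The family of points `z` (converging to `p` along the ultrafilter `𝓤`) lifts through the
holomorphic map `σ`, `σ q = p`, to the family `u`, which converges to `q`. -/
def Lifts (𝓤 : Ultrafilter ι) (p : X) (z : ι → X) (q : Y) (σ : Y → X) (u : ι → Y) : Prop :=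
  HolAt σ q ∧ σ q = p ∧ Tendsto u 𝓤 (𝓝 q) ∧ ∀ᶠ k in (𝓤 : Filter ι), σ (u k) = z k

/-- Local uniformization of `f` along the points `z`: these lift through a chart in which `f`
becomes a monomial times a unit. -/
def Unif (𝓤 : Ultrafilter ι) (m : ℕ) (p : X) (z : ι → X) (f : X → ℂ) : Prop :=
  ∃ (σ : (Fin m → ℂ) → X) (u : ι → (Fin m → ℂ)), Lifts 𝓤 p z 0 σ u ∧ IsMon (fun v => f (σ v))

variable {𝓤 : Ultrafilter ι}

lemma Lifts.tendsto {p : X} {z : ι → X} {q : Y} {σ : Y → X} {u : ι → Y} (h : Lifts 𝓤 p z q σ u) :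
    Tendsto σ (𝓝 q) (𝓝 p) := by
  have := h.1.continuousAt
  rwa [ContinuousAt, h.2.1] at this

lemma Lifts.trans {p : X} {z : ι → X} {q : Y} {σ : Y → X} {u : ι → Y} {r : Z} {τ : Z → Y} {v : ι → Z}
    (h : Lifts 𝓤 p z q σ u) (h' : Lifts 𝓤 q u r τ v) : Lifts 𝓤 p z r (fun x => σ (τ x)) v := by
  obtain ⟨a, b, _, d⟩ := h
  obtain ⟨a', b', c', d'⟩ := h'
  refine ⟨a.comp_of_eq a' b', (congrArg σ b').trans b, c', ?_⟩
  filter_upwards [d, d'] with k h1 h2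
  rw [h2, h1]

lemma Unif.of_lifts {m : ℕ} {p : X} {z : ι → X} {f : X → ℂ} {q : Y} {σ : Y → X} {u : ι → Y}
    (h : Lifts 𝓤 p z q σ u) (hu : Unif 𝓤 m q u (fun y => f (σ y))) : Unif 𝓤 m p z f := by
  obtain ⟨τ, v, h1, h2⟩ := hu
  exact ⟨fun x => σ (τ x), v, h.trans h1, h2⟩

lemma Unif.congr {m : ℕ} {p : X} {z : ι → X} {f g : X → ℂ} (h : Unif 𝓤 m p z g)
    (e : ∀ᶠ x in 𝓝 p, f x = g x) : Unif 𝓤 m p z f := by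
  obtain ⟨τ, v, h1, h2⟩ := h
  exact ⟨τ, v, h1, h2.congr (h1.tendsto.eventually e)⟩

/-- Bounded families converge along an ultrafilter. Limits of quotients obtained in this way are the centres of the
blow-up charts used below. -/
lemma Ultrafilter.exists_tendsto_of_bounded [FiniteDimensional ℂ X] {z : ι → X} {C : ℝ}
    (h : ∀ᶠ k in (𝓤 : Filter ι), ‖z k‖ ≤ C) : ∃ c, Tendsto z 𝓤 (𝓝 c) := by
  have : ProperSpace X := FiniteDimensional.proper ℂ X
  obtain ⟨c, _, hc⟩ := (isCompact_closedBall (0 : X) C).ultrafilter_le_nhds (𝓤.map z)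
    (le_principal_iff.2 (by
      change z ⁻¹' (closedBall 0 C) ∈ (𝓤 : Filter ι)
      filter_upwards [h] with k hk
      simpa using hk))
  exact ⟨c, hc⟩

/-- The standard identification of `ℂⁿ⁺¹` with `ℂⁿ × ℂ`. -/
def splitE (n : ℕ) (v : Fin (n+1) → ℂ) : (Fin n → ℂ) × ℂ := (fun i => v i.succ, v 0)

lemma differentiable_splitE (n : ℕ) : Differentiable ℂ (splitE n) := by
  unfold splitE
  refine Differentiable.prodMk (differentiable_pi.2 fun i => ?_) ?_ <;> fun_prop

lemma splitE_lifts {n : ℕ} {z : ι → (Fin n → ℂ) × ℂ} (hz : Tendsto z 𝓤 (𝓝 0)) :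
    Lifts 𝓤 0 z 0 (splitE n) (fun k => Fin.cons (z k).2 (z k).1) := by
  refine ⟨(differentiable_splitE n).holAt 0, rfl, ?_, Eventually.of_forall fun k => rfl⟩
  rw [tendsto_pi_nhds]
  intro i
  refine Fin.cases ?_ (fun i => ?_) i
  · exact (continuous_snd.tendsto (0 : (Fin n → ℂ) × ℂ)).comp hz
  · have : Continuous fun q : (Fin n → ℂ) × ℂ => q.1 i := by fun_prop
    exact (this.tendsto (0 : (Fin n → ℂ) × ℂ)).comp hz

/-- It suffices that `f` is monomial in the standard coordinates. -/
lemma Unif.of_splitE {n : ℕ} {p : X} {z : ι → X} {f : X → ℂ} {σ : (Fin n → ℂ) × ℂ → X}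
    {u : ι → (Fin n → ℂ) × ℂ} (h : Lifts 𝓤 p z 0 σ u) (hf : IsMon (fun v => f (σ (splitE n v)))) :
    Unif 𝓤 (n+1) p z f :=
  ⟨_, _, h.trans (splitE_lifts h.2.2.1), hf⟩

lemma mono_update_pred {n : ℕ} {γ : Fin n → ℕ} {i : Fin n} (hi : γ i ≠ 0) :
    ∃ β : Fin n → ℕ, γ = β + Pi.single i 1 ∧ ∑ j, γ j = ∑ j, β j + 1 := by
  have h1 : γ = (γ - Pi.single i 1) + Pi.single i 1 := by
    refine (tsub_add_cancel_of_le ?_).symm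
    intro j
    rcases eq_or_ne j i with rfl | hj
    · simpa using Nat.one_le_iff_ne_zero.2 hi
    · simp [hj]
  refine ⟨γ - Pi.single i 1, h1, ?_⟩
  conv_lhs => rw [h1]
  simp only [Pi.add_apply, Finset.sum_add_distrib]
  simp

/-- If `u ^ γ` is bounded by `y` along the ultrafilter, then in a suitable chart `u ^ γ` is a multiple
of `y`, and all coordinates remain monomials. -/
lemma exists_lift_dvd {n : ℕ} (γ : Fin n → ℕ) (u : ι → Fin n → ℂ) (y : ι → ℂ)
    (hu : Tendsto u 𝓤 (𝓝 0)) (hy : Tendsto y 𝓤 (𝓝 0)) (hy0 : ∀ᶠ k in (𝓤 : Filter ι), y k ≠ 0)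
    (C : ℝ) (hC : ∀ᶠ k in (𝓤 : Filter ι), ‖mono γ (u k)‖ ≤ C * ‖y k‖) :
    ∃ (σ : (Fin (n+1) → ℂ) → (Fin n → ℂ) × ℂ) (w : ι → Fin (n+1) → ℂ),
      Lifts 𝓤 0 (fun k => (u k, y k)) 0 σ w ∧ (∀ i, IsMon (fun v => (σ v).1 i)) ∧
      IsMon (fun v => (σ v).2) ∧
      ∃ q, HolAt q 0 ∧ ∀ᶠ v in 𝓝 0, mono γ (σ v).1 = (σ v).2 * q v := by
  -- induction on the degree of `u ^ γ`: each step blows up `u i = y = 0` for some `i` with `γ i ≠ 0`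
  induction hk : ∑ i, γ i generalizing γ y C with
  | zero =>
    exfalso
    have hα : γ = 0 := by
      funext i; simpa using (Finset.sum_eq_zero_iff.1 hk) i
    subst hα
    simp only [mono_zero, norm_one] at hC
    have h1 : Tendsto (fun k => C * ‖y k‖) 𝓤 (𝓝 0) := by simpa using hy.norm.const_mul C
    obtain ⟨k, h2, h3⟩ := (hC.and (h1.eventually (gt_mem_nhds (zero_lt_one' ℝ)))).exists
    linarith
  | succ s ih =>
    obtain ⟨i, hi⟩ : ∃ i, γ i ≠ 0 := by
      by_contra! hcon
      simp [hcon] at hk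
    obtain ⟨β, rfl, hβ⟩ := mono_update_pred hi
    have hβs : ∑ i, β i = s := by omega
    have hsplit : ∀ x, mono (β + Pi.single i 1) x = mono β x * x i := fun x => by
      rw [mono_add, mono_single]
    have hcase : (∀ᶠ k in (𝓤 : Filter ι), ‖y k‖ ≤ ‖u k i‖) ∨ ∀ᶠ k in (𝓤 : Filter ι), ‖u k i‖ ≤ ‖y k‖ :=
      Ultrafilter.eventually_or.1 (Eventually.of_forall fun k => le_total _ _)
    rcases hcase with hle | hle
    · have hui : ∀ᶠ k in (𝓤 : Filter ι), u k i ≠ 0 := by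
        filter_upwards [hle, hy0] with k h1 h2 h3
        rw [h3, norm_zero] at h1
        exact h2 (norm_le_zero_iff.1 h1)
      obtain ⟨c, hc⟩ := Ultrafilter.exists_tendsto_of_bounded (𝓤 := 𝓤) (z := fun k => y k / u k i) (C := 1)
        (by
          filter_upwards [hle, hui] with k h1 h2
          rw [norm_div]; exact div_le_one_of_le₀ h1 (norm_nonneg _))
      rcases eq_or_ne c 0 with rfl | hc0
      · obtain ⟨σ, w, h1, h2, h3, q, hq, h4⟩ := ih β (fun k => y k / u k i) hc
          (by filter_upwards [hy0, hui] with k a b using div_ne_zero a b) C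
          (by
            filter_upwards [hC, hui] with k a b
            rw [hsplit, norm_mul] at a
            rw [norm_div, ← mul_div_assoc, le_div_iff₀ (norm_pos_iff.2 b)]
            exact a) hβs
        have hτ : Lifts 𝓤 0 (fun k => (u k, y k)) (0 : (Fin n → ℂ) × ℂ)
            (fun q : (Fin n → ℂ) × ℂ => (q.1, q.1 i * q.2)) (fun k => (u k, y k / u k i)) := by
          refine ⟨Differentiable.holAt (by fun_prop) _, by simp, hu.prodMk_nhds hc, ?_⟩
          filter_upwards [hui] with k hk
          simp [mul_div_cancel₀ _ hk]
        refine ⟨_, _, hτ.trans h1, h2, (h2 i).mul h3, q, hq, ?_⟩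
        filter_upwards [h4] with v hv
        rw [hsplit, hv]; ring
      · have hτ : Lifts 𝓤 0 (fun k => (u k, y k)) (0 : (Fin n → ℂ) × ℂ)
            (fun q : (Fin n → ℂ) × ℂ => (q.1, q.1 i * (c + q.2))) (fun k => (u k, y k / u k i - c)) := by
          refine ⟨Differentiable.holAt (by fun_prop) _, by simp, hu.prodMk_nhds ?_, ?_⟩
          · simpa using hc.sub_const c
          · filter_upwards [hui] with k hk
            simp [mul_div_cancel₀ _ hk]
        have hunit : HolAt (fun v : Fin (n+1) → ℂ => c + v 0) 0 := Differentiable.holAt (by fun_prop) _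
        refine ⟨_, _, hτ.trans (splitE_lifts hτ.2.2.1), fun j => isMon_coord j.succ,
          (isMon_coord i.succ).mul (isMon_unit hunit (by simpa [splitE] using hc0)),
          fun v => mono β (splitE n v).1 * (c + v 0)⁻¹, ?_, ?_⟩
        · refine HolAt.mul ?_ (hunit.inv (by simpa using hc0))
          refine HolAt.comp (g := mono β) (holAt_mono β _) ?_
          exact Differentiable.holAt (differentiable_splitE n).fst _
        · filter_upwards [hunit.continuousAt.eventually_ne (by simpa using hc0)] with v hv
          rw [hsplit]
          simp only [splitE]
          field_simp
    · obtain ⟨c, hc⟩ := Ultrafilter.exists_tendsto_of_bounded (𝓤 := 𝓤) (z := fun k => u k i / y k) (C := 1)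
        (by
          filter_upwards [hle, hy0] with k h1 h2
          rw [norm_div]; exact div_le_one_of_le₀ h1 (norm_nonneg _))
      classical
      set τ : (Fin n → ℂ) × ℂ → (Fin n → ℂ) × ℂ :=
        fun q => (Function.update q.1 i (q.2 * (c + q.1 i)), q.2) with hτd
      have hτi : ∀ q, (τ q).1 i = q.2 * (c + q.1 i) := fun q => by simp [hτd]
      have hτj : ∀ q j, j ≠ i → (τ q).1 j = q.1 j := fun q j hj => by simp [hτd, hj]
      have hτdiff : Differentiable ℂ τ := by
        refine Differentiable.prodMk (differentiable_pi.2 fun j => ?_) differentiable_snd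
        rcases eq_or_ne j i with rfl | hj
        · simp only [Function.update_self]; fun_prop
        · simp only [Function.update_of_ne hj]; fun_prop
      have hτ : Lifts 𝓤 0 (fun k => (u k, y k)) (0 : (Fin n → ℂ) × ℂ) τ
          (fun k => (Function.update (u k) i (u k i / y k - c), y k)) := by
        refine ⟨hτdiff.holAt _, ?_, Tendsto.prodMk_nhds ?_ hy, ?_⟩
        · ext j
          · rcases eq_or_ne j i with rfl | hj
            · simp [hτi]
            · simp [hτj _ _ hj]
          · rfl
        · rw [tendsto_pi_nhds]
          intro j
          rcases eq_or_ne j i with rfl | hj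
          · simpa using hc.sub_const c
          · simpa [hj] using (tendsto_pi_nhds.1 hu) j
        · filter_upwards [hy0] with k hyk
          ext j
          · rcases eq_or_ne j i with rfl | hj
            · rw [hτi]; simp [mul_div_cancel₀ _ hyk]
            · simp [hτj _ _ hj, hj]
          · rfl
      refine ⟨_, _, hτ.trans (splitE_lifts hτ.2.2.1), fun j => ?_, isMon_coord 0,
          fun v => mono β (τ (splitE n v)).1 * (c + v i.succ), ?_, ?_⟩
      · rcases eq_or_ne j i with rfl | hj
        · simp only [hτi]
          refine (isMon_coord 0).mul ?_
          rcases eq_or_ne c 0 with rfl | hc0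
          · simpa using! isMon_coord j.succ
          · exact isMon_unit (Differentiable.holAt (f := fun v : Fin (n+1) → ℂ => c + v j.succ)
              (by fun_prop) 0) (by simpa [splitE] using hc0)
        · simp only [hτj _ _ hj]
          exact isMon_coord j.succ
      · refine HolAt.mul ?_ (Differentiable.holAt (by fun_prop) _)
        refine HolAt.comp (g := mono β) (holAt_mono β _) ?_
        exact Differentiable.holAt (hτdiff.comp (differentiable_splitE n)).fst _
      · refine Eventually.of_forall fun v => ?_
        rw [hsplit, hτi]
        simp only [splitE, hτd]
        ring

end Lift

section Poly
open Polynomial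

lemma dY_iter_eq_iteratedDeriv {E : Type*} [NormedAddCommGroup E] [NormedSpace ℂ E] [FiniteDimensional ℂ E]
    {g : E × ℂ → ℂ} {p : E} (j : ℕ) :
    ∀ {y : ℂ}, HolAt g (p, y) → dY^[j] g (p, y) = iteratedDeriv j (fun t => g (p, t)) y := by
  induction j with
  | zero => intro y _; simp
  | succ j ih =>
    intro y hg
    have hc : ContinuousAt (fun t : ℂ => (p, t)) y := by fun_prop
    have h1 : iteratedDeriv j (fun t => g (p, t)) =ᶠ[𝓝 y] fun t => dY^[j] g (p, t) := by
      filter_upwards [hc.eventually hg.eventually] with t ht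
      exact (ih ht).symm
    rw [iteratedDeriv_succ, h1.deriv_eq, Function.iterate_succ_apply']
    have h2 : HasDerivAt (fun t : ℂ => (p, t)) (0, 1) y := (hasDerivAt_const y p).prodMk (hasDerivAt_id y)
    have h3 := (hg.derivY_iter j).differentiableAt.hasFDerivAt.comp_hasDerivAt y h2
    exact h3.deriv.symm

lemma iteratedDeriv_eval (P : ℂ[X]) (j : ℕ) (z : ℂ) :
    iteratedDeriv j (fun t => P.eval (z + t)) 0 = (derivative^[j] P).eval z := by
  rw [iteratedDeriv_comp_const_add (f := fun t => P.eval t)]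
  simp only [add_zero]
  induction j generalizing z with
  | zero => simp
  | succ j ih =>
    rw [iteratedDeriv_succ]
    have : iteratedDeriv j (fun t => P.eval t) = fun t => (derivative^[j] P).eval t := by
      funext t; exact ih t
    rw [this, Function.iterate_succ_apply']
    exact Polynomial.deriv _

/-- A polynomial of degree `e + 1` without term of degree `e` which is not a pure power has no root of
multiplicity `e + 1`. -/
lemma exists_iterate_derivative_ne {e : ℕ} (b : ℕ → ℂ) (c z : ℂ) (hc : c ≠ 0) (i₀ : ℕ) (hi₀ : i₀ < e)
    (hb : b i₀ ≠ 0) :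
    ∃ j ≤ e, (derivative^[j] (∑ i ∈ Finset.range e, C (b i) * X ^ i + C c * X ^ (e+1))).eval z ≠ 0 := by
  by_contra! h
  set P : ℂ[X] := ∑ i ∈ Finset.range e, C (b i) * X ^ i + C c * X ^ (e+1) with hP
  have hcoeff : ∀ k, P.coeff k = (if k < e then b k else 0) + (if k = e+1 then c else 0) := by
    intro k
    simp [hP, coeff_X_pow]
  have hdeg : P.natDegree ≤ e + 1 := by
    rw [natDegree_le_iff_coeff_eq_zero]
    intro k hk
    rw [hcoeff, if_neg (by omega), if_neg (by omega), add_zero]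
  have ht : ∀ j ≤ e, (taylor z P).coeff j = 0 := by
    intro j hj
    have h1 := h j hj
    rw [← factorial_smul_hasseDeriv] at h1
    rw [taylor_coeff]
    simp only [LinearMap.smul_apply, eval_smul, smul_eq_zero] at h1
    exact h1.resolve_left (Nat.factorial_ne_zero j)
  set c' := (taylor z P).coeff (e+1)
  have hT : taylor z P = C c' * X ^ (e+1) := by
    ext k
    rw [coeff_C_mul_X_pow]
    rcases lt_trichotomy k (e+1) with hk | hk | hk
    · rw [ht k (by omega), if_neg hk.ne]
    · subst hk; simp [c']
    · rw [if_neg hk.ne', coeff_eq_zero_of_natDegree_lt]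
      rw [natDegree_taylor]; omega
  have hPP : P = C c' * (X + C (-z)) ^ (e+1) := by
    have := taylor_taylor P (-z) z
    rw [neg_add_cancel, taylor_zero, hT] at this
    rw [← this]
    simp [taylor_apply]
  have h1 : c' = c := by
    have := hcoeff (e+1)
    rw [hPP, coeff_C_mul, coeff_X_add_C_pow] at this
    simpa using this
  have h2 : z = 0 := by
    have := hcoeff e
    rw [hPP, coeff_C_mul, coeff_X_add_C_pow, h1] at this
    simp [hc] at this
    rcases this with h | h
    · exact h
    · exact absurd h (by exact_mod_cast Nat.succ_ne_zero e)
  have := hcoeff i₀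
  rw [hPP, h2, coeff_C_mul] at this
  simp only [neg_zero, C_0, add_zero, coeff_X_pow] at this
  rw [if_neg (by omega), if_pos hi₀, if_neg (by omega)] at this
  simp at this
  exact hb this.symm

end Poly

/-! ### Local uniformization -/

section Uniformization
variable {ι : Type*} {𝓤 : Ultrafilter ι}

/-- Local uniformization in dimension `n`. -/
def UProp (𝓤 : Ultrafilter ι) (n : ℕ) : Prop :=
  ∀ f : (Fin n → ℂ) → ℂ, HolAt f 0 → (¬ ∀ᶠ u in 𝓝 0, f u = 0) → ∀ z : ι → Fin n → ℂ,
    Tendsto z 𝓤 (𝓝 0) → Unif 𝓤 n 0 z f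

/-- Local uniformization in dimension `n + 1` for the products `h(x) g(x, y)` where `g` has order `d`
in the last variable. -/
def WProp (𝓤 : Ultrafilter ι) (n d : ℕ) : Prop :=
  ∀ h : (Fin n → ℂ) → ℂ, HolAt h 0 → (¬ ∀ᶠ u in 𝓝 0, h u = 0) →
  ∀ g : (Fin n → ℂ) × ℂ → ℂ, HolAt g 0 → (∀ i < d, dY^[i] g 0 = 0) → dY^[d] g 0 ≠ 0 →
  ∀ z : ι → (Fin n → ℂ) × ℂ, Tendsto z 𝓤 (𝓝 0) → Unif 𝓤 (n+1) 0 z (fun q => h q.1 * g q)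

lemma HolAt.not_eventually_zero_prod {E κ : Type*} [NormedAddCommGroup E] [NormedSpace ℂ E] {p : E}
    (s : Finset κ) {g : κ → E → ℂ} (hg : ∀ i ∈ s, HolAt (g i) p)
    (h0 : ∀ i ∈ s, ¬ ∀ᶠ u in 𝓝 p, g i u = 0) : ¬ ∀ᶠ u in 𝓝 p, ∏ i ∈ s, g i u = 0 := by
  classical
  induction s using Finset.induction_on with
  | empty => intro h; simpa using h.self_of_nhds
  | insert a s ha ih =>
    simp only [Finset.prod_insert ha]
    intro h
    rcases (hg a (by simp)).eventuallyEq_zero_or (HolAt.prod s fun i hi => hg i (by simp [hi])) h with h1 | h1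
    · exact h0 a (by simp) h1
    · exact ih (fun i hi => hg i (by simp [hi])) (fun i hi => h0 i (by simp [hi])) h1

/-- Uniformization of `h(u) (∑ bᵢ(u) u^{(e+1-i)γ} yⁱ + c(u,y) y^{e+1})`, where the sum is over `i < e`, some `bᵢ` is a
unit, and `h` is a monomial up to a unit. If `y = O(u^γ)` along the ultrafilter, then substituting `y = u^γ (z + s)` for the
limit `z` of `y / u^γ` lowers the order in the last variable, because the polynomial `∑ bᵢ(0) xⁱ + c(0) x^{e+1}` has no term
of degree `e` and hence no root of multiplicity `e + 1`. Otherwise `u^γ = o(y)`, and the term `c y^{e+1}` dominates. -/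
lemma unif_core {n e : ℕ} (IH : ∀ d ≤ e, WProp 𝓤 n d) {h : (Fin n → ℂ) → ℂ} (hh : IsMon h)
    {γ : Fin n → ℕ} (hγ : γ ≠ 0) (b : ℕ → (Fin n → ℂ) → ℂ) (hb : ∀ i, HolAt (b i) 0)
    {i₀ : ℕ} (hi₀ : i₀ < e) (hb₀ : b i₀ 0 ≠ 0) {c : (Fin n → ℂ) × ℂ → ℂ} (hc : HolAt c 0) (hc0 : c 0 ≠ 0)
    (w : ι → (Fin n → ℂ) × ℂ) (hw : Tendsto w 𝓤 (𝓝 0)) :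
    Unif 𝓤 (n+1) 0 w (fun q => h q.1 * (∑ i ∈ Finset.range e,
      mono γ q.1 ^ (e + 1 - i) * b i q.1 * q.2 ^ i + q.2 ^ (e+1) * c q)) := by
  have hw1 : Tendsto (fun k => (w k).1) 𝓤 (𝓝 0) := (continuous_fst.tendsto _).comp hw
  have hw2 : Tendsto (fun k => (w k).2) 𝓤 (𝓝 0) := (continuous_snd.tendsto _).comp hw
  by_cases hcase : ∃ C : ℝ, ∀ᶠ k in (𝓤 : Filter ι), ‖(w k).2‖ ≤ C * ‖mono γ (w k).1‖
  · -- `y = u ^ γ * (z + s)`, and the order in `s` is smaller than the order in `y`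
    obtain ⟨C, hC⟩ := hcase
    obtain ⟨z, hz⟩ := Ultrafilter.exists_tendsto_of_bounded (𝓤 := 𝓤)
      (z := fun k => (w k).2 / mono γ (w k).1) (C := max C 0) (by
        filter_upwards [hC] with k hk
        rw [norm_div]
        exact div_le_of_le_mul₀ (norm_nonneg _) (le_max_right _ _)
          (hk.trans (mul_le_mul_of_nonneg_right (le_max_left _ _) (norm_nonneg _))))
    set τ : (Fin n → ℂ) × ℂ → (Fin n → ℂ) × ℂ := fun q => (q.1, mono γ q.1 * (z + q.2)) with hτd
    have hτdiff : Differentiable ℂ τ := by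
      have := differentiable_mono γ
      exact differentiable_fst.prodMk ((this.comp differentiable_fst).mul (by fun_prop))
    have hτs : ∀ s, τ (0, s) = 0 := fun s => by simp [hτd, mono_at_zero hγ]
    have hτ : Lifts 𝓤 0 w 0 τ (fun k => ((w k).1, (w k).2 / mono γ (w k).1 - z)) := by
      refine ⟨hτdiff.holAt _, hτs 0, hw1.prodMk_nhds (by simpa using hz.sub_const z), ?_⟩
      filter_upwards [hC] with k hk
      rcases eq_or_ne (mono γ (w k).1) 0 with h0 | h0
      · rw [h0, norm_zero, mul_zero] at hk
        refine Prod.ext rfl ?_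
        simp [hτd, h0, norm_le_zero_iff.1 hk]
      · simp [hτd, mul_div_cancel₀ _ h0]
    set g : (Fin n → ℂ) × ℂ → ℂ := fun q =>
      ∑ i ∈ Finset.range e, b i q.1 * (z + q.2) ^ i + (z + q.2) ^ (e+1) * c (τ q) with hg
    have hghol : ∀ s, HolAt g (0, s) := by
      intro s
      have hzs : HolAt (fun q : (Fin n → ℂ) × ℂ => z + q.2) (0, s) := Differentiable.holAt (by fun_prop) _
      refine (HolAt.sum _ fun i _ => ?_).add ((hzs.pow _).mul (hc.comp_of_eq (hτdiff.holAt _) (hτs s)))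
      exact (HolAt.comp (g := b i) (f := fun q : (Fin n → ℂ) × ℂ => q.1) (hb i) (holAt_fst _)).mul (hzs.pow i)
    have hex : ∃ j, dY^[j] g 0 ≠ 0 ∧ j ≤ e := by
      obtain ⟨j, hj, hne⟩ := exists_iterate_derivative_ne (e := e) (fun i => b i 0) (c 0) z hc0 i₀ hi₀ hb₀
      refine ⟨j, ?_, hj⟩
      change dY^[j] g (0, 0) ≠ 0
      rw [dY_iter_eq_iteratedDeriv j (hghol 0)]
      rw [← iteratedDeriv_eval] at hne
      convert hne using 3 with t
      simp only [hg, hτs]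
      simp [Polynomial.eval_finsetSum, mul_comm (c 0)]
    classical
    have hfind := Nat.find_spec (p := fun j => dY^[j] g 0 ≠ 0) (hex.imp fun j h => h.1)
    have hle : Nat.find (p := fun j => dY^[j] g 0 ≠ 0) (hex.imp fun j h => h.1) ≤ e := by
      obtain ⟨j, h1, h2⟩ := hex
      exact (Nat.find_min' _ h1).trans h2
    have hmin := fun i hi => Nat.find_min (p := fun j => dY^[j] g 0 ≠ 0) (hex.imp fun j h => h.1) (m := i) hi
    have hm : IsMon (fun u => h u * mono γ u ^ (e+1)) := hh.mul ((isMon_mono γ).pow _)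
    have := IH _ hle _ hm.holAt hm.not_eventually_zero g (hghol 0)
      (fun i hi => not_not.1 (hmin i hi)) hfind _ hτ.2.2.1
    refine Unif.of_lifts hτ (this.congr (Eventually.of_forall fun q => ?_))
    have hpow : ∀ i ∈ Finset.range e, mono γ q.1 ^ (e + 1 - i) * b i q.1 * (mono γ q.1 * (z + q.2)) ^ i =
        mono γ q.1 ^ (e+1) * (b i q.1 * (z + q.2) ^ i) := by
      intro i hi
      have : e + 1 = (e + 1 - i) + i := by have := Finset.mem_range.1 hi; omega
      conv_rhs => rw [this, pow_add]
      rw [mul_pow]; ring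
    simp only [hτd, hg]
    rw [Finset.sum_congr rfl hpow, ← Finset.mul_sum, mul_pow]
    ring
  · -- `u ^ γ = o(y)`
    push Not at hcase
    have hy0 : ∀ᶠ k in (𝓤 : Filter ι), (w k).2 ≠ 0 := by
      filter_upwards [hcase 0] with k hk h0
      simp [h0] at hk
    have hsmall : ∀ C : ℝ, 0 < C → ∀ᶠ k in (𝓤 : Filter ι), ‖mono γ (w k).1‖ ≤ C * ‖(w k).2‖ := by
      intro C hC
      filter_upwards [hcase C⁻¹] with k hk
      rw [inv_mul_lt_iff₀ hC] at hk
      exact hk.le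
    obtain ⟨σ, u, hl, hx, hy, q, hq, hdiv⟩ := exists_lift_dvd γ (fun k => (w k).1) (fun k => (w k).2) hw1 hw2 hy0
      1 (hsmall 1 one_pos)
    have hq0 : q 0 = 0 := by
      have ht : Tendsto (fun k => q (u k)) 𝓤 (𝓝 (q 0)) := hq.continuousAt.tendsto.comp hl.2.2.1
      refine tendsto_nhds_unique ht ?_
      rw [Metric.tendsto_nhds]
      intro C hC
      filter_upwards [hl.2.2.1.eventually hdiv, hl.2.2.2, hsmall (C/2) (by linarith), hy0] with k h1 h2 h3 h4
      rw [h2] at h1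
      simp only at h1 h3 h4
      rw [h1, norm_mul, mul_comm] at h3
      have := le_of_mul_le_mul_right h3 (norm_pos_iff.2 h4)
      rw [dist_zero_right]; linarith
    have hσ1 : HolAt (fun v => (σ v).1) 0 := holAt_pi.2 fun i => (hx i).holAt
    have hσ0 : (σ 0).1 = 0 := by rw [hl.2.1]; rfl
    refine ⟨σ, u, hl, ?_⟩
    have hunit : IsMon (fun v => ∑ i ∈ Finset.range e, q v ^ (e+1-i) * b i (σ v).1 + c (σ v)) := by
      refine isMon_unit ((HolAt.sum _ fun i _ => (hq.pow _).mul ?_).add (hc.comp_of_eq hl.1 hl.2.1)) ?_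
      · exact (hb i).comp_of_eq hσ1 hσ0
      · rw [Finset.sum_eq_zero, zero_add, hl.2.1]
        · exact hc0
        · intro i hi
          have := Finset.mem_range.1 hi
          rw [hq0, zero_pow (by omega), zero_mul]
    refine ((hh.comp hx hσ0).mul ((hy.pow (e+1)).mul hunit)).congr ?_
    filter_upwards [hdiv] with v hv
    have hpow : ∀ i ∈ Finset.range e, mono γ (σ v).1 ^ (e + 1 - i) * b i (σ v).1 * (σ v).2 ^ i =
        (σ v).2 ^ (e+1) * (q v ^ (e+1-i) * b i (σ v).1) := by
      intro i hi
      have : e + 1 = (e + 1 - i) + i := by have := Finset.mem_range.1 hi; omega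
      conv_rhs => rw [this, pow_add]
      rw [hv, mul_pow]
      simp only [← this]
      ring
    rw [Finset.sum_congr rfl hpow, ← Finset.mul_sum]
    ring

end Uniformization

section Uniformization2
variable {ι : Type*} {𝓤 : Ultrafilter ι}

lemma Lifts.prodMap {X Y : Type*} [NormedAddCommGroup X] [NormedSpace ℂ X]
    [NormedAddCommGroup Y] [NormedSpace ℂ Y] {p : X} {z : ι → X} {q : Y} {σ : Y → X} {u : ι → Y}
    (h : Lifts 𝓤 p z q σ u) {y : ι → ℂ} {y₀ : ℂ} (hy : Tendsto y 𝓤 (𝓝 y₀)) :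
    Lifts 𝓤 (p, y₀) (fun k => (z k, y k)) (q, y₀) (fun a : Y × ℂ => (σ a.1, a.2)) (fun k => (u k, y k)) := by
  refine ⟨(HolAt.comp (g := σ) (f := fun a : Y × ℂ => a.1) h.1 (holAt_fst _)).prodMk (holAt_snd _), ?_,
    h.2.2.1.prodMk_nhds hy, ?_⟩
  · simp [h.2.1]
  · filter_upwards [h.2.2.2] with k hk
    simp [hk]

/-- Simultaneous uniformization of finitely many functions. -/
lemma UProp.family {n : ℕ} (hU : UProp 𝓤 n) {κ : Type*} [Fintype κ] (F : κ → (Fin n → ℂ) → ℂ)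
    (hF : ∀ i, HolAt (F i) 0) (z : ι → Fin n → ℂ) (hz : Tendsto z 𝓤 (𝓝 0)) :
    ∃ σ u, Lifts 𝓤 0 z (0 : Fin n → ℂ) σ u ∧
      ∀ i, (¬ (∀ᶠ x in 𝓝 0, F i x = 0) ∧ IsMon (fun v => F i (σ v))) ∨
        ((∀ᶠ x in 𝓝 0, F i x = 0) ∧ ∀ᶠ v in 𝓝 0, F i (σ v) = 0) := by
  classical
  set s := Finset.univ.filter fun i => ¬ ∀ᶠ x in 𝓝 0, F i x = 0 with hs
  obtain ⟨σ, u, h1, h2⟩ := hU (fun x => ∏ i ∈ s, F i x) (HolAt.prod s fun i _ => hF i)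
    (HolAt.not_eventually_zero_prod s (fun i _ => hF i) fun i hi => (Finset.mem_filter.1 hi).2) z hz
  refine ⟨σ, u, h1, fun i => ?_⟩
  by_cases hi : ∀ᶠ x in 𝓝 0, F i x = 0
  · exact Or.inr ⟨hi, h1.tendsto.eventually hi⟩
  · exact Or.inl ⟨hi, IsMon.of_prod s (g := fun i v => F i (σ v))
      (fun j _ => (hF j).comp_of_eq h1.1 h1.2.1) h2 i (Finset.mem_filter.2 ⟨Finset.mem_univ i, hi⟩)⟩

/-- The map raising all coordinates to the power `N` lifts every family of points: take `N`-th roots. -/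
lemma lifts_ramify {n N : ℕ} (hN : 0 < N) {u : ι → Fin n → ℂ} (hu : Tendsto u 𝓤 (𝓝 0)) :
    ∃ w, Lifts 𝓤 0 u (0 : Fin n → ℂ) (fun (v : Fin n → ℂ) j => v j ^ N) w := by
  refine ⟨fun k j => (u k j) ^ ((N : ℂ)⁻¹), ?_, ?_, ?_, ?_⟩
  · exact Differentiable.holAt (by fun_prop) _
  · funext j; simp [hN.ne']
  · rw [tendsto_pi_nhds] at hu ⊢
    intro j
    have h1 : ContinuousAt (fun x : ℂ => x ^ ((N : ℂ)⁻¹)) 0 :=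
      Complex.continuousAt_cpow_zero_of_re_pos (z := (N:ℂ)⁻¹) (by
        rw [← Complex.ofReal_natCast, ← Complex.ofReal_inv, Complex.ofReal_re]; positivity)
        |>.comp_of_eq (f := fun x : ℂ => (x, (N:ℂ)⁻¹)) (by fun_prop) rfl
    have h2 := h1.tendsto.comp (hu j)
    simpa [Function.comp_def, Complex.zero_cpow, hN.ne'] using h2
  · refine Eventually.of_forall fun k => ?_
    funext j
    exact Complex.cpow_nat_inv_pow _ (Nat.pos_iff_ne_zero.1 hN)

/-- After a ramification the coefficients `A i` become multiples of powers of a single monomial, and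
one of the quotients is a unit. -/
lemma monomial_newton {n e : ℕ} (A : ℕ → (Fin n → ℂ) → ℂ)
    (hA : ∀ i < e, IsMon (A i) ∨ ∀ᶠ u in 𝓝 0, A i u = 0) (k : ℕ → ℕ) {N : ℕ} (hN : 0 < N)
    (hk : ∀ i < e, (e + 1 - i) * k i = N)
    (hD : ∀ i < e, ∀ j < e, IsMon (fun u => A i u ^ k i - A j u ^ k j) ∨
      ∀ᶠ u in 𝓝 0, A i u ^ k i - A j u ^ k j = 0)
    (hex : ∃ i < e, IsMon (A i)) (h0 : ∀ i < e, A i 0 = 0) :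
    ∃ (γ : Fin n → ℕ) (b : ℕ → (Fin n → ℂ) → ℂ), γ ≠ 0 ∧ (∀ i, HolAt (b i) 0) ∧ (∃ i₀ < e, b i₀ 0 ≠ 0) ∧
      ∀ᶠ v in 𝓝 0, ∀ i ∈ Finset.range e,
        A i (fun j => v j ^ N) = mono γ v ^ (e + 1 - i) * b i v := by
  classical
  set I := (Finset.range e).filter fun i => IsMon (A i) with hI
  have hα : ∀ i, ∃ (α : Fin n → ℕ) (ε : (Fin n → ℂ) → ℂ), i ∈ I → HolAt ε 0 ∧ ε 0 ≠ 0 ∧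
      ∀ᶠ u in 𝓝 0, A i u = mono α u * ε u := by
    intro i
    by_cases hi : i ∈ I
    · obtain ⟨α, ε, h⟩ := (Finset.mem_filter.1 hi).2
      exact ⟨α, ε, fun _ => h⟩
    · exact ⟨0, 0, fun h => absurd h hi⟩
  choose α ε hαε using hα
  have hne : I.Nonempty := by
    obtain ⟨i, hi, h⟩ := hex
    exact ⟨i, by simp [hI, hi, h]⟩
  obtain ⟨m, hm, hmin⟩ := Finset.exists_min_image I (fun i => ∑ j, (k i • α i) j) hne
  have hIe : ∀ i ∈ I, i < e := fun i hi => Finset.mem_range.1 (Finset.mem_filter.1 hi).1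
  have hkpos : ∀ i < e, k i ≠ 0 := by
    intro i hi h
    have := hk i hi
    rw [h] at this; omega
  set γ := k m • α m with hγ
  have hle : ∀ i ∈ I, γ ≤ k i • α i := by
    intro i hi
    obtain ⟨h1, h2, h3⟩ := hαε i hi
    obtain ⟨k1, k2, k3⟩ := hαε m hm
    rcases mono_comparable (a := γ) (b := k i • α i) (k1.pow (k m)) (pow_ne_zero _ k2) (h1.pow (k i))
      (pow_ne_zero _ h2) (hD m (hIe m hm) i (hIe i hi)) (by
        filter_upwards [h3, k3] with u a b
        rw [a, b, mul_pow, mul_pow, hγ, mono_smul, mono_smul]) with h | h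
    · exact h
    · have hs := hmin i hi
      have := (Finset.sum_eq_sum_iff_of_le (fun j _ => h j)).1
        (le_antisymm (Finset.sum_le_sum fun j _ => h j) hs)
      intro j
      exact (this j (Finset.mem_univ j)).ge
  have hρ : HolAt (fun (v : Fin n → ℂ) j => v j ^ N) 0 := Differentiable.holAt (by fun_prop) _
  have hρ0 : (fun (v : Fin n → ℂ) j => v j ^ N) 0 = 0 := by funext j; simp [hN.ne']
  have hρt : Tendsto (fun (v : Fin n → ℂ) j => v j ^ N) (𝓝 0) (𝓝 0) := by
    have := hρ.continuousAt.tendsto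
    rwa [show (fun j : Fin n => (0 : Fin n → ℂ) j ^ N) = 0 from hρ0] at this
  refine ⟨γ, fun i v => if i ∈ I then mono ((e+1-i) • (k i • α i - γ)) v * ε i (fun j => v j ^ N) else 0,
    ?_, ?_, ⟨m, hIe m hm, ?_⟩, ?_⟩
  · intro h
    have hαm : α m = 0 := by
      funext j
      have := congrFun h j
      simpa [hγ, hkpos m (hIe m hm)] using this
    obtain ⟨k1, k2, k3⟩ := hαε m hm
    have := k3.self_of_nhds
    rw [hαm, mono_zero, one_mul, h0 m (hIe m hm)] at this
    exact k2 this.symm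
  · intro i
    by_cases hi : i ∈ I
    · simp only [hi, if_true]
      exact (holAt_mono _ _).mul ((hαε i hi).1.comp_of_eq hρ hρ0)
    · simp only [hi, if_false]
      exact holAt_const _ _
  · have h00 : (fun j : Fin n => (0 : Fin n → ℂ) j ^ N) = 0 := hρ0
    simp only [hm, if_true]
    rw [h00]
    simpa [hγ, mono_zero] using (hαε m hm).2.1
  · rw [Finset.eventually_all]
    intro i hi
    by_cases hiI : i ∈ I
    · filter_upwards [hρt.eventually (hαε i hiI).2.2] with v hv
      simp only [hiI, if_true]
      rw [hv, mono_pow_arg, ← mul_assoc, ← mono_smul, ← mono_add, ← smul_add,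
        add_tsub_cancel_of_le (hle i hiI), smul_smul, hk i (Finset.mem_range.1 hi)]
    · have hz : ∀ᶠ u in 𝓝 0, A i u = 0 := by
        refine (hA i (Finset.mem_range.1 hi)).resolve_left fun h => hiI ?_
        exact Finset.mem_filter.2 ⟨hi, h⟩
      filter_upwards [hρt.eventually hz] with v hv
      simp [hiI, hv]

/-- Induction on the order `d` in the last variable. A Tschirnhausen shift puts `g` in the form
`∑ aᵢ(x) yⁱ + c(x, y) y^{e+1}`, `i < e`. Uniformizing in dimension `n` makes the `aᵢ`, and the differences of suitable powers of
them, monomial up to units, so that these powers are ordered by divisibility. After a ramification `unif_core` applies. -/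
lemma wProp {n : ℕ} (hU : UProp 𝓤 n) (d : ℕ) : WProp 𝓤 n d := by
  induction d using Nat.strong_induction_on with
  | _ d ih =>
  intro h hh hh0 g hg hlow htop z hz
  have hz1 : Tendsto (fun k => (z k).1) 𝓤 (𝓝 0) := (continuous_fst.tendsto (0 : (Fin n → ℂ) × ℂ)).comp hz
  have hz2 : Tendsto (fun k => (z k).2) 𝓤 (𝓝 0) := (continuous_snd.tendsto (0 : (Fin n → ℂ) × ℂ)).comp hz
  rcases d with _ | e
  · obtain ⟨σ, u, hl, hm⟩ := hU h hh hh0 _ hz1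
    refine Unif.of_splitE (hl.prodMap hz2) ?_
    refine (IsMon.comp hm (σ := fun v => (splitE n v).1) (fun i => isMon_coord i.succ) rfl).mul ?_
    refine isMon_unit (hg.comp_of_eq ((hl.prodMap hz2).1.comp_of_eq ((differentiable_splitE n).holAt 0) rfl)
      (hl.prodMap hz2).2.1) ?_
    have : ((σ (splitE n 0).1, (splitE n 0).2) : (Fin n → ℂ) × ℂ) = 0 := (hl.prodMap hz2).2.1
    simp only [this]
    simpa using htop
  · obtain ⟨η, a, c, hη, hη0, ha, ha0, hc, hc0, heq⟩ := hg.tschirnhausen e (fun i hi => hlow i (by omega)) htop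
    have hηf : HolAt (fun q : (Fin n → ℂ) × ℂ => η q.1) 0 :=
      HolAt.comp (g := η) (f := fun q : (Fin n → ℂ) × ℂ => q.1) hη (holAt_fst _)
    have hηz : Tendsto (fun k => η (z k).1) 𝓤 (𝓝 0) := by
      have := hη.continuousAt.tendsto.comp hz1
      rwa [hη0] at this
    have hy : Tendsto (fun k => (z k).2 - η (z k).1) 𝓤 (𝓝 0) := by simpa using hz2.sub hηz
    -- the shift making the coefficient of `y ^ e` vanish
    have hl1 : Lifts 𝓤 0 z 0 (fun q : (Fin n → ℂ) × ℂ => (q.1, η q.1 + q.2))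
        (fun k => ((z k).1, (z k).2 - η (z k).1)) := by
      refine ⟨(holAt_fst _).prodMk (hηf.add (holAt_snd _)), by simp [hη0], hz1.prodMk_nhds hy,
        Eventually.of_forall fun k => by simp⟩
    refine Unif.of_lifts hl1 ?_
    -- the powers `a i ^ κ i` all have the same weight `N` when `a i` is given the weight `e + 1 - i`
    set N := (e+1).factorial with hN
    set κ : ℕ → ℕ := fun i => N / (e + 1 - i) with hκ
    have hκN : ∀ i < e, (e + 1 - i) * κ i = N := fun i hi =>
      Nat.mul_div_cancel' (Nat.dvd_factorial (by omega) (by omega))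
    obtain ⟨σ, u, hl, hF⟩ := hU.family (κ := Unit ⊕ Fin e ⊕ (Fin e × Fin e))
      (Sum.elim (fun _ => h) (Sum.elim (fun i => a i)
        (fun p x => a p.1 x ^ κ p.1 - a p.2 x ^ κ p.2)))
      (by rintro (_ | i | p)
          · exact hh
          · exact ha i
          · exact ((ha _).pow _).sub ((ha _).pow _)) (fun k => (z k).1) hz1
    have hmh : IsMon (fun v => h (σ v)) := by
      rcases hF (Sum.inl ()) with h1 | h1
      · exact h1.2
      · exact absurd h1.1 hh0
    obtain ⟨w, hw⟩ := lifts_ramify (N := N) (Nat.factorial_pos _) hl.2.2.1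
    have hl2 := (hl.trans hw).prodMap hy
    by_cases hex : ∃ i < e, IsMon (fun v => a i (σ v))
    · obtain ⟨γ, b, hγ, hb, ⟨i₀, hi₀, hb0⟩, hab⟩ := monomial_newton (fun i v => a i (σ v))
        (fun i hi => (hF (Sum.inr (Sum.inl ⟨i, hi⟩))).imp (fun h => h.2) fun h => h.2) κ (Nat.factorial_pos _)
        hκN (fun i hi j hj => (hF (Sum.inr (Sum.inr (⟨i, hi⟩, ⟨j, hj⟩)))).imp (fun h => h.2) fun h => h.2)
        hex (fun i hi => by simp only [hl.2.1]; exact ha0 i hi.le)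
      refine Unif.of_lifts hl2 ?_
      have hmh' : IsMon (fun v : Fin n → ℂ => h (σ (fun j => v j ^ N))) :=
        hmh.comp (σ := fun v j => v j ^ N) (fun i => (isMon_coord i).pow N) hw.2.1
      have hc' : HolAt (fun q : (Fin n → ℂ) × ℂ => c (σ (fun j => q.1 j ^ N), q.2)) 0 :=
        hc.comp_of_eq hl2.1 hl2.2.1
      refine (unif_core (fun d hd => ih d (by omega)) hmh' hγ b hb hi₀ hb0 hc' (by
        have h2 := hl2.2.1
        change (σ (fun j => (0 : Fin n → ℂ) j ^ N), (0:ℂ)) = 0 at h2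
        simp only [Prod.fst_zero, Prod.snd_zero, h2]; exact hc0) _ hl2.2.2.1).congr ?_
      have hab' : ∀ᶠ q : (Fin n → ℂ) × ℂ in 𝓝 0, ∀ i ∈ Finset.range e,
          a i (σ (fun j => q.1 j ^ N)) = mono γ q.1 ^ (e + 1 - i) * b i q.1 :=
        (continuous_fst.tendsto (0 : (Fin n → ℂ) × ℂ)).eventually hab
      filter_upwards [hab', hl2.tendsto.eventually heq] with q h1 h2
      rw [h2]
      congr 2
      exact Finset.sum_congr rfl fun i hi => by rw [h1 i hi]
    -- all coefficients vanish, and `g` is `y ^ (e + 1)` times a unit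
    · push Not at hex
      have hl3 := hl.prodMap hy
      refine Unif.of_splitE hl3 ?_
      have ht : Tendsto (splitE n) (𝓝 0) (𝓝 0) := (differentiable_splitE n).continuous.tendsto 0
      have hunit : IsMon (fun v => c (σ (splitE n v).1, (splitE n v).2)) := by
        refine isMon_unit (hc.comp_of_eq (hl3.1.comp_of_eq ((differentiable_splitE n).holAt 0) rfl)
          hl3.2.1) ?_
        have : ((σ (splitE n 0).1, (splitE n 0).2) : (Fin n → ℂ) × ℂ) = 0 := hl3.2.1
        simp only [this]
        exact hc0
      refine ((IsMon.comp hmh (σ := fun v => (splitE n v).1) (fun i => isMon_coord i.succ) rfl).mul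
        (((isMon_coord 0).pow (e+1)).mul hunit)).congr ?_
      have hz0 : ∀ᶠ q : (Fin n → ℂ) × ℂ in 𝓝 0, ∀ i ∈ Finset.range e, a i (σ q.1) = 0 := by
        rw [Finset.eventually_all]
        intro i hi
        have hi' := Finset.mem_range.1 hi
        have := ((hF (Sum.inr (Sum.inl ⟨i, hi'⟩))).resolve_left fun h => hex i hi' h.2).2
        exact (continuous_fst.tendsto (0 : (Fin n → ℂ) × ℂ)).eventually this
      filter_upwards [ht.eventually hz0, ht.eventually (hl3.tendsto.eventually heq)] with v h1 h2
      rw [h2, Finset.sum_eq_zero fun i hi => by rw [h1 i hi, zero_mul], zero_add]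
      rfl

/-- Induction on the dimension: after a linear change of coordinates `f` has finite order in the last variable. -/
theorem uProp (n : ℕ) : UProp 𝓤 n := by
  have hunit : ∀ n, ∀ f : (Fin n → ℂ) → ℂ, HolAt f 0 → f 0 ≠ 0 → ∀ z : ι → Fin n → ℂ,
      Tendsto z 𝓤 (𝓝 0) → Unif 𝓤 n 0 z f := fun n f hf h0 z hz =>
    ⟨fun x => x, z, ⟨Differentiable.holAt (by fun_prop) _, rfl, hz, Eventually.of_forall fun _ => rfl⟩,
      isMon_unit hf h0⟩
  induction n with
  | zero =>
    intro f hf hf0 z hz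
    refine hunit 0 f hf (fun h => hf0 (Eventually.of_forall fun x => ?_)) z hz
    rw [Subsingleton.elim x 0, h]
  | succ n ih =>
    intro f hf hf0 z hz
    obtain ⟨r, hr, hdiff⟩ := hf.exists_ball
    obtain ⟨p, hp, hfp⟩ : ∃ p ∈ ball (0 : Fin (n+1) → ℂ) (r/2), f p ≠ 0 := by
      by_contra! hcon
      exact hf0 (Metric.eventually_nhds_iff_ball.2 ⟨r/2, by linarith, hcon⟩)
    by_cases h0 : f 0 = 0
    swap
    · exact hunit _ f hf h0 z hz
    have hp0 : p ≠ 0 := by rintro rfl; exact hfp h0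
    -- linear coordinates in which `f` does not vanish identically on the last axis
    obtain ⟨Λ, hΛ⟩ : ∃ Λ : ((Fin n → ℂ) × ℂ) ≃L[ℂ] (Fin (n+1) → ℂ), Λ (0, 1) = p := by
      let Λ₀ : ((Fin n → ℂ) × ℂ) ≃L[ℂ] (Fin (n+1) → ℂ) := ContinuousLinearEquiv.ofFinrankEq (by simp)
      obtain ⟨A, hA⟩ := SeparatingDual.exists_continuousLinearEquiv_apply_eq (R := ℂ)
        (x := Λ₀ (0,1)) (y := p) (by simp) hp0
      exact ⟨Λ₀.trans A, hA⟩
    have hg : HolAt (fun q => f (Λ q)) (0, 0) :=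
      hf.comp_of_eq (Λ.differentiable.holAt _) (Λ.map_zero)
    have hex : ∃ j, dY^[j] (fun q => f (Λ q)) 0 ≠ 0 := by
      by_contra! hcon
      have hline : ∀ t : ℂ, f (Λ (0, t)) = f (t • p) := by
        intro t
        rw [← hΛ, ← Λ.map_smul]; simp
      have hd : DifferentiableOn ℂ (fun t : ℂ => f (t • p)) (ball 0 2) := by
        intro t ht
        refine DifferentiableAt.differentiableWithinAt ?_
        refine DifferentiableAt.comp (g := f) t (hdiff _ ?_) (by fun_prop)
        rw [mem_ball_zero_iff, norm_smul] at *
        nlinarith [norm_nonneg t, norm_nonneg p]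
      have := Complex.hasSum_taylorSeries_on_ball (z := 1) hd (by simp)
      have hz : ∀ j, iteratedDeriv j (fun t : ℂ => f (t • p)) 0 = 0 := by
        intro j
        have h1 := hcon j
        change dY^[j] (fun q => f (Λ q)) (0, 0) = 0 at h1
        rw [dY_iter_eq_iteratedDeriv j hg] at h1
        simpa only [hline] using h1
      simp only [hz, smul_zero, one_smul] at this
      exact hfp (this.unique hasSum_zero)
    classical
    have hl : Lifts 𝓤 0 z 0 (fun q => Λ q) (fun k => Λ.symm (z k)) := by
      refine ⟨Λ.differentiable.holAt _, Λ.map_zero, ?_, Eventually.of_forall fun k => by simp⟩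
      have := (Λ.symm.continuous.tendsto 0).comp hz
      rwa [Λ.symm.map_zero] at this
    refine Unif.of_lifts hl ?_
    refine (wProp ih (Nat.find hex) (fun _ => 1) (holAt_const _ _) (fun h => one_ne_zero h.self_of_nhds)
      _ hg (fun i hi => not_not.1 (Nat.find_min hex hi)) (Nat.find_spec hex) _ hl.2.2.1).congr
      (Eventually.of_forall fun q => by simp)

end Uniformization2

/-! ### Estimates along the Euler field -/

section Estimates

/-- Local uniformization at a point of a finite dimensional space. -/
theorem exists_unif {ι : Type*} {𝓤 : Ultrafilter ι} {X : Type*} [NormedAddCommGroup X] [NormedSpace ℂ X]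
    [FiniteDimensional ℂ X] {f : X → ℂ} {p : X} (hf : HolAt f p) (hf0 : ¬ ∀ᶠ z in 𝓝 p, f z = 0)
    {z : ι → X} (hz : Tendsto z 𝓤 (𝓝 p)) : Unif 𝓤 (Module.finrank ℂ X) p z f := by
  let Λ : (Fin (Module.finrank ℂ X) → ℂ) ≃L[ℂ] X := ContinuousLinearEquiv.ofFinrankEq (by simp)
  have hl : Lifts 𝓤 p z 0 (fun q => Λ q + p) (fun k => Λ.symm (z k - p)) := by
    refine ⟨(Λ.differentiable.add_const p).holAt _, by simp, ?_, Eventually.of_forall fun k => by simp⟩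
    have h1 : Tendsto (fun k => z k - p) 𝓤 (𝓝 0) := by simpa using hz.sub_const p
    have := (Λ.symm.continuous.tendsto 0).comp h1
    rwa [Λ.symm.map_zero] at this
  refine Unif.of_lifts hl (uProp _ _ (hf.comp_of_eq hl.1 hl.2.1) (fun h => hf0 ?_) _ hl.2.2.1)
  have ht : Tendsto (fun x => Λ.symm (x - p)) (𝓝 p) (𝓝 0) := by
    have : Continuous fun x => Λ.symm (x - p) := by fun_prop
    simpa using this.tendsto p
  filter_upwards [ht.eventually h] with x hx
  simpa using hx

variable {E F : Type*} [NormedAddCommGroup E] [NormedSpace ℂ E] [NormedAddCommGroup F] [NormedSpace ℂ F]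

/-- The derivative along the Euler field `∑ uᵢ ∂/∂uᵢ` tends to zero at the origin. -/
lemma HolAt.tendsto_euler {σ : E → F} (h : HolAt σ 0) :
    Tendsto (fun u => fderiv ℂ σ u u) (𝓝 0) (𝓝 0) := by
  have hb : ∀ᶠ z in 𝓝 (0 : E), ‖σ z‖ < ‖σ 0‖ + 1 :=
    h.continuousAt.norm.eventually_lt continuousAt_const (by linarith)
  obtain ⟨r, hr, H⟩ := Metric.eventually_nhds_iff_ball.1 (h.and hb)
  set M := ‖σ 0‖ + 1 with hM
  have hM0 : 0 < M := by positivity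
  have key : ∀ u ∈ ball (0 : E) (r/2), ‖fderiv ℂ σ u u‖ ≤ 2 * M / (r/2) * ‖u‖ := by
    intro u hu
    have hsub : ball u (r/2) ⊆ ball 0 r := by
      refine ball_subset_ball' ?_
      rw [mem_ball] at hu
      linarith
    obtain ⟨l, hl1, hl2⟩ := exists_dual_vector'' ℂ (fderiv ℂ σ u u)
    have hdu : DifferentiableAt ℂ σ u := (H u (hsub (mem_ball_self (by linarith)))).1
    have h1 : fderiv ℂ (fun x => l (σ x)) u u = l (fderiv ℂ σ u u) := by
      have := (l.hasFDerivAt.comp u hdu.hasFDerivAt).fderiv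
      change fderiv ℂ (l ∘ σ) u u = _
      rw [this]; rfl
    have h2 : ‖fderiv ℂ (fun x => l (σ x)) u‖ ≤ 2 * M / (r/2) := by
      refine norm_fderiv_le_of_ball (by linarith) hM0.le (fun x hx => ?_) fun x hx => ?_
      · exact l.differentiableAt.comp x (H x (hsub hx)).1
      · refine (l.le_opNorm _).trans ?_
        have := (H x (hsub hx)).2
        nlinarith [norm_nonneg l, norm_nonneg (σ x)]
    have h3 := (fderiv ℂ (fun x => l (σ x)) u).le_opNorm u
    rw [h1, hl2] at h3
    rw [RCLike.norm_ofReal, abs_of_nonneg (norm_nonneg _)] at h3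
    exact h3.trans (mul_le_mul_of_nonneg_right h2 (norm_nonneg _))
  refine squeeze_zero_norm' (a := fun u => 2 * M / (r/2) * ‖u‖)
    (Metric.eventually_nhds_iff_ball.2 ⟨r/2, by linarith, key⟩) ?_
  have : Continuous fun u : E => 2 * M / (r/2) * ‖u‖ := by fun_prop
  simpa using this.tendsto 0

/-- The Euler identity for monomials. -/
lemma mono_euler {n : ℕ} (α : Fin n → ℕ) (u : Fin n → ℂ) :
    fderiv ℂ (mono α) u u = ((∑ i, α i : ℕ) : ℂ) * mono α u := by
  have h1 : HasDerivAt (fun t : ℂ => mono α (t • u)) (fderiv ℂ (mono α) u u) 1 := by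
    have h := ((differentiable_mono α) ((1:ℂ) • u)).hasFDerivAt.comp_hasDerivAt (1:ℂ)
      ((hasDerivAt_id (1:ℂ)).smul_const u)
    simpa [Function.comp_def] using! h
  have h2 : (fun t : ℂ => mono α (t • u)) = fun t => t ^ (∑ i, α i) * mono α u := by
    funext t
    simp [mono, mul_pow, Finset.prod_mul_distrib, Finset.prod_pow_eq_pow_sum]
  rw [h2] at h1
  have h3 := ((hasDerivAt_pow (∑ i, α i) (1:ℂ)).mul_const (mono α u))
  simpa using h1.unique h3

/-- The logarithmic derivative of a monomial with a unit along the Euler field tends to the degree of the monomial, which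
is positive when the function vanishes at the origin. -/
lemma IsMon.euler {n : ℕ} {g : (Fin n → ℂ) → ℂ} (hg : IsMon g) (h0 : g 0 = 0) :
    ∃ A : ℕ, 1 ≤ A ∧ ∀ δ > 0, ∀ᶠ u in 𝓝 0, ‖fderiv ℂ g u u - A * g u‖ ≤ δ * ‖g u‖ := by
  obtain ⟨α, ε, h1, h2, h3⟩ := hg
  refine ⟨∑ i, α i, ?_, fun δ hδ => ?_⟩
  · by_contra! hlt
    have hα : α = 0 := by
      funext i
      have := Finset.sum_eq_zero_iff.1 (Nat.lt_one_iff.1 hlt) i (Finset.mem_univ i)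
      simpa using this
    have := h3.self_of_nhds
    rw [h0, hα, mono_zero, one_mul] at this
    exact h2 this.symm
  · have hlim : Tendsto (fun u => ‖fderiv ℂ ε u u‖) (𝓝 0) (𝓝 0) := by simpa using h1.tendsto_euler.norm
    have hlim2 : Tendsto (fun u => δ * ‖ε u‖) (𝓝 0) (𝓝 (δ * ‖ε 0‖)) :=
      (h1.continuousAt.norm.tendsto).const_mul δ
    filter_upwards [h3.eventually_nhds, h1, hlim.eventually_lt hlim2 (by positivity)] with u a b c
    have e : fderiv ℂ g u = mono α u • fderiv ℂ ε u + ε u • fderiv ℂ (mono α) u := by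
      rw [Filter.EventuallyEq.fderiv_eq a]
      exact fderiv_mul ((differentiable_mono α) u) b
    rw [e, a.self_of_nhds]
    have : (mono α u • fderiv ℂ ε u + ε u • fderiv ℂ (mono α) u) u - (∑ i, α i : ℕ) * (mono α u * ε u)
        = mono α u * fderiv ℂ ε u u := by
      simp only [add_apply, smul_apply, mono_euler, smul_eq_mul]
      ring
    rw [this, norm_mul, norm_mul]
    nlinarith [norm_nonneg (mono α u)]

/-- Near a zero `p` of `f`, the function is small compared with its derivative. -/
theorem HolAt.le_norm_fderiv [FiniteDimensional ℂ E] {f : E → ℂ} {p : E} (hf : HolAt f p) (hp : f p = 0)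
    (hf0 : ¬ ∀ᶠ z in 𝓝 p, f z = 0) (M : ℝ) : ∀ᶠ z in 𝓝 p, M * ‖f z‖ ≤ ‖fderiv ℂ f z‖ := by
  -- Uniformize `f` along an ultrafilter of points where the estimate fails. The image `w` of the Euler field tends to zero
  -- while the derivative of `f` along `w` is about `A * f`, `A ≥ 1`.
  by_contra hcon
  have hne : NeBot (𝓝 p ⊓ 𝓟 {z | ¬ (M * ‖f z‖ ≤ ‖fderiv ℂ f z‖)}) := by
    exact frequently_iff_neBot.1 (not_eventually.1 hcon)
  set 𝓤 := Ultrafilter.of (𝓝 p ⊓ 𝓟 {z | ¬ (M * ‖f z‖ ≤ ‖fderiv ℂ f z‖)}) with h𝓤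
  have hle := Ultrafilter.of_le (𝓝 p ⊓ 𝓟 {z | ¬ (M * ‖f z‖ ≤ ‖fderiv ℂ f z‖)})
  have hz : Tendsto (fun z : E => z) 𝓤 (𝓝 p) := hle.trans inf_le_left
  have hbad : ∀ᶠ z in (𝓤 : Filter E), ¬ (M * ‖f z‖ ≤ ‖fderiv ℂ f z‖) :=
    le_principal_iff.1 (hle.trans inf_le_right)
  obtain ⟨σ, u, hl, hm⟩ := exists_unif hf hf0 hz
  obtain ⟨A, hA, hE⟩ := hm.euler (by simp only [hl.2.1]; exact hp)
  have hw := hl.1.tendsto_euler.norm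
  have hM : 0 < |M| + 1 := by positivity
  obtain ⟨z, h1, h2, h3, h4, h5, h6, h7⟩ := (hbad.and (hl.2.2.2.and ((hl.2.2.1.eventually (hE (1/4) (by norm_num))).and
    ((hl.2.2.1.eventually (hw.eventually_lt_const (u := 1 / (2 * (|M|+1))) (by rw [norm_zero]; positivity))).and
    ((hl.2.2.1.eventually hl.1).and ((hz.eventually hf).and
      (hl.2.2.1.eventually (hl.tendsto.eventually hf)))))))).exists
  have hd : fderiv ℂ (fun v => f (σ v)) (u z) (u z) = fderiv ℂ f z (fderiv ℂ σ (u z) (u z)) := by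
    have := (h7.hasFDerivAt.comp (u z) h5.hasFDerivAt).fderiv
    change fderiv ℂ (f ∘ σ) (u z) (u z) = _
    rw [this, h2]; rfl
  rw [hd, h2] at h3
  have h8 := (fderiv ℂ f z).le_opNorm (fderiv ℂ σ (u z) (u z))
  push Not at h1
  have h9 : (A : ℝ) * ‖f z‖ ≤ ‖fderiv ℂ f z (fderiv ℂ σ (u z) (u z))‖ + 1/4 * ‖f z‖ := by
    have h10 : ‖(A : ℂ) * f z‖ = (A : ℝ) * ‖f z‖ := by simp
    rw [← h10]
    have := norm_sub_norm_le ((A : ℂ) * f z) (fderiv ℂ f z (fderiv ℂ σ (u z) (u z)))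
    rw [norm_sub_rev] at this
    linarith
  have hA' : (1:ℝ) ≤ A := by exact_mod_cast hA
  have hfp : 0 < ‖f z‖ := by
    rcases (norm_nonneg (f z)).lt_or_eq with h | h
    · exact h
    · rw [← h, mul_zero] at h1
      exact absurd h1 (not_lt.2 (norm_nonneg _))
  have h11 : ‖fderiv ℂ f z‖ ≤ (|M|+1) * ‖f z‖ := by nlinarith [le_abs_self M]
  have h12 : ‖fderiv ℂ f z (fderiv ℂ σ (u z) (u z))‖ ≤ (|M|+1) * ‖f z‖ * (1 / (2 * (|M|+1))) :=
    h8.trans (mul_le_mul h11 h4.le (norm_nonneg _) (by positivity))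
  have h13 : (|M|+1) * ‖f z‖ * (1 / (2 * (|M|+1))) = ‖f z‖ / 2 := by field_simp
  nlinarith

end Estimates

/-! ### Radial vectors and transversality -/

section Milnor
variable {E : Type*} [NormedAddCommGroup E] [InnerProductSpace ℂ E]

/-- There is a vector `w` that is close to a positive multiple of `z` and along which the logarithmic
derivative of `f` is close to a positive number. -/
def RadialGood (f : E → ℂ) (C : ℝ) (z : E) : Prop :=
  ∃ (w : E) (A B : ℝ), 1 ≤ A ∧ 1 ≤ B ∧ B ≤ C ∧ ‖w - (B : ℂ) • z‖ ≤ 1/4 * ‖z‖ ∧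
    ‖fderiv ℂ f z w - A * f z‖ ≤ 1/4 * ‖f z‖

/-- The vectors `w` come from the Euler field of a chart in which both `f` and the exceptional divisor
of the blow-up of the origin are monomial. -/
theorem exists_radialGood [FiniteDimensional ℂ E] {f : E → ℂ} (hf : HolAt f 0) (hf0 : f 0 = 0) :
    ∃ C, ∀ᶠ z in 𝓝 (0 : E), z ≠ 0 → f z ≠ 0 → RadialGood f C z := by
  -- uniformize along a sequence of points `z k → 0` at which no suitable `w` exists with `B ≤ k`
  by_contra! hcon
  have hseq : ∀ k : ℕ, ∃ z : E, z ∈ ball (0 : E) (1 / ((k : ℝ) + 1)) ∧ z ≠ 0 ∧ f z ≠ 0 ∧ ¬ RadialGood f k z := by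
    intro k
    obtain ⟨z, h1, h2⟩ := ((hcon k).and_eventually (ball_mem_nhds (0 : E) (Nat.one_div_pos_of_nat (α := ℝ) (n := k)))).exists
    exact ⟨z, h2, h1⟩
  choose z hzb hz0 hfz hbad using hseq
  set 𝓤 : Ultrafilter ℕ := hyperfilter ℕ with h𝓤
  have hle : (𝓤 : Filter ℕ) ≤ atTop := Nat.hyperfilter_le_atTop
  have hz : Tendsto z 𝓤 (𝓝 0) := by
    refine Tendsto.mono_left ?_ hle
    rw [tendsto_zero_iff_norm_tendsto_zero]
    refine squeeze_zero (fun _ => norm_nonneg _) (fun k => ?_) tendsto_one_div_add_atTop_nhds_zero_nat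
    exact (mem_ball_zero_iff.1 (hzb k)).le
  have hρ : ∀ k, 0 < ‖z k‖ := fun k => norm_pos_iff.2 (hz0 k)
  obtain ⟨d₀, hd₀⟩ := Ultrafilter.exists_tendsto_of_bounded (𝓤 := 𝓤) (z := fun k => ((‖z k‖ : ℂ))⁻¹ • z k) (C := 1)
    (Eventually.of_forall fun k => by
      rw [norm_smul]; simp [hz0 k])
  -- the chart `(d, s) ↦ s (d₀ + d)` of the blow-up of the origin; the lift of `z k` has direction `d₀ + d = z k / ‖z k‖`
  -- and `s = ‖z k‖`
  set τ : E × ℂ → E := fun q => q.2 • (d₀ + q.1) with hτ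
  have hτd : Differentiable ℂ τ := by fun_prop
  set z' : ℕ → E × ℂ := fun k => (((‖z k‖ : ℂ))⁻¹ • z k - d₀, (‖z k‖ : ℂ)) with hz'
  have hz't : Tendsto z' 𝓤 (𝓝 0) := by
    refine Tendsto.prodMk_nhds (by simpa using hd₀.sub_const d₀) ?_
    have : Tendsto (fun k => ((‖z k‖ : ℝ) : ℂ)) 𝓤 (𝓝 ((0 : ℝ) : ℂ)) :=
      (Complex.continuous_ofReal.tendsto 0).comp (by simpa using hz.norm)
    simpa using this
  have hτz : ∀ k, τ (z' k) = z k := by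
    intro k
    have : (‖z k‖ : ℂ) ≠ 0 := by exact_mod_cast (hρ k).ne'
    simp only [hτ, hz', add_sub_cancel]
    exact smul_inv_smul₀ this _
  have hτ0 : τ 0 = 0 := by simp [hτ]
  have hφ : HolAt (fun q : E × ℂ => q.2 * f (τ q)) 0 :=
    (holAt_snd _).mul (hf.comp_of_eq (hτd.holAt _) hτ0)
  have hφ0 : ¬ ∀ᶠ q in 𝓝 (0 : E × ℂ), q.2 * f (τ q) = 0 := by
    intro h
    obtain ⟨k, hk⟩ := (hz't.eventually h).exists
    rw [hτz] at hk
    rcases mul_eq_zero.1 hk with h1 | h1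
    · simp [hz', hz0 k] at h1
    · exact hfz k h1
  -- Uniformizing the product makes both `s` and `f` monomial. Along the Euler field `s` is multiplied by about `B`, while the
  -- direction hardly changes, so that `z = s (d₀ + d)` moves by about `B z`.
  obtain ⟨σ, u, hl, hm⟩ := exists_unif hφ hφ0 hz't
  have hs : HolAt (fun v => (σ v).2) 0 := (holAt_snd (σ 0)).comp hl.1
  have hd : HolAt (fun v => d₀ + (σ v).1) 0 := (holAt_const d₀ 0).add ((holAt_fst (σ 0)).comp hl.1)
  have hσ0 : τ (σ 0) = 0 := by rw [hl.2.1, hτ0]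
  have hT : HolAt (fun v => τ (σ v)) 0 := (hτd.holAt _).comp hl.1
  have hF : HolAt (fun v => f (τ (σ v))) 0 := hf.comp_of_eq hT hσ0
  have hms : IsMon (fun v => (σ v).2) := IsMon.of_mul hs hF hm
  have hmF : IsMon (fun v => f (τ (σ v))) := IsMon.of_mul hF hs (by simpa only [mul_comm] using hm)
  obtain ⟨B, hB, hBe⟩ := hms.euler (by simp [hl.2.1])
  obtain ⟨A, hA, hAe⟩ := hmF.euler (by simp only [hσ0, hf0])
  have ht := hl.2.2.1
  have hTt : Tendsto (fun v => τ (σ v)) (𝓝 0) (𝓝 0) := by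
    have := hT.continuousAt.tendsto
    rwa [hσ0] at this
  obtain ⟨k, h1, h2, h3, h4, h5, h6, h7, h8⟩ := (hl.2.2.2.and ((ht.eventually (hBe (1/8) (by norm_num))).and
    ((ht.eventually (hAe (1/4) (by norm_num))).and
    ((ht.eventually (hd.tendsto_euler.norm.eventually_lt_const (u := 1/8) (by rw [norm_zero]; norm_num))).and
    ((ht.eventually hs).and ((ht.eventually hd).and
    ((ht.eventually (hTt.eventually hf)).and (hle (eventually_ge_atTop B))))))))).exists
  set v := u k with hv
  set Sv : ℂ := fderiv ℂ (fun v => (σ v).2) v v with hSv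
  set D := fderiv ℂ (fun v => d₀ + (σ v).1) v v with hD
  have hfd : HasFDerivAt (fun v => τ (σ v)) ((σ v).2 • fderiv ℂ (fun v => d₀ + (σ v).1) v +
      (fderiv ℂ (fun v => (σ v).2) v).smulRight (d₀ + (σ v).1)) v :=
    h5.hasFDerivAt.smul h6.hasFDerivAt
  refine hbad k ⟨fderiv ℂ (fun v => τ (σ v)) v v, A, B, by exact_mod_cast hA, by exact_mod_cast hB,
    by exact_mod_cast h8, ?_, ?_⟩
  · have hρk : (‖z k‖ : ℂ) ≠ 0 := by exact_mod_cast (hρ k).ne'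
    have e1 : (σ v).2 = (‖z k‖ : ℂ) := by rw [h1]
    have e2 : d₀ + (σ v).1 = ((‖z k‖ : ℂ))⁻¹ • z k := by rw [h1]; simp [hz']
    have e3 : fderiv ℂ (fun v => τ (σ v)) v v - ((B : ℝ) : ℂ) • z k =
        (‖z k‖ : ℂ) • D + (Sv - B * (‖z k‖ : ℂ)) • ((‖z k‖ : ℂ))⁻¹ • z k := by
      rw [hfd.fderiv]
      simp only [add_apply, smul_apply, ContinuousLinearMap.smulRight_apply, e1, e2, ← hSv, ← hD, sub_smul,
        mul_smul, smul_inv_smul₀ hρk]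
      simp only [Complex.ofReal_natCast]
      abel
    rw [e3]
    rw [e1] at h2
    have hn : ‖(‖z k‖ : ℂ)‖ = ‖z k‖ := by simp
    have hn1 : ‖((‖z k‖ : ℂ))⁻¹ • z k‖ = 1 := by rw [norm_smul]; simp [(hρ k).ne']
    refine (norm_add_le _ _).trans ?_
    rw [norm_smul, norm_smul, hn1, hn, mul_one]
    rw [hn] at h2
    nlinarith [hρ k]
  · have hd' : fderiv ℂ (fun v => f (τ (σ v))) v v = fderiv ℂ f (z k) (fderiv ℂ (fun v => τ (σ v)) v v) := by
      have := (h7.hasFDerivAt.comp v hfd.differentiableAt.hasFDerivAt).fderiv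
      change fderiv ℂ (f ∘ fun v => τ (σ v)) v v = _
      rw [this, h1, hτz]; rfl
    rw [hd', h1, hτz] at h3
    simpa using h3

/-- The linear algebra behind the transversality of the Milnor fibres to the spheres: `G` is the
component of `i h` that is real-orthogonal to `z`. -/
lemma norm_le_of_radial {z h w G : E} {A B C μ : ℝ} (hz : z ≠ 0) (hA : 1 ≤ A) (hB : 1 ≤ B) (hC : B ≤ C)
    (hw : ‖w - (B : ℂ) • z‖ ≤ 1/4 * ‖z‖) (hh : ‖inner ℂ h w - A‖ ≤ 1/4)
    (hG : Complex.I • h = G + (μ : ℂ) • z) : h ≠ 0 ∧ ‖h‖ ≤ (2 * C + 2) * ‖G‖ := by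
  have hρ : 0 < ‖z‖ := norm_pos_iff.2 hz
  set ρ := ‖z‖ with hρd
  set δ₁ : ℂ := inner ℂ z (w - (B:ℂ) • z) with hδ₁
  have hzw : inner ℂ z w = (B : ℂ) * ρ^2 + δ₁ := by
    rw [hδ₁, inner_sub_right, inner_smul_right, inner_self_eq_norm_sq_to_K]
    simp [hρd]
  have hδ₁n : ‖δ₁‖ ≤ 1/4 * ρ^2 := by
    refine (norm_inner_le_norm _ _).trans ?_
    rw [← hρd]; nlinarith
  set y : ℂ := inner ℂ G w with hy
  have hyn : ‖y‖ ≤ ‖G‖ * ((C + 1/4) * ρ) := by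
    refine (norm_inner_le_norm _ _).trans (mul_le_mul_of_nonneg_left ?_ (norm_nonneg _))
    have h1 : ‖(B:ℂ) • z‖ = B * ρ := by
      rw [norm_smul, Complex.norm_real, Real.norm_of_nonneg (by linarith)]
    have h2 := norm_add_le (w - (B:ℂ) • z) ((B:ℂ) • z)
    rw [sub_add_cancel, h1] at h2
    nlinarith
  -- `⟨h, w⟩ = i ⟨G, w⟩ + i μ ⟨z, w⟩`
  have hinner : inner ℂ h w = Complex.I * y + Complex.I * μ * (B * ρ^2 + δ₁) := by
    have h1 : inner ℂ (Complex.I • h) w = y + μ * (B * ρ^2 + δ₁) := by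
      rw [hG, inner_add_left, inner_smul_left, hzw, Complex.conj_ofReal]
    rw [inner_smul_left, Complex.conj_I] at h1
    calc inner ℂ h w = Complex.I * (-Complex.I * inner ℂ h w) := by
          rw [← mul_assoc, mul_neg, Complex.I_mul_I]; simp
      _ = _ := by rw [h1]; ring
  have hre : |(inner ℂ h w - (A:ℂ)).re| ≤ 1/4 := (Complex.abs_re_le_norm _).trans hh
  have him : |(inner ℂ h w - (A:ℂ)).im| ≤ 1/4 := (Complex.abs_im_le_norm _).trans hh
  have e1 : (inner ℂ h w - (A:ℂ)).re = -y.im - μ * δ₁.im - A := by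
    rw [hinner, ← Complex.ofReal_pow]; simp [-Complex.ofReal_pow]; ring
  have e2 : (inner ℂ h w - (A:ℂ)).im = y.re + μ * (B * ρ^2 + δ₁.re) := by
    rw [hinner, ← Complex.ofReal_pow]; simp [-Complex.ofReal_pow]
  rw [e1] at hre
  rw [e2] at him
  have hy1 := (Complex.abs_re_le_norm y).trans hyn
  have hy2 := (Complex.abs_im_le_norm y).trans hyn
  have hd1 := (Complex.abs_re_le_norm δ₁).trans hδ₁n
  have hd2 := (Complex.abs_im_le_norm δ₁).trans hδ₁n
  set Y := ‖G‖ * ((C + 1/4) * ρ) with hY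
  set M := |μ| * ρ^2 with hM
  have hM0 : 0 ≤ M := by positivity
  have i1 : 3/4 * M ≤ 1/4 + Y := by
    have h1 : |μ * (B * ρ^2 + δ₁.re)| ≤ 1/4 + Y := by
      rw [abs_le] at him hy1 ⊢
      constructor <;> linarith
    rw [abs_mul] at h1
    have h2 : 3/4 * ρ^2 ≤ |B * ρ^2 + δ₁.re| := by
      refine le_trans ?_ (le_abs_self _)
      nlinarith [(abs_le.1 hd1).1, sq_nonneg ρ]
    have := mul_le_mul_of_nonneg_left h2 (abs_nonneg μ)
    rw [hM]; linarith
  have i2 : 3/4 ≤ Y + 1/4 * M := by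
    have h1 : |μ * δ₁.im| ≤ 1/4 * M := by
      rw [abs_mul, hM]
      have := mul_le_mul_of_nonneg_left hd2 (abs_nonneg μ)
      linarith
    rw [abs_le] at hre h1 hy2
    linarith [hre.1, h1.1, hy2.1]
  have i3 : M ≤ 2 * Y := by linarith
  constructor
  · rintro rfl
    rw [inner_zero_left, zero_sub, norm_neg, Complex.norm_real, Real.norm_of_nonneg (by linarith)] at hh
    linarith
  · have h1 : ‖h‖ ≤ ‖G‖ + |μ| * ρ := by
      have : ‖Complex.I • h‖ = ‖h‖ := by rw [norm_smul]; simp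
      rw [← this, hG]
      refine (norm_add_le _ _).trans ?_
      rw [norm_smul, Complex.norm_real, Real.norm_eq_abs]
    have h2 : |μ| * ρ ≤ 2 * (‖G‖ * (C + 1/4)) := by
      refine le_of_mul_le_mul_right ?_ hρ
      calc |μ| * ρ * ρ = M := by rw [hM]; ring
        _ ≤ 2 * Y := i3
        _ = _ := by rw [hY]; ring
    nlinarith [norm_nonneg G]

end Milnor

/-! ### The Milnor vector field -/

section Field
variable {E : Type*} [NormedAddCommGroup E] [InnerProductSpace ℂ E] [FiniteDimensional ℂ E]

/-- The complex gradient of `f` divided by the conjugate of `f`, so that `⟨logGrad f z, w⟩` is the logarithmic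
derivative of `f` at `z` along `w`. -/
noncomputable def logGrad (f : E → ℂ) (z : E) : E :=
  (starRingEnd ℂ (f z))⁻¹ • (InnerProductSpace.toDual ℂ E).symm (fderiv ℂ f z)

/-- The component of `i · logGrad f z` that is real-orthogonal to `z`. -/
noncomputable def sphereGrad (f : E → ℂ) (z : E) : E :=
  Complex.I • logGrad f z - (((inner ℂ (Complex.I • logGrad f z) z).re / ‖z‖ ^ 2 : ℝ) : ℂ) • z

/-- The Milnor vector field. It is tangent to the spheres around the origin and the argument of `f` increases
with speed one along it; it vanishes where `f` does, because `logGrad f` takes the value zero there. -/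
noncomputable def milnorField (f : E → ℂ) (z : E) : E :=
  (((‖sphereGrad f z‖ ^ 2)⁻¹ : ℝ) : ℂ) • sphereGrad f z

lemma inner_logGrad (f : E → ℂ) (z w : E) : inner ℂ (logGrad f z) w = (f z)⁻¹ * fderiv ℂ f z w := by
  rw [logGrad, inner_smul_left, InnerProductSpace.toDual_symm_apply]
  simp

lemma norm_logGrad (f : E → ℂ) (z : E) : ‖logGrad f z‖ = ‖f z‖⁻¹ * ‖fderiv ℂ f z‖ := by
  rw [logGrad, norm_smul, LinearIsometryEquiv.norm_map]
  simp

lemma re_inner_sphereGrad {f : E → ℂ} {z : E} (hz : z ≠ 0) : (inner ℂ z (sphereGrad f z)).re = 0 := by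
  have hn : ‖z‖ ^ 2 ≠ 0 := pow_ne_zero _ (norm_ne_zero_iff.2 hz)
  rw [sphereGrad, inner_sub_right, inner_smul_right z z, inner_self_eq_norm_sq_to_K, Complex.sub_re]
  have h1 : (inner ℂ z (Complex.I • logGrad f z)).re = (inner ℂ (Complex.I • logGrad f z) z).re := by
    rw [← inner_conj_symm, Complex.conj_re]
  rw [h1]
  have h2 : ((((inner ℂ (Complex.I • logGrad f z) z).re / ‖z‖ ^ 2 : ℝ) : ℂ) * (RCLike.ofReal ‖z‖ : ℂ) ^ 2) =
      (((inner ℂ (Complex.I • logGrad f z) z).re : ℝ) : ℂ) := by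
    rw [show (RCLike.ofReal ‖z‖ : ℂ) = ((‖z‖ : ℝ) : ℂ) from rfl, ← Complex.ofReal_pow, ← Complex.ofReal_mul,
      div_mul_cancel₀ _ hn]
  rw [h2, Complex.ofReal_re, sub_self]

lemma im_inner_sphereGrad {f : E → ℂ} {z : E} (hz : z ≠ 0) :
    (inner ℂ (logGrad f z) (sphereGrad f z)).im = ‖sphereGrad f z‖ ^ 2 := by
  set μ : ℝ := (inner ℂ (Complex.I • logGrad f z) z).re / ‖z‖ ^ 2 with hμ
  have h1 : Complex.I • logGrad f z = sphereGrad f z + (μ : ℂ) • z := by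
    rw [sphereGrad, ← hμ]; abel
  have h2 : inner ℂ (Complex.I • logGrad f z) (sphereGrad f z) =
      (‖sphereGrad f z‖ ^ 2 : ℝ) + μ * inner ℂ z (sphereGrad f z) := by
    rw [h1, inner_add_left, inner_smul_left, Complex.conj_ofReal, inner_self_eq_norm_sq_to_K]
    simp
  rw [inner_smul_left] at h2
  have h3 := congrArg Complex.re h2
  rw [Complex.add_re, Complex.ofReal_re, Complex.re_ofReal_mul, re_inner_sphereGrad hz] at h3
  simpa using h3

lemma contDiffAt_logGrad {f : E → ℂ} {z : E} (hf : HolAt f z) (h0 : f z ≠ 0) :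
    ContDiffAt ℝ 1 (logGrad f) z := by
  have h1 : ContDiffAt ℂ 1 (fderiv ℂ f) z := by
    obtain ⟨ρ, hρ, H⟩ := Metric.eventually_nhds_iff_ball.1 hf.eventually
    have h : ContDiffOn ℂ 1 (fderiv ℂ f) (ball z ρ) :=
      contDiffOn_clm_apply.2 fun y x hx => ((H x hx).fderiv_apply y).contDiffAt_one.contDiffWithinAt
    exact h.contDiffAt (ball_mem_nhds z hρ)
  have h2 : ContDiffAt ℝ 1 (fderiv ℂ f) z := h1.restrict_scalars ℝ
  let L : (E →L[ℂ] ℂ) →L[ℝ] E :=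
    AddMonoidHom.toRealLinearMap ((InnerProductSpace.toDual ℂ E).symm.toLinearEquiv.toAddEquiv.toAddMonoidHom)
      (InnerProductSpace.toDual ℂ E).symm.continuous
  have h3 : ContDiffAt ℝ 1 (fun x => L (fderiv ℂ f x)) z := L.contDiff.contDiffAt.comp z h2
  have h4 : ContDiffAt ℝ 1 (fun x => starRingEnd ℂ (f x)) z :=
    Complex.conjCLE.contDiff.contDiffAt.comp z (hf.contDiffAt_one.restrict_scalars ℝ)
  exact (h4.inv (by simpa using h0)).smul h3

lemma contDiffAt_sphereGrad {f : E → ℂ} {z : E} (hf : HolAt f z) (h0 : f z ≠ 0) (hz : z ≠ 0) :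
    ContDiffAt ℝ 1 (sphereGrad f) z := by
  have h1 : ContDiffAt ℝ 1 (fun x => Complex.I • logGrad f x) z := (contDiffAt_logGrad hf h0).const_smul _
  have h2 : ContDiffAt ℝ 1 (fun x => (inner ℂ (Complex.I • logGrad f x) x).re) z :=
    Complex.reCLM.contDiff.contDiffAt.comp z (h1.inner ℂ contDiffAt_id)
  have h3 : ContDiffAt ℝ 1 (fun x : E => ‖x‖ ^ 2) z := (contDiff_norm_sq ℂ).contDiffAt
  have h4 := h2.div h3 (pow_ne_zero _ (norm_ne_zero_iff.2 hz))
  exact h1.sub ((Complex.ofRealCLM.contDiff.contDiffAt.comp z h4).smul contDiffAt_id)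

lemma contDiffAt_milnorField {f : E → ℂ} {z : E} (hf : HolAt f z) (h0 : f z ≠ 0) (hz : z ≠ 0)
    (hG : sphereGrad f z ≠ 0) : ContDiffAt ℝ 1 (milnorField f) z := by
  have h1 := contDiffAt_sphereGrad hf h0 hz
  have h2 : ContDiffAt ℝ 1 (fun x => ‖sphereGrad f x‖ ^ 2) z := h1.norm_sq ℂ
  exact (Complex.ofRealCLM.contDiff.contDiffAt.comp z
    (h2.inv (pow_ne_zero _ (norm_ne_zero_iff.2 hG)))).smul h1

/-- The Milnor vector field in a small ball. The bound `‖logGrad f z‖ ≤ K ‖sphereGrad f z‖`, which follows from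
`exists_radialGood`, shows that it is defined off the zero set of `f` and changes `log |f|` with speed at most `K`; as
`‖logGrad f z‖` tends to infinity at the zeros of `f`, the field tends to zero there. -/
theorem exists_field {f : E → ℂ} (hf : HolAt f 0) (h0 : f 0 = 0) (hf0 : ¬ ∀ᶠ z in 𝓝 (0 : E), f z = 0) :
    ∃ r > 0, ∃ K : ℝ, ∃ v : E → E, (∀ z ∈ ball (0 : E) r, HolAt f z) ∧ ∀ z ∈ ball (0 : E) r, z ≠ 0 →
      (f z ≠ 0 → ContDiffAt ℝ 1 v z ∧ (inner ℂ z (v z)).re = 0 ∧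
        ∃ ρ : ℝ, |ρ| ≤ K ∧ fderiv ℂ f z (v z) = f z * (Complex.I + ρ)) ∧
      (f z = 0 → v z = 0 ∧ ContinuousAt v z) := by
  obtain ⟨C, hC⟩ := exists_radialGood hf h0
  obtain ⟨r, hr, H⟩ := Metric.eventually_nhds_iff_ball.1 (hf.eventually.and hC)
  set K := 2 * max C 1 + 2 with hK
  have hKpos : 0 < K := by have := le_max_right C 1; linarith
  have key : ∀ z ∈ ball (0 : E) r, z ≠ 0 → f z ≠ 0 → logGrad f z ≠ 0 ∧ ‖logGrad f z‖ ≤ K * ‖sphereGrad f z‖ := by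
    intro z hz hz0 hfz
    obtain ⟨w, A, B, hA, hB, hBC, hw, hd⟩ := (H z hz).2 hz0 hfz
    refine norm_le_of_radial hz0 hA hB (hBC.trans (le_max_left _ _)) hw ?_
      (μ := (inner ℂ (Complex.I • logGrad f z) z).re / ‖z‖ ^ 2) (by rw [sphereGrad]; abel)
    have hpos : 0 < ‖f z‖ := norm_pos_iff.2 hfz
    rw [inner_logGrad, show (f z)⁻¹ * fderiv ℂ f z w - (A : ℂ) = (f z)⁻¹ * (fderiv ℂ f z w - A * f z) by
      field_simp, norm_mul, norm_inv]
    calc ‖f z‖⁻¹ * ‖fderiv ℂ f z w - A * f z‖ ≤ ‖f z‖⁻¹ * (1/4 * ‖f z‖) := by gcongr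
      _ = 1/4 := by field_simp
  have hGne : ∀ z ∈ ball (0 : E) r, z ≠ 0 → f z ≠ 0 → 0 < ‖sphereGrad f z‖ := by
    intro z hz hz0 hfz
    obtain ⟨h1, h2⟩ := key z hz hz0 hfz
    have := norm_pos_iff.2 h1
    by_contra! hcon
    nlinarith
  have hv0 : ∀ z, f z = 0 → milnorField f z = 0 := fun z hz => by
    simp [milnorField, sphereGrad, logGrad, hz]
  have hvn : ∀ z, ‖milnorField f z‖ = ‖sphereGrad f z‖⁻¹ := by
    intro z
    rw [milnorField, norm_smul, Complex.norm_real, Real.norm_of_nonneg (by positivity)]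
    rcases eq_or_ne ‖sphereGrad f z‖ 0 with h | h
    · simp [h]
    · field_simp
  refine ⟨r, hr, K, milnorField f, fun z hz => (H z hz).1, fun z hz hz0 => ⟨fun hfz => ⟨?_, ?_, ?_⟩, fun hfz => ⟨hv0 z hfz, ?_⟩⟩⟩
  · exact contDiffAt_milnorField (H z hz).1 hfz hz0 (norm_pos_iff.1 (hGne z hz hz0 hfz))
  · rw [milnorField, inner_smul_right, Complex.re_ofReal_mul, re_inner_sphereGrad hz0, mul_zero]
  · have hG := hGne z hz hz0 hfz
    set G := sphereGrad f z with hGd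
    refine ⟨(inner ℂ (logGrad f z) G).re / ‖G‖^2, ?_, ?_⟩
    · rw [abs_div, abs_of_nonneg (sq_nonneg ‖G‖), div_le_iff₀ (by positivity)]
      refine ((Complex.abs_re_le_norm _).trans (norm_inner_le_norm _ _)).trans ?_
      nlinarith [(key z hz hz0 hfz).2]
    · have h1 : fderiv ℂ f z (milnorField f z) = f z * inner ℂ (logGrad f z) (milnorField f z) := by
        rw [inner_logGrad, mul_inv_cancel_left₀ hfz]
      rw [h1, milnorField, inner_smul_right, ← hGd]
      congr 1
      have him := im_inner_sphereGrad (f := f) hz0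
      rw [← hGd] at him
      apply Complex.ext
      · rw [Complex.re_ofReal_mul, Complex.add_re, Complex.I_re, Complex.ofReal_re]; ring
      · rw [Complex.im_ofReal_mul, him, Complex.add_im, Complex.I_im, Complex.ofReal_im]
        field_simp
        ring
  · -- near a zero of `f` the logarithmic gradient is large, hence so is `sphereGrad f`
    have hne : ¬ ∀ᶠ x in 𝓝 z, f x = 0 := by
      intro h
      have := eqOn_zero_of_eventuallyEq isOpen_ball (convex_ball (0 : E) r)
        (fun x hx => (H x hx).1.differentiableAt) hz h
      exact hf0 (Metric.eventually_nhds_iff_ball.2 ⟨r, hr, this⟩)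
    rw [ContinuousAt, hv0 z hfz, Metric.tendsto_nhds]
    intro η hη
    filter_upwards [(H z hz).1.le_norm_fderiv hfz hne (2 * K / η), isOpen_ball.mem_nhds hz,
      isOpen_ne.mem_nhds hz0] with x h1 h2 h3
    rw [dist_zero_right]
    by_cases hfx : f x = 0
    · rwa [hv0 x hfx, norm_zero]
    · have hpos : 0 < ‖f x‖ := norm_pos_iff.2 hfx
      have h4 : 2 * K / η ≤ ‖logGrad f x‖ := by
        rw [norm_logGrad, inv_mul_eq_div, le_div_iff₀ hpos]; exact h1
      have h5 := (key x h2 h3 hfx).2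
      have h6 := hGne x h2 h3 hfx
      rw [hvn, inv_lt_comm₀ h6 hη]
      have h7 : 2 / η ≤ ‖sphereGrad f x‖ := by
        have : K * (2 / η) ≤ K * ‖sphereGrad f x‖ := by
          calc K * (2 / η) = 2 * K / η := by ring
            _ ≤ _ := h4.trans h5
        exact le_of_mul_le_mul_left this hKpos
      have : η⁻¹ < 2 / η := by
        rw [div_eq_mul_inv]; have := inv_pos.2 hη; linarith
      linarith

end Field

/-! ### Trajectories -/

section Flow

lemma hasDerivWithinAt_Ici_of_Icc {G : Type*} [NormedAddCommGroup G] [NormedSpace ℝ G] {F : ℝ → G} {d : G} {t : ℝ}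
    (ht : t ∈ Ico (0 : ℝ) 1) (h : HasDerivWithinAt F d (Icc 0 1) t) : HasDerivWithinAt F d (Ici t) t :=
  h.mono_of_mem_nhdsWithin (Icc_mem_nhdsGE_of_mem ht)

/-- Time reversal on the unit interval. -/
lemma hasDerivWithinAt_reverse {G : Type*} [NormedAddCommGroup G] [NormedSpace ℝ G] {F F' : ℝ → G}
    (h : ∀ t ∈ Icc (0 : ℝ) 1, HasDerivWithinAt F (F' t) (Icc 0 1) t) {t : ℝ} (ht : t ∈ Icc (0 : ℝ) 1) :
    HasDerivWithinAt (fun u => F (1 - u)) (-F' (1 - t)) (Icc 0 1) t := by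
  have hm : MapsTo (fun u : ℝ => 1 - u) (Icc 0 1) (Icc 0 1) := fun u hu => ⟨by linarith [hu.2], by linarith [hu.1]⟩
  have h1 : HasDerivWithinAt (fun u : ℝ => 1 - u) (-1) (Icc 0 1) t := by
    simpa using (hasDerivWithinAt_id t (Icc 0 1)).const_sub 1
  have := HasDerivWithinAt.scomp t (h (1 - t) (hm ht)) h1 hm
  simpa using! this

lemma gronwall_upper {G : Type*} [NormedAddCommGroup G] [NormedSpace ℝ G] {F F' : ℝ → G} {C : ℝ}
    (h : ∀ t ∈ Icc (0 : ℝ) 1, HasDerivWithinAt F (F' t) (Icc 0 1) t)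
    (hb : ∀ t ∈ Icc (0 : ℝ) 1, ‖F' t‖ ≤ C * ‖F t‖) {t : ℝ} (ht : t ∈ Icc (0 : ℝ) 1) :
    ‖F t‖ ≤ ‖F 0‖ * Real.exp (C * t) := by
  have := norm_le_gronwallBound_of_norm_deriv_right_le (f := F) (f' := F') (δ := ‖F 0‖) (K := C) (ε := 0)
    (a := 0) (b := 1)
    (fun t ht => (h t ht).continuousWithinAt)
    (fun t ht => hasDerivWithinAt_Ici_of_Icc ht (h t ⟨ht.1, ht.2.le⟩)) le_rfl
    (fun t ht => by simpa using hb t ⟨ht.1, ht.2.le⟩) t ht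
  simpa [gronwallBound_ε0] using this

/-- A quantity whose derivative is bounded by a multiple of itself grows and decays at most exponentially. -/
lemma gronwall_both {G : Type*} [NormedAddCommGroup G] [NormedSpace ℝ G] {F F' : ℝ → G} {C : ℝ} (hC : 0 ≤ C)
    (h : ∀ t ∈ Icc (0 : ℝ) 1, HasDerivWithinAt F (F' t) (Icc 0 1) t)
    (hb : ∀ t ∈ Icc (0 : ℝ) 1, ‖F' t‖ ≤ C * ‖F t‖) {t : ℝ} (ht : t ∈ Icc (0 : ℝ) 1) :
    ‖F t‖ ≤ ‖F 0‖ * Real.exp C ∧ ‖F 0‖ ≤ ‖F t‖ * Real.exp C := by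
  have hexp : Real.exp (C * t) ≤ Real.exp C := Real.exp_le_exp.2 (by nlinarith [ht.1, ht.2])
  refine ⟨(gronwall_upper h hb ht).trans (by gcongr), ?_⟩
  -- reverse the time on `[0, t]`
  have hm : MapsTo (fun u : ℝ => t - t * u) (Icc 0 1) (Icc 0 1) := fun u hu =>
    ⟨by nlinarith [hu.1, hu.2, ht.1], by nlinarith [hu.1, hu.2, ht.1, ht.2]⟩
  have h1 : ∀ u ∈ Icc (0 : ℝ) 1,
      HasDerivWithinAt (fun u => F (t - t * u)) ((-t) • F' (t - t * u)) (Icc 0 1) u := by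
    intro u hu
    have h2 : HasDerivWithinAt (fun u : ℝ => t - t * u) (-t) (Icc 0 1) u := by
      simpa using ((hasDerivWithinAt_id u (Icc 0 1)).const_mul t).const_sub t
    exact HasDerivWithinAt.scomp u (h _ (hm hu)) h2 hm
  have h3 := gronwall_upper (C := C) h1 (fun u hu => by
    rw [norm_smul, norm_neg, Real.norm_of_nonneg ht.1]
    have := hb _ (hm hu)
    nlinarith [norm_nonneg (F' (t - t * u)), ht.2]) (right_mem_Icc.2 zero_le_one)
  simpa using h3

lemma mem_ball_of_norm {E : Type*} [NormedAddCommGroup E] {ε r : ℝ} {z : E} (hε : ε < r) (h : ‖z‖ = ε) : z ∈ ball (0 : E) r := by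
  rw [mem_ball_zero_iff, h]; exact hε

lemma ne_zero_of_norm {E : Type*} [NormedAddCommGroup E] {ε : ℝ} {z : E} (hε : 0 < ε) (h : ‖z‖ = ε) : z ≠ 0 := by
  rw [← norm_pos_iff, h]; exact hε

variable {E : Type*} [NormedAddCommGroup E] [InnerProductSpace ℂ E]

/-- The properties of the Milnor vector field used to build the flow: on the punctured ball of radius `r` the field `v` is
`C¹` off the zero set of `f`, tangent to the spheres, turns `f` with angular speed one while changing `log |f|` with speed
at most `K`, and extends continuously by zero to the zero set of `f`. -/
structure IsMilnorField (f : E → ℂ) (v : E → E) (r K : ℝ) : Prop where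
  holAt : ∀ z ∈ ball (0 : E) r, HolAt f z
  contDiffAt : ∀ z ∈ ball (0 : E) r, z ≠ 0 → f z ≠ 0 → ContDiffAt ℝ 1 v z
  tangent : ∀ z ∈ ball (0 : E) r, z ≠ 0 → f z ≠ 0 → (inner ℂ z (v z)).re = 0
  deriv : ∀ z ∈ ball (0 : E) r, z ≠ 0 → f z ≠ 0 → ∃ ρ : ℝ, |ρ| ≤ K ∧ fderiv ℂ f z (v z) = f z * (Complex.I + ρ)
  zero : ∀ z ∈ ball (0 : E) r, z ≠ 0 → f z = 0 → v z = 0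
  continuousAt_zero : ∀ z ∈ ball (0 : E) r, z ≠ 0 → f z = 0 → ContinuousAt v z

theorem exists_isMilnorField [FiniteDimensional ℂ E] {f : E → ℂ} (hf : HolAt f 0) (h0 : f 0 = 0)
    (hf0 : ¬ ∀ᶠ z in 𝓝 (0 : E), f z = 0) : ∃ r > 0, ∃ K : ℝ, ∃ v : E → E, IsMilnorField f v r K := by
  obtain ⟨r, hr, K, v, h1, h2⟩ := exists_field hf h0 hf0
  exact ⟨r, hr, K, v, h1, fun z hz hz0 h => ((h2 z hz hz0).1 h).1, fun z hz hz0 h => ((h2 z hz hz0).1 h).2.1,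
    fun z hz hz0 h => ((h2 z hz hz0).1 h).2.2, fun z hz hz0 h => ((h2 z hz hz0).2 h).1,
    fun z hz hz0 h => ((h2 z hz hz0).2 h).2⟩

/-- `γ : [0,1] → S(0,ε)` is a trajectory of the field `s • v` that avoids the zero set of `f`. -/
structure IsTraj (f : E → ℂ) (v : E → E) (ε s : ℝ) (γ : ℝ → E) : Prop where
  deriv : ∀ t ∈ Icc (0 : ℝ) 1, HasDerivWithinAt γ (s • v (γ t)) (Icc 0 1) t
  norm : ∀ t ∈ Icc (0 : ℝ) 1, ‖γ t‖ = ε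
  ne : ∀ t ∈ Icc (0 : ℝ) 1, f (γ t) ≠ 0

variable {f : E → ℂ} {v : E → E} {r K ε s : ℝ} {γ : ℝ → E}

lemma IsTraj.reverse (h : IsTraj f v ε s γ) : IsTraj f v ε (-s) (fun t => γ (1 - t)) := by
  have hm : ∀ t ∈ Icc (0 : ℝ) 1, 1 - t ∈ Icc (0 : ℝ) 1 := fun u hu => ⟨by linarith [hu.2], by linarith [hu.1]⟩
  refine ⟨fun t ht => ?_, fun t ht => h.norm _ (hm t ht), fun t ht => h.ne _ (hm t ht)⟩
  have := hasDerivWithinAt_reverse h.deriv ht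
  rwa [← neg_smul] at this

lemma IsMilnorField.hasDerivWithinAt_comp (H : IsMilnorField f v r K) {t : ℝ} {d : E} (hr : γ t ∈ ball (0 : E) r)
    (h : HasDerivWithinAt γ d (Icc 0 1) t) :
    HasDerivWithinAt (fun u => f (γ u)) (fderiv ℂ f (γ t) d) (Icc 0 1) t :=
  ((H.holAt _ hr).differentiableAt.hasFDerivAt.restrictScalars ℝ).comp_hasDerivWithinAt t h

/-- An exponential growth rate for `f` along the trajectories of `s • v`. -/
def growth (s K : ℝ) : ℝ := |s| * (1 + |K|)

lemma growth_nonneg (s K : ℝ) : 0 ≤ growth s K := by unfold growth; positivity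

lemma growth_neg (s K : ℝ) : growth (-s) K = growth s K := by simp [growth]

lemma IsMilnorField.norm_fderiv_le (H : IsMilnorField f v r K) {z : E} (hz : z ∈ ball (0 : E) r) (hz0 : z ≠ 0)
    (hfz : f z ≠ 0) (s : ℝ) : ‖fderiv ℂ f z (s • v z)‖ ≤ growth s K * ‖f z‖ := by
  obtain ⟨ρ, hρ, h⟩ := H.deriv z hz hz0 hfz
  have h1 : fderiv ℂ f z (s • v z) = (s : ℂ) * fderiv ℂ f z (v z) := by
    rw [← Complex.coe_smul, map_smul, smul_eq_mul]
  rw [h1, h, norm_mul, norm_mul, Complex.norm_real, Real.norm_eq_abs, growth]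
  have h2 : ‖Complex.I + (ρ : ℂ)‖ ≤ 1 + |K| := by
    refine (norm_add_le _ _).trans ?_
    rw [Complex.norm_I, Complex.norm_real, Real.norm_eq_abs]
    linarith [le_abs_self K]
  calc |s| * (‖f z‖ * ‖Complex.I + (ρ : ℂ)‖) ≤ |s| * (‖f z‖ * (1 + |K|)) := by gcongr
    _ = _ := by ring

lemma IsTraj.bounds (H : IsMilnorField f v r K) (hε : 0 < ε) (hεr : ε < r) (h : IsTraj f v ε s γ) {t : ℝ}
    (ht : t ∈ Icc (0 : ℝ) 1) :
    ‖f (γ t)‖ ≤ ‖f (γ 0)‖ * Real.exp (growth s K) ∧ ‖f (γ 0)‖ ≤ ‖f (γ t)‖ * Real.exp (growth s K) :=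
  gronwall_both (F := fun t => f (γ t)) (growth_nonneg s K)
    (fun t ht => H.hasDerivWithinAt_comp (mem_ball_of_norm hεr (h.norm t ht)) (h.deriv t ht))
    (fun t ht => H.norm_fderiv_le (mem_ball_of_norm hεr (h.norm t ht)) (ne_zero_of_norm hε (h.norm t ht))
      (h.ne t ht) s) ht

/-- Along a trajectory of `s • v` the argument of `f` increases by `s`. -/
lemma IsTraj.arg (H : IsMilnorField f v r K) (hε : 0 < ε) (hεr : ε < r) (h : IsTraj f v ε s γ) :
    ∃ c : ℝ, f (γ 1) = c * Complex.exp (s * Complex.I) * f (γ 0) := by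
  have hex : ∀ t ∈ Icc (0 : ℝ) 1, ∃ ρ : ℝ, |ρ| ≤ K ∧ fderiv ℂ f (γ t) (v (γ t)) = f (γ t) * (Complex.I + ρ) :=
    fun t ht => H.deriv _ (mem_ball_of_norm hεr (h.norm t ht)) (ne_zero_of_norm hε (h.norm t ht)) (h.ne t ht)
  choose! ρ hρ hd using hex
  -- the rotated value, normalised by the initial one, satisfies a real linear equation
  set Q : ℝ → ℂ := fun t => f (γ t) * Complex.exp (-(s * t) * Complex.I) / f (γ 0) with hQ
  have hQd : ∀ t ∈ Icc (0 : ℝ) 1, HasDerivWithinAt Q (((s * ρ t : ℝ) : ℂ) * Q t) (Icc 0 1) t := by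
    intro t ht
    have h1 := H.hasDerivWithinAt_comp (mem_ball_of_norm hεr (h.norm t ht)) (h.deriv t ht)
    have h2 : HasDerivAt (fun t : ℝ => Complex.exp (-(s * t) * Complex.I))
        (Complex.exp (-(s * t) * Complex.I) * (-s * Complex.I)) t := by
      have h3 : HasDerivAt (fun t : ℝ => -((s : ℂ) * (t : ℂ)) * Complex.I) (-s * Complex.I) t := by
        have h4 := (((Complex.ofRealCLM.hasDerivAt (x := t)).const_mul (s : ℂ)).neg).mul_const Complex.I
        simpa using! h4
      exact h3.cexp
    have h5 := (h1.mul h2.hasDerivWithinAt).div_const (f (γ 0))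
    refine h5.congr_deriv ?_
    rw [← Complex.coe_smul, map_smul, smul_eq_mul, hd t ht, hQ]
    push_cast
    ring
  have him : ∀ t ∈ Icc (0 : ℝ) 1,
      HasDerivWithinAt (fun t => (Q t).im) ((s * ρ t) * (Q t).im) (Icc 0 1) t := by
    intro t ht
    have := Complex.imCLM.hasFDerivAt.comp_hasDerivWithinAt t (hQd t ht)
    refine this.congr_deriv ?_
    rw [Complex.imCLM_apply, Complex.im_ofReal_mul]
  have h6 := (gronwall_both (F := fun t => (Q t).im) (growth_nonneg s K) him (fun t ht => by
    rw [norm_mul, norm_mul, Real.norm_eq_abs, Real.norm_eq_abs, growth]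
    have := (hρ t ht).trans (le_abs_self K)
    gcongr
    linarith) (right_mem_Icc.2 zero_le_one)).1
  have h00 : f (γ 0) ≠ 0 := h.ne 0 (left_mem_Icc.2 zero_le_one)
  have h7 : (Q 0).im = 0 := by simp [hQ, h00]
  have h8 : (Q 1).im = 0 := by
    rw [h7] at h6; simpa using h6
  refine ⟨(Q 1).re, ?_⟩
  have h9 : (((Q 1).re : ℝ) : ℂ) = Q 1 := Complex.ext rfl (by simp [h8])
  rw [h9, hQ]
  have h10 : Complex.exp (-(s * ((1 : ℝ) : ℂ)) * Complex.I) * Complex.exp (s * Complex.I) = 1 := by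
    rw [← Complex.exp_add]; simp
  rw [show f (γ 1) * Complex.exp (-(s * ((1 : ℝ) : ℂ)) * Complex.I) / f (γ 0) * Complex.exp (s * Complex.I) * f (γ 0) =
    f (γ 1) * (Complex.exp (-(s * ((1 : ℝ) : ℂ)) * Complex.I) * Complex.exp (s * Complex.I)) * (f (γ 0) / f (γ 0)) by
      ring, h10, div_self h00, mul_one, mul_one]

variable [FiniteDimensional ℂ E]

/-- A globally Lipschitz bounded field that agrees with `v` on the part of the sphere where `|f| ≥ δ`. -/
lemma IsMilnorField.exists_cutoff (H : IsMilnorField f v r K) (hε : 0 < ε) (hεr : ε < r) {δ : ℝ} (hδ : 0 < δ) :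
    ∃ Y : E → E, (∃ L, LipschitzWith L Y) ∧ (∃ M : ℝ, ∀ z, ‖Y z‖ ≤ M) ∧
      (∀ z, ‖z‖ = ε → δ ≤ ‖f z‖ → Y z = v z) ∧
      ∀ z, Y z = 0 ∨ (z ∈ ball (0 : E) r ∧ z ≠ 0 ∧ f z ≠ 0 ∧ ∃ c ∈ Icc (0 : ℝ) 1, Y z = c • v z) := by
  have hcont : ContinuousOn f (ball (0 : E) r) := fun z hz => (H.holAt z hz).continuousAt.continuousWithinAt
  have hsub : sphere (0 : E) ε ⊆ ball 0 r := sphere_subset_ball hεr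
  set A : Set E := {z ∈ sphere (0 : E) ε | δ ≤ ‖f z‖} with hA
  have hAc : IsCompact A := by
    have : ContinuousOn (fun z => ‖f z‖) (sphere (0 : E) ε) := (hcont.mono hsub).norm
    have h := this.preimage_isClosed_of_isClosed isClosed_sphere (isClosed_Ici (a := δ))
    exact (isCompact_sphere (0 : E) ε).of_isClosed_subset h inter_subset_left
  set Ω : Set E := {z ∈ ball (0 : E) r | z ≠ 0 ∧ f z ≠ 0} with hΩ
  have hΩo : IsOpen Ω := by
    have h1 : IsOpen (ball (0 : E) r ∩ f ⁻¹' {0}ᶜ) := hcont.isOpen_inter_preimage isOpen_ball isOpen_compl_singleton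
    have h2 : Ω = (ball (0 : E) r ∩ f ⁻¹' {0}ᶜ) ∩ {0}ᶜ := by
      ext z; simp only [hΩ, mem_ofPred_eq, mem_inter_iff, mem_preimage, mem_compl_iff, mem_singleton_iff]; tauto
    rw [h2]; exact h1.inter isOpen_compl_singleton
  have hAΩ : A ⊆ Ω := fun z hz => ⟨hsub hz.1, ne_zero_of_norm hε (by simpa using hz.1),
    norm_pos_iff.1 (hδ.trans_le hz.2)⟩
  obtain ⟨A', hA'c, hAA', hA'Ω⟩ := exists_compact_between hAc hΩo hAΩ
  obtain ⟨χ, hχ0, hχ1, hχ⟩ := exists_contMDiffMap_zero_one_of_isClosed (n := 1) (modelWithCornersSelf ℝ E)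
    (isOpen_interior (s := A')).isClosed_compl hAc.isClosed (disjoint_compl_left_iff_subset.2 hAA')
  have hχs : ContDiff ℝ 1 (χ : E → ℝ) := contMDiff_iff_contDiff.1 χ.contMDiff
  have hts : tsupport (fun z => χ z • v z) ⊆ A' := by
    refine closure_minimal (fun z hz => ?_) hA'c.isClosed
    by_contra hcon
    have : χ z = 0 := hχ0 (fun h => hcon (interior_subset h))
    simp [this] at hz
  have hYc : HasCompactSupport (fun z => χ z • v z) := hA'c.of_isClosed_subset (isClosed_tsupport _) hts
  have hYs : ContDiff ℝ 1 (fun z => χ z • v z) := by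
    refine contDiff_iff_contDiffAt.2 fun z => ?_
    by_cases hz : z ∈ A'
    · have := hA'Ω hz
      exact hχs.contDiffAt.smul (H.contDiffAt z this.1 this.2.1 this.2.2)
    · refine contDiffAt_const (c := (0 : E)) |>.congr_of_eventuallyEq ?_
      filter_upwards [hA'c.isClosed.isOpen_compl.mem_nhds hz] with y hy
      have : χ y = 0 := hχ0 (fun h => hy (interior_subset h))
      simp [this]
  refine ⟨fun z => χ z • v z, hYs.lipschitzWith_of_hasCompactSupport hYc one_ne_zero,
    hYs.continuous.bounded_above_of_compact_support hYc, fun z h1 h2 => ?_, fun z => ?_⟩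
  · have : χ z = 1 := hχ1 ⟨by simpa using h1, h2⟩
    simp [this]
  · by_cases hz : z ∈ Ω
    · exact Or.inr ⟨hz.1, hz.2.1, hz.2.2, χ z, hχ z, rfl⟩
    · left
      have : χ z = 0 := hχ0 (fun h => hz (hA'Ω (interior_subset h)))
      simp [this]

/-- The cut off field has a global solution by the Picard–Lindelöf theorem. By the Gronwall inequality `|f|` stays above the
threshold of the cut-off along it, so that it is a trajectory of the original field. -/
lemma IsMilnorField.exists_traj (H : IsMilnorField f v r K) (hε : 0 < ε) (hεr : ε < r) (s : ℝ) {x : E}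
    (hx : ‖x‖ = ε) (hfx : f x ≠ 0) : ∃ γ, IsTraj f v ε s γ ∧ γ 0 = x := by
  have hpos : 0 < ‖f x‖ := norm_pos_iff.2 hfx
  set δ : ℝ := ‖f x‖ * Real.exp (-growth s K) with hδ
  have hδpos : 0 < δ := by positivity
  obtain ⟨Y, ⟨L, hL⟩, ⟨M, hM⟩, hYv, hY⟩ := H.exists_cutoff hε hεr hδpos
  have hM0 : 0 ≤ M := (norm_nonneg _).trans (hM 0)
  have : CompleteSpace E := FiniteDimensional.complete ℂ E
  have hPL : IsPicardLindelof (fun _ z => s • Y z) (⟨0, left_mem_Icc.2 zero_le_one⟩ : Icc (0 : ℝ) 1) x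
      (Real.toNNReal (|s| * M)) 0 (Real.toNNReal (|s| * M)) (‖s‖₊ * L) := by
    refine ⟨fun _ _ => ((lipschitzWith_smul s).comp hL).lipschitzOnWith, fun _ _ => continuousOn_const, fun _ _ z _ => ?_, ?_⟩
    · rw [Real.coe_toNNReal _ (by positivity), norm_smul, Real.norm_eq_abs]
      gcongr
      exact hM z
    · simp
  obtain ⟨γ, hγ0, hγ⟩ := hPL.exists_eq_forall_mem_Icc_hasDerivWithinAt₀
  simp only at hγ0
  have hnorm : ∀ t ∈ Icc (0 : ℝ) 1, ‖γ t‖ = ε := by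
    let _ : InnerProductSpace ℝ E := InnerProductSpace.complexToReal
    have hin : ∀ z, (inner ℝ z (Y z) : ℝ) = 0 := by
      intro z
      rw [real_inner_eq_re_inner ℂ]
      rcases hY z with h | ⟨h1, h2, h3, c, -, h4⟩
      · simp [h]
      · rw [h4, ← Complex.coe_smul, inner_smul_right]
        simp [H.tangent z h1 h2 h3]
    have hd : ∀ t ∈ Ico (0 : ℝ) 1, HasDerivWithinAt (fun t => ‖γ t‖ ^ 2) 0 (Ici t) t := by
      intro t ht
      have := (hγ t ⟨ht.1, ht.2.le⟩).norm_sq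
      rw [inner_smul_right, hin, mul_zero, mul_zero] at this
      exact hasDerivWithinAt_Ici_of_Icc ht this
    have hc : ContinuousOn (fun t => ‖γ t‖ ^ 2) (Icc 0 1) := fun t ht =>
      (hγ t ht).continuousWithinAt.norm.pow 2
    intro t ht
    have := constant_of_has_deriv_right_zero hc hd t ht
    simp only [hγ0, hx] at this
    exact (sq_eq_sq₀ (norm_nonneg _) hε.le).1 this
  have hb : ∀ t ∈ Icc (0 : ℝ) 1, δ ≤ ‖f (γ t)‖ := by
    intro t ht
    have := (gronwall_both (F := fun t => f (γ t)) (growth_nonneg s K)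
      (fun t ht => H.hasDerivWithinAt_comp (mem_ball_of_norm hεr (hnorm t ht)) (hγ t ht))
      (fun t ht => by
        rcases hY (γ t) with h | ⟨h1, h2, h3, c, hc, h4⟩
        · rw [h]; simpa using mul_nonneg (growth_nonneg s K) (norm_nonneg _)
        · rw [h4, smul_comm, ← Complex.coe_smul c, map_smul, norm_smul, Complex.norm_real,
            Real.norm_of_nonneg hc.1]
          have := H.norm_fderiv_le h1 h2 h3 s
          nlinarith [hc.2, hc.1, norm_nonneg (fderiv ℂ f (γ t) (s • v (γ t)))]) ht).2
    rw [hγ0] at this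
    rw [hδ, Real.exp_neg, ← div_eq_mul_inv, div_le_iff₀ (Real.exp_pos _)]
    exact this
  refine ⟨γ, ⟨fun t ht => ?_, hnorm, fun t ht => norm_pos_iff.1 (hδpos.trans_le (hb t ht))⟩, hγ0⟩
  rw [← hYv _ (hnorm t ht) (hb t ht)]
  exact hγ t ht

/-- Trajectories that stay away from the zero set of `f` depend Lipschitz continuously on the initial point. -/
lemma IsMilnorField.exists_dist_le (H : IsMilnorField f v r K) (hε : 0 < ε) (hεr : ε < r) (s : ℝ) {δ : ℝ}
    (hδ : 0 < δ) : ∃ C : ℝ, 0 ≤ C ∧ ∀ γ₁ γ₂, IsTraj f v ε s γ₁ → IsTraj f v ε s γ₂ → δ ≤ ‖f (γ₁ 0)‖ →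
      δ ≤ ‖f (γ₂ 0)‖ → dist (γ₁ 1) (γ₂ 1) ≤ C * dist (γ₁ 0) (γ₂ 0) := by
  obtain ⟨Y, ⟨L, hL⟩, -, hYv, -⟩ := H.exists_cutoff hε hεr (δ := δ * Real.exp (-growth s K)) (by positivity)
  have aux : ∀ γ, IsTraj f v ε s γ → δ ≤ ‖f (γ 0)‖ →
      ∀ t ∈ Icc (0 : ℝ) 1, HasDerivWithinAt γ (s • Y (γ t)) (Icc 0 1) t := by
    intro γ h h0 t ht
    rw [hYv _ (h.norm t ht)]
    · exact h.deriv t ht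
    · rw [Real.exp_neg, ← div_eq_mul_inv, div_le_iff₀ (Real.exp_pos _)]
      exact h0.trans (h.bounds H hε hεr ht).2
  refine ⟨Real.exp ((‖s‖₊ * L : NNReal) * (1 - 0)), (Real.exp_pos _).le, fun γ₁ γ₂ h₁ h₂ k₁ k₂ => ?_⟩
  have := dist_le_of_trajectories_ODE (v := fun _ z => s • Y z) (K := ‖s‖₊ * L) (f := γ₁) (g := γ₂)
    (a := 0) (b := 1) (δ := dist (γ₁ 0) (γ₂ 0)) (fun _ => (lipschitzWith_smul s).comp hL)
    (fun t ht => (h₁.deriv t ht).continuousWithinAt)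
    (fun t ht => hasDerivWithinAt_Ici_of_Icc ht (aux γ₁ h₁ k₁ t ⟨ht.1, ht.2.le⟩))
    (fun t ht => (h₂.deriv t ht).continuousWithinAt)
    (fun t ht => hasDerivWithinAt_Ici_of_Icc ht (aux γ₂ h₂ k₂ t ⟨ht.1, ht.2.le⟩)) le_rfl 1
    (right_mem_Icc.2 zero_le_one)
  rwa [mul_comm]

end Flow

/-! ### The flow maps -/

section FlowMap
variable {E : Type*} [NormedAddCommGroup E] [InnerProductSpace ℂ E] [FiniteDimensional ℂ E]
  {f : E → ℂ} {v : E → E} {r K ε : ℝ}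

/-- On the sphere the field is uniformly small where `f` is small. -/
lemma IsMilnorField.exists_small (H : IsMilnorField f v r K) (hε : 0 < ε) (hεr : ε < r) {η : ℝ} (hη : 0 < η) :
    ∃ δ > 0, ∀ z, ‖z‖ = ε → ‖f z‖ < δ → ‖v z‖ ≤ η := by
  have hb : ∀ z ∈ sphere (0 : E) ε, z ∈ ball (0 : E) r ∧ z ≠ 0 := fun z hz =>
    ⟨sphere_subset_ball hεr hz, ne_zero_of_norm hε (by simpa using hz)⟩
  have hv : ContinuousOn v (sphere (0 : E) ε) := fun z hz => by
    obtain ⟨h1, h2⟩ := hb z hz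
    by_cases h : f z = 0
    · exact (H.continuousAt_zero z h1 h2 h).continuousWithinAt
    · exact (H.contDiffAt z h1 h2 h).continuousAt.continuousWithinAt
  have hf : ContinuousOn f (sphere (0 : E) ε) := fun z hz =>
    (H.holAt z (hb z hz).1).continuousAt.continuousWithinAt
  have hc : IsCompact (sphere (0 : E) ε ∩ (fun z => ‖v z‖) ⁻¹' Ici η) :=
    (isCompact_sphere (0 : E) ε).of_isClosed_subset
      (hv.norm.preimage_isClosed_of_isClosed isClosed_sphere isClosed_Ici) inter_subset_left
  obtain ⟨δ, hδ, h⟩ := hc.exists_forall_le' (f := fun z => ‖f z‖) (a := 0) (hf.norm.mono inter_subset_left)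
    (fun z hz => norm_pos_iff.2 fun h0 => by
      have h1 : η ≤ ‖v z‖ := hz.2
      rw [H.zero z (hb z hz.1).1 (hb z hz.1).2 h0, norm_zero] at h1
      linarith)
  refine ⟨δ, hδ, fun z hz hfz => ?_⟩
  by_contra! hcon
  exact absurd (h z ⟨by simpa using hz, hcon.le⟩) (not_le.2 hfz)

/-- The time-`s` map of the flow on the sphere, extended by the identity to the zero set of `f`, is continuous. -/
lemma IsMilnorField.exists_flow (H : IsMilnorField f v r K) (hε : 0 < ε) (hεr : ε < r) (s : ℝ) :
    ∃ Φ : E → E, ContinuousOn Φ (sphere (0 : E) ε) ∧ ∀ x ∈ sphere (0 : E) ε,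
      (f x = 0 → Φ x = x) ∧ (f x ≠ 0 → ∃ γ, IsTraj f v ε s γ ∧ γ 0 = x ∧ γ 1 = Φ x) := by
  classical
  have hex : ∀ x : E, ‖x‖ = ε → f x ≠ 0 → ∃ γ, IsTraj f v ε s γ ∧ γ 0 = x := fun x hx hfx =>
    H.exists_traj hε hεr s hx hfx
  choose! γ hγ hγ0 using hex
  refine ⟨fun x => if f x = 0 then x else γ x 1, fun x hx => ?_, fun x hx => ⟨fun h => if_pos h, fun h =>
    ⟨γ x, hγ x (by simpa using hx) h, hγ0 x (by simpa using hx) h, (if_neg h).symm⟩⟩⟩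
  have hfc : ContinuousWithinAt f (sphere (0 : E) ε) x :=
    (H.holAt x (sphere_subset_ball hεr hx)).continuousAt.continuousWithinAt
  have hxn : ‖x‖ = ε := by simpa using hx
  by_cases hfx : f x = 0
  · rw [Metric.continuousWithinAt_iff']
    intro η hη
    obtain ⟨δ, hδ, hsm⟩ := H.exists_small hε hεr (η := η / (2 * (|s| + 1))) (by positivity)
    have hnear : ∀ᶠ y in 𝓝[sphere (0 : E) ε] x, ‖f y‖ * Real.exp (growth s K) < δ := by
      have h1 : Tendsto (fun y => ‖f y‖ * Real.exp (growth s K)) (𝓝[sphere (0 : E) ε] x) (𝓝 0) := by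
        have := (hfc.norm).mul_const (Real.exp (growth s K))
        simpa [ContinuousWithinAt, hfx] using this
      exact h1.eventually_lt_const hδ
    filter_upwards [hnear, self_mem_nhdsWithin, mem_nhdsWithin_of_mem_nhds (ball_mem_nhds x (half_pos hη))]
      with y h1 h2 h3
    rw [if_pos hfx]
    rw [mem_ball] at h3
    have hyn : ‖y‖ = ε := by simpa using h2
    by_cases hfy : f y = 0
    · rw [if_pos hfy]; linarith
    · rw [if_neg hfy]
      have hT := hγ y hyn hfy
      have hd : ‖γ y 1 - γ y 0‖ ≤ |s| * (η / (2 * (|s| + 1))) * ‖(1 : ℝ) - 0‖ := by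
        refine (convex_Icc (0 : ℝ) 1).norm_image_sub_le_of_norm_hasDerivWithin_le hT.deriv (fun t ht => ?_)
          (left_mem_Icc.2 zero_le_one) (right_mem_Icc.2 zero_le_one)
        rw [norm_smul, Real.norm_eq_abs]
        refine mul_le_mul_of_nonneg_left (hsm _ (hT.norm t ht) ?_) (abs_nonneg s)
        refine (hT.bounds H hε hεr ht).1.trans_lt ?_
        rwa [hγ0 y hyn hfy]
      rw [hγ0 y hyn hfy] at hd
      have h4 : |s| * (η / (2 * (|s| + 1))) ≤ η / 2 := by
        rw [← mul_div_assoc, div_le_div_iff₀ (by positivity) two_pos]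
        nlinarith [abs_nonneg s]
      have h5 : dist (γ y 1) y ≤ η / 2 := by
        rw [dist_eq_norm]; simp only [sub_zero, norm_one, mul_one] at hd; linarith
      linarith [dist_triangle (γ y 1) y x]
  · have hpos : 0 < ‖f x‖ := norm_pos_iff.2 hfx
    obtain ⟨C, hC, hL⟩ := H.exists_dist_le hε hεr s (half_pos hpos)
    have hnear : ∀ᶠ y in 𝓝[sphere (0 : E) ε] x, ‖f x‖ / 2 < ‖f y‖ :=
      hfc.norm.eventually_const_lt (half_lt_self hpos)
    rw [ContinuousWithinAt, tendsto_iff_dist_tendsto_zero]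
    have hlim : Tendsto (fun y => C * dist y x) (𝓝[sphere (0 : E) ε] x) (𝓝 0) := by
      have : Continuous fun y : E => C * dist y x := by fun_prop
      have := (this.tendsto x).mono_left (nhdsWithin_le_nhds (s := sphere (0 : E) ε))
      simpa using this
    refine squeeze_zero' (Eventually.of_forall fun _ => dist_nonneg) ?_ hlim
    filter_upwards [hnear, self_mem_nhdsWithin] with y h1 h2
    have hyn : ‖y‖ = ε := by simpa using h2
    have hfy : f y ≠ 0 := norm_pos_iff.1 ((half_pos hpos).trans h1)
    have := hL _ _ (hγ y hyn hfy) (hγ x hxn hfx) (by rw [hγ0 y hyn hfy]; exact h1.le)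
      (by rw [hγ0 x hxn hfx]; linarith)
    rw [hγ0 y hyn hfy, hγ0 x hxn hfx] at this
    rwa [if_neg hfy, if_neg hfx]

/-- Two subsets of a small sphere that the flow carries into each other, in time `s` and `-s` respectively, are
homeomorphic. Membership of the flowed point only needs to be checked from the argument of `f`. -/
theorem IsMilnorField.nonempty_homeomorph (H : IsMilnorField f v r K) (hε : 0 < ε) (hεr : ε < r) (s : ℝ)
    {A B : Set E} (hA : A ⊆ sphere (0 : E) ε) (hB : B ⊆ sphere (0 : E) ε)
    (hAB : ∀ x ∈ A, ∀ y ∈ sphere (0 : E) ε, ∀ c : ℝ, f y = c * Complex.exp (s * Complex.I) * f x → y ∈ B)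
    (hBA : ∀ x ∈ B, ∀ y ∈ sphere (0 : E) ε, ∀ c : ℝ, f y = c * Complex.exp ((-s : ℝ) * Complex.I) * f x → y ∈ A)
    (hZ : ∀ x ∈ sphere (0 : E) ε, f x = 0 → x ∈ A ∧ x ∈ B) : Nonempty (A ≃ₜ B) := by
  have h01 : (1 : ℝ) ∈ Icc (0 : ℝ) 1 := right_mem_Icc.2 zero_le_one
  -- the time-`s` map followed by the time-`(-s)` map is the identity
  have hinv : ∀ (s : ℝ) (Φ Ψ : E → E),
      (∀ x ∈ sphere (0 : E) ε, (f x = 0 → Φ x = x) ∧ (f x ≠ 0 → ∃ γ, IsTraj f v ε s γ ∧ γ 0 = x ∧ γ 1 = Φ x)) →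
      (∀ x ∈ sphere (0 : E) ε, (f x = 0 → Ψ x = x) ∧ (f x ≠ 0 → ∃ γ, IsTraj f v ε (-s) γ ∧ γ 0 = x ∧ γ 1 = Ψ x)) →
      ∀ x ∈ sphere (0 : E) ε, Ψ (Φ x) = x := by
    intro s Φ Ψ hΦ hΨ x hx
    by_cases hfx : f x = 0
    · rw [(hΦ x hx).1 hfx, (hΨ x hx).1 hfx]
    · obtain ⟨γ, hγ, h0, h1⟩ := (hΦ x hx).2 hfx
      have hne : f (Φ x) ≠ 0 := h1 ▸ hγ.ne 1 h01
      obtain ⟨γ', hγ', h0', h1'⟩ := (hΨ (Φ x) (by simpa [← h1] using hγ.norm 1 h01)).2 hne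
      obtain ⟨C, -, hL⟩ := H.exists_dist_le hε hεr (-s) (norm_pos_iff.2 hne)
      have := hL _ _ hγ' hγ.reverse (by rw [h0']) (by simp [h1])
      simp only [sub_self, sub_zero, h0, h1, h0', h1', dist_self, mul_zero] at this
      exact dist_le_zero.1 this
  obtain ⟨Φ, hΦc, hΦ⟩ := H.exists_flow hε hεr s
  obtain ⟨Ψ, hΨc, hΨ⟩ := H.exists_flow hε hεr (-s)
  have mΦ : ∀ x ∈ A, Φ x ∈ B := by
    intro x hx
    by_cases hfx : f x = 0
    · rw [(hΦ x (hA hx)).1 hfx]; exact (hZ x (hA hx) hfx).2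
    · obtain ⟨γ, hγ, h0, h1⟩ := (hΦ x (hA hx)).2 hfx
      obtain ⟨c, hc⟩ := hγ.arg H hε hεr
      rw [h0, h1] at hc
      exact hAB x hx _ (by simpa [← h1] using hγ.norm 1 h01) c hc
  have mΨ : ∀ x ∈ B, Ψ x ∈ A := by
    intro x hx
    by_cases hfx : f x = 0
    · rw [(hΨ x (hB hx)).1 hfx]; exact (hZ x (hB hx) hfx).1
    · obtain ⟨γ, hγ, h0, h1⟩ := (hΨ x (hB hx)).2 hfx
      obtain ⟨c, hc⟩ := hγ.arg H hε hεr
      rw [h0, h1] at hc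
      exact hBA x hx _ (by simpa [← h1] using hγ.norm 1 h01) c hc
  exact ⟨{
    toFun := fun x => ⟨Φ x, mΦ x x.2⟩
    invFun := fun x => ⟨Ψ x, mΨ x x.2⟩
    left_inv := fun x => Subtype.ext (hinv s Φ Ψ hΦ hΨ x (hA x.2))
    right_inv := fun x => Subtype.ext (hinv (-s) Ψ Φ hΨ (by simpa using hΦ) x (hB x.2))
    continuous_toFun := ((hΦc.mono hA).domRestrict).subtype_mk _
    continuous_invFun := ((hΨc.mono hB).domRestrict).subtype_mk _ }⟩

end FlowMap

end MilnorFlow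

/-! ### The links -/

section Assembly

lemma exp_add_pi_mul_I (θ : ℝ) :
    Complex.exp (((θ + Real.pi : ℝ) : ℂ) * Complex.I) = -Complex.exp (θ * Complex.I) := by
  push_cast
  rw [add_mul, Complex.exp_add, Complex.exp_pi_mul_I, mul_neg_one]

/-- A complex number lies on the open ray spanned by `w ≠ 0` of norm one iff its normalisation is `w`; the junk value
`0 / 0 = 0` is excluded because `w ≠ 0`. -/
lemma div_norm_eq_iff {z w : ℂ} (hw : ‖w‖ = 1) : z / ‖z‖ = w ↔ ∃ t : ℝ, 0 < t ∧ z = t * w := by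
  constructor
  · intro h
    have hz : z ≠ 0 := by
      rintro rfl
      rw [zero_div] at h
      rw [← h, norm_zero] at hw
      exact zero_ne_one hw
    have hz' : ((‖z‖ : ℝ) : ℂ) ≠ 0 := by exact_mod_cast norm_ne_zero_iff.2 hz
    exact ⟨‖z‖, norm_pos_iff.2 hz, by rw [← h, mul_div_cancel₀ _ hz']⟩
  · rintro ⟨t, ht, rfl⟩
    have ht' : (t : ℂ) ≠ 0 := by exact_mod_cast ht.ne'
    rw [norm_mul, hw, mul_one, Complex.norm_real, Real.norm_of_nonneg ht.le, mul_div_cancel_left₀ _ ht']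

end Assembly

theorem stmt_9 (n : ℕ) (hn : 1 ≤ n)
    (U : Set (EuclideanSpace ℂ (Fin n))) (hU : IsOpen U)
    (h0U : (0 : EuclideanSpace ℂ (Fin n)) ∈ U)
    (f : EuclideanSpace ℂ (Fin n) → ℂ) (hf : DifferentiableOn ℂ f U) (hf0 : f 0 = 0)
    (hfnz : ∀ W ∈ nhds (0 : EuclideanSpace ℂ (Fin n)), ∃ x ∈ W ∩ U, f x ≠ 0) :
    ∃ ε₀ > (0 : ℝ), Metric.closedBall (0 : EuclideanSpace ℂ (Fin n)) ε₀ ⊆ U ∧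
      ∀ ε : ℝ, 0 < ε → ε ≤ ε₀ → ∀ θ : ℝ,
      -- (i) the link of X_θ is the union of three pairwise disjoint pieces
      (Xset U f θ ∩ Metric.sphere (0 : EuclideanSpace ℂ (Fin n)) ε
          = (Eset U f θ ∩ Metric.sphere (0 : EuclideanSpace ℂ (Fin n)) ε)
            ∪ ({x ∈ U | f x = 0} ∩ Metric.sphere (0 : EuclideanSpace ℂ (Fin n)) ε)
            ∪ (Eset U f (θ + Real.pi) ∩ Metric.sphere (0 : EuclideanSpace ℂ (Fin n)) ε)) ∧
      Disjoint (Eset U f θ ∩ Metric.sphere (0 : EuclideanSpace ℂ (Fin n)) ε)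
        ({x ∈ U | f x = 0} ∩ Metric.sphere (0 : EuclideanSpace ℂ (Fin n)) ε) ∧
      Disjoint (Eset U f θ ∩ Metric.sphere (0 : EuclideanSpace ℂ (Fin n)) ε)
        (Eset U f (θ + Real.pi) ∩ Metric.sphere (0 : EuclideanSpace ℂ (Fin n)) ε) ∧
      Disjoint ({x ∈ U | f x = 0} ∩ Metric.sphere (0 : EuclideanSpace ℂ (Fin n)) ε)
        (Eset U f (θ + Real.pi) ∩ Metric.sphere (0 : EuclideanSpace ℂ (Fin n)) ε) ∧
      -- the two halves are exactly the fibres of the Milnor map φ = f/‖f‖ over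
      -- the antipodal points exp(iθ) and -exp(iθ)
      (Eset U f θ ∩ Metric.sphere (0 : EuclideanSpace ℂ (Fin n)) ε
          = {x ∈ Metric.sphere (0 : EuclideanSpace ℂ (Fin n)) ε |
              f x / ‖f x‖ = Complex.exp (θ * Complex.I)}) ∧
      (Eset U f (θ + Real.pi) ∩ Metric.sphere (0 : EuclideanSpace ℂ (Fin n)) ε
          = {x ∈ Metric.sphere (0 : EuclideanSpace ℂ (Fin n)) ε |
              f x / ‖f x‖ = -Complex.exp (θ * Complex.I)}) ∧
      -- (ii) the link of X_θ is homeomorphic to the link of {Re f = 0}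
      Nonempty
        (((Xset U f θ ∩ Metric.sphere (0 : EuclideanSpace ℂ (Fin n)) ε) : Set _) ≃ₜ
         (({x ∈ U | (f x).re = 0} ∩ Metric.sphere (0 : EuclideanSpace ℂ (Fin n)) ε) : Set _)) := by
  have hU0 : U ∈ nhds (0 : EuclideanSpace ℂ (Fin n)) := hU.mem_nhds h0U
  have hol : HolAt f (0 : EuclideanSpace ℂ (Fin n)) := by
    filter_upwards [hU0] with z hz
    exact hf.differentiableAt (hU.mem_nhds hz)
  have hnz : ¬ ∀ᶠ z in nhds (0 : EuclideanSpace ℂ (Fin n)), f z = 0 := by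
    intro h
    obtain ⟨x, hx, hfx⟩ := hfnz _ h
    exact hfx hx.1
  obtain ⟨r, hr, K, v, H⟩ := exists_isMilnorField hol hf0 hnz
  obtain ⟨R, hR, hRU⟩ := Metric.isOpen_iff.1 hU 0 h0U
  have hm : 0 < min r R := lt_min hr hR
  have hsub : Metric.closedBall (0 : EuclideanSpace ℂ (Fin n)) (min r R / 2) ⊆ U :=
    (Metric.closedBall_subset_ball (by linarith [min_le_right r R])).trans hRU
  refine ⟨min r R / 2, by positivity, hsub, fun ε hε hε0 θ => ?_⟩
  have hS : ∀ x ∈ Metric.sphere (0 : EuclideanSpace ℂ (Fin n)) ε, x ∈ U := fun x hx =>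
    hsub (Metric.closedBall_subset_closedBall hε0 (Metric.sphere_subset_closedBall hx))
  have hεr : ε < r := by linarith [min_le_left r R]
  set w : ℂ := Complex.exp (θ * Complex.I) with hw
  have hw1 : ‖w‖ = 1 := Complex.norm_exp_ofReal_mul_I θ
  have hw0 : w ≠ 0 := Complex.exp_ne_zero _
  have hmX : ∀ x, x ∈ Xset U f θ ↔ x ∈ U ∧ ∃ t : ℝ, f x = t * w := fun x => Iff.rfl
  have hmE : ∀ x, x ∈ Eset U f θ ↔ x ∈ U ∧ ∃ t : ℝ, 0 < t ∧ f x = t * w := fun x => Iff.rfl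
  have hmE' : ∀ x, x ∈ Eset U f (θ + Real.pi) ↔ x ∈ U ∧ ∃ t : ℝ, 0 < t ∧ f x = t * -w := fun x => by
    rw [hw, ← exp_add_pi_mul_I]; exact Iff.rfl
  refine ⟨?_, ?_, ?_, ?_, ?_, ?_, ?_⟩
  · ext x
    simp only [Set.mem_union, Set.mem_inter_iff, hmX, hmE, hmE', Set.mem_sep_iff]
    constructor
    · rintro ⟨⟨hx, t, ht⟩, hxS⟩
      rcases lt_trichotomy t 0 with h | h | h
      · exact Or.inr ⟨⟨hx, -t, by linarith, by rw [ht]; push_cast; ring⟩, hxS⟩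
      · exact Or.inl (Or.inr ⟨⟨hx, by rw [ht, h]; simp⟩, hxS⟩)
      · exact Or.inl (Or.inl ⟨⟨hx, t, h, ht⟩, hxS⟩)
    · rintro ((⟨⟨hx, t, -, ht⟩, hxS⟩ | ⟨⟨hx, h⟩, hxS⟩) | ⟨⟨hx, t, -, ht⟩, hxS⟩)
      · exact ⟨⟨hx, t, ht⟩, hxS⟩
      · exact ⟨⟨hx, 0, by rw [h]; simp⟩, hxS⟩
      · exact ⟨⟨hx, -t, by rw [ht]; push_cast; ring⟩, hxS⟩
  · rw [Set.disjoint_left]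
    rintro x ⟨hx, -⟩ ⟨⟨-, h0⟩, -⟩
    obtain ⟨-, t, ht, h⟩ := (hmE x).1 hx
    rw [h0] at h
    exact (mul_ne_zero (by exact_mod_cast ht.ne') hw0) h.symm
  · rw [Set.disjoint_left]
    rintro x ⟨hx, -⟩ ⟨hx', -⟩
    obtain ⟨-, t, ht, h⟩ := (hmE x).1 hx
    obtain ⟨-, t', ht', h'⟩ := (hmE' x).1 hx'
    have h1 : ((t + t' : ℝ) : ℂ) * w = 0 := by
      push_cast; rw [add_mul, ← h, h']; ring
    exact (mul_ne_zero (by exact_mod_cast (add_pos ht ht').ne') hw0) h1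
  · rw [Set.disjoint_left]
    rintro x ⟨⟨-, h0⟩, -⟩ ⟨hx, -⟩
    obtain ⟨-, t, ht, h⟩ := (hmE' x).1 hx
    rw [h0] at h
    exact (mul_ne_zero (by exact_mod_cast ht.ne') (neg_ne_zero.2 hw0)) h.symm
  · ext x
    rw [Set.mem_inter_iff, hmE, Set.mem_sep_iff, div_norm_eq_iff hw1]
    exact ⟨fun h => ⟨h.2, h.1.2⟩, fun h => ⟨⟨hS x h.1, h.2⟩, h.1⟩⟩
  · ext x
    rw [Set.mem_inter_iff, hmE', Set.mem_sep_iff, div_norm_eq_iff (by rw [norm_neg, hw1])]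
    exact ⟨fun h => ⟨h.2, h.1.2⟩, fun h => ⟨⟨hS x h.1, h.2⟩, h.1⟩⟩
  · -- rotating by `π/2 - θ` carries the line through `exp(iθ)` to the imaginary axis
    have hrot : Complex.exp ((Real.pi / 2 - θ : ℝ) * Complex.I) * w = Complex.I := by
      rw [hw, ← Complex.exp_add, ← add_mul, ← Complex.ofReal_add, sub_add_cancel]
      push_cast
      exact Complex.exp_pi_div_two_mul_I
    have hrot' : Complex.exp ((-(Real.pi / 2 - θ) : ℝ) * Complex.I) * Complex.I = w := by
      have h1 : Complex.exp ((-(Real.pi / 2 - θ) : ℝ) * Complex.I) *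
          Complex.exp ((Real.pi / 2 - θ : ℝ) * Complex.I) = 1 := by
        rw [← Complex.exp_add, ← add_mul, ← Complex.ofReal_add, neg_add_cancel]
        simp
      calc _ = Complex.exp ((-(Real.pi / 2 - θ) : ℝ) * Complex.I) *
            (Complex.exp ((Real.pi / 2 - θ : ℝ) * Complex.I) * w) := by rw [hrot]
        _ = w := by rw [← mul_assoc, h1, one_mul]
    refine H.nonempty_homeomorph hε hεr (Real.pi / 2 - θ) Set.inter_subset_right Set.inter_subset_right
      ?_ ?_ ?_
    · rintro x ⟨hx, -⟩ y hy c hc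
      obtain ⟨-, t, ht⟩ := (hmX x).1 hx
      refine ⟨⟨hS y hy, ?_⟩, hy⟩
      have : f y = ((c * t : ℝ) : ℂ) * Complex.I := by
        calc f y = ((c * t : ℝ) : ℂ) * (Complex.exp ((Real.pi / 2 - θ : ℝ) * Complex.I) * w) := by
              rw [hc, ht, Complex.ofReal_mul]; ring
          _ = _ := by rw [hrot]
      rw [this, Complex.re_ofReal_mul, Complex.I_re, mul_zero]
    · rintro x ⟨⟨-, hx⟩, -⟩ y hy c hc
      refine ⟨(hmX y).2 ⟨hS y hy, c * (f x).im, ?_⟩, hy⟩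
      have : f x = ((f x).im : ℂ) * Complex.I := by
        apply Complex.ext <;> simp [hx]
      rw [hc, ← hrot']
      nth_rewrite 1 [this]
      rw [Complex.ofReal_mul]; ring
    · intro x hx h0
      exact ⟨⟨(hmX x).2 ⟨hS x hx, 0, by rw [h0]; simp⟩, hx⟩, ⟨⟨hS x hx, by rw [h0]; simp⟩, hx⟩⟩
end

section
/- Assume moreover that U is connected and f is not constant on U. Then for every θ ∈ ℝ the closure of E_θ within U equals E_θ ∪ V; in particular every point of V is a limit of points of E_θ. -/
open Filter Topology Metric

section Lines

variable {E : Type*} [NormedAddCommGroup E] [NormedSpace ℂ E]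

theorem differentiableOn_comp_line {s : Set E} {f : E → ℂ} (hf : DifferentiableOn ℂ f s)
    (w y : E) :
    DifferentiableOn ℂ (fun t : ℂ => f (w + t • (y - w)))
      ((fun t : ℂ => w + t • (y - w)) ⁻¹' s) :=
  hf.comp (g := f) (f := fun t : ℂ => w + t • (y - w)) (by fun_prop) (fun _ ht => ht)

theorem convex_preimage_line {s : Set E} (hs : Convex ℝ s) (w y : E) :
    Convex ℝ ((fun t : ℂ => w + t • (y - w)) ⁻¹' s) := by
  intro a ha b hb p q hp hq hpq
  have h := hs ha hb hp hq hpq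
  have e : p • (w + a • (y - w)) + q • (w + b • (y - w)) = w + (p • a + q • b) • (y - w) := by
    rw [add_smul, smul_assoc, smul_assoc, smul_add, smul_add]
    have : w = p • w + q • w := by rw [← add_smul, hpq, one_smul]
    nth_rewrite 5 [this]
    abel
  simpa only [Set.mem_preimage, e] using h

/-- One-variable identity theorem along the complex line through `w` and `y`. -/
theorem eq_of_eventually_const_on_line {s : Set E} (hso : IsOpen s) (hs : Convex ℝ s)
    {f : E → ℂ} (hf : DifferentiableOn ℂ f s) {w y : E} (hw : w ∈ s) (hy : y ∈ s) {c : ℂ}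
    (h : ∀ᶠ t : ℂ in 𝓝 0, f (w + t • (y - w)) = c) : f y = c := by
  have ho : IsOpen ((fun t : ℂ => w + t • (y - w)) ⁻¹' s) := hso.preimage (by fun_prop)
  have han := (differentiableOn_comp_line hf w y).analyticOnNhd ho
  have := han.eqOn_of_preconnected_of_eventuallyEq (analyticOnNhd_const (v := c))
    (convex_preimage_line hs w y).isPreconnected (z₀ := 0) (by simpa using hw) h
    (x := 1) (by simpa using hy)
  simpa using this

/-- Local open mapping property, for functions that are only assumed complex differentiable. -/
theorem nhds_le_map_of_not_eventually_const {U : Set E} (hU : IsOpen U) {f : E → ℂ}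
    (hf : DifferentiableOn ℂ f U) {x : E} (hx : x ∈ U) (hne : ¬ ∀ᶠ z in 𝓝 x, f z = f x) :
    𝓝 (f x) ≤ map f (𝓝 x) := by
  obtain ⟨r, hr, hrU⟩ := Metric.isOpen_iff.mp hU x hx
  have hfb := hf.mono hrU
  obtain ⟨y, hy, hyx⟩ : ∃ y ∈ ball x r, f y ≠ f x := by
    by_contra! hcon
    exact hne (eventually_of_mem (ball_mem_nhds x hr) hcon)
  have ho : IsOpen ((fun t : ℂ => x + t • (y - x)) ⁻¹' ball x r) :=
    isOpen_ball.preimage (by fun_prop)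
  have han := (differentiableOn_comp_line hfb x y).analyticOnNhd ho 0 (by simpa using hr)
  have key := han.eventually_constant_or_nhds_le_map_nhds.resolve_left fun hc =>
    hyx (eq_of_eventually_const_on_line isOpen_ball (convex_ball x r) hfb (mem_ball_self hr) hy
      (by simpa using hc))
  have hcont : Continuous fun t : ℂ => x + t • (y - x) := by fun_prop
  have ht : Tendsto (fun t : ℂ => x + t • (y - x)) (𝓝 0) (𝓝 x) := by
    simpa using hcont.tendsto 0
  have hm : map (fun t : ℂ => f (x + t • (y - x))) (𝓝 0) ≤ map f (𝓝 x) := by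
    rw [show (fun t : ℂ => f (x + t • (y - x))) = f ∘ fun t : ℂ => x + t • (y - x) from rfl,
      ← map_map]
    exact map_mono ht
  simpa using key.trans hm

/-- Identity theorem on a connected open set: the set of points of `U` near which `f` equals `c` is
open, and it is relatively closed in `U` by `eq_of_eventually_const_on_line` on small balls. -/
theorem eqOn_const_of_eventually_const {U : Set E} (hU : IsOpen U) (hc : IsPreconnected U)
    {f : E → ℂ} (hf : DifferentiableOn ℂ f U) {x : E} (hx : x ∈ U) {c : ℂ}
    (h : ∀ᶠ z in 𝓝 x, f z = c) : ∀ z ∈ U, f z = c := by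
  have hsub : U ⊆ {z | ∀ᶠ v in 𝓝 z, f v = c} := by
    refine hc.subset_of_closure_inter_subset isOpen_setOfPred_eventually_nhds ⟨x, hx, h⟩ ?_
    rintro z ⟨hz, hzU⟩
    obtain ⟨r, hr, hrU⟩ := Metric.isOpen_iff.mp hU z hzU
    obtain ⟨w, hwb, hw⟩ := mem_closure_iff.mp hz (ball z r) isOpen_ball (mem_ball_self hr)
    refine eventually_of_mem (ball_mem_nhds z hr) fun y hy => ?_
    refine eq_of_eventually_const_on_line isOpen_ball (convex_ball z r) (hf.mono hrU) hwb hy ?_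
    have hcont : Continuous fun t : ℂ => w + t • (y - w) := by fun_prop
    have ht : Tendsto (fun t : ℂ => w + t • (y - w)) (𝓝 0) (𝓝 w) := by
      simpa using hcont.tendsto 0
    exact ht.eventually hw
  exact fun z hz => (hsub hz).self_of_nhds

end Lines

theorem isClosed_closed_ray (θ : ℝ) :
    IsClosed {z : ℂ | ∃ t : ℝ, 0 ≤ t ∧ z = t * Complex.exp (θ * Complex.I)} := by
  have hset : {z : ℂ | ∃ t : ℝ, 0 ≤ t ∧ z = t * Complex.exp (θ * Complex.I)} =
      {z : ℂ | z = (‖z‖ : ℂ) * Complex.exp (θ * Complex.I)} := by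
    ext z
    constructor
    · rintro ⟨t, ht, rfl⟩
      simp [Complex.norm_exp_ofReal_mul_I, abs_of_nonneg ht]
    · exact fun hz => ⟨‖z‖, norm_nonneg z, hz⟩
  rw [hset]
  exact isClosed_eq continuous_id (by fun_prop)

theorem stmt_10 (n : ℕ) (hn : 1 ≤ n)
    (U : Set (EuclideanSpace ℂ (Fin n))) (hU : IsOpen U)
    (h0U : (0 : EuclideanSpace ℂ (Fin n)) ∈ U)
    (hUconn : IsConnected U)
    (f : EuclideanSpace ℂ (Fin n) → ℂ) (hf : DifferentiableOn ℂ f U) (hf0 : f 0 = 0)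
    (hfnc : ¬ ∃ c : ℂ, ∀ x ∈ U, f x = c) :
    ∀ θ : ℝ, closure (Eset U f θ) ∩ U = Eset U f θ ∪ {x ∈ U | f x = 0} := by
  intro θ
  apply Set.Subset.antisymm
  · rintro x ⟨hx, hxU⟩
    have hcont : ContinuousAt f x := hf.continuousOn.continuousAt (hU.mem_nhds hxU)
    have hmem : f x ∈ closure (f '' Eset U f θ) := hcont.continuousWithinAt.mem_closure_image hx
    obtain ⟨t, ht, hft⟩ := closure_minimal
      (by rintro _ ⟨y, ⟨-, t, ht, hy⟩, rfl⟩; exact ⟨t, ht.le, hy⟩) (isClosed_closed_ray θ) hmem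
    rcases ht.eq_or_lt with rfl | ht
    · exact Or.inr ⟨hxU, by simpa using hft⟩
    · exact Or.inl ⟨hxU, t, ht, hft⟩
  · rintro x (hx | ⟨hxU, hx0⟩)
    · exact ⟨subset_closure hx, hx.1⟩
    refine ⟨?_, hxU⟩
    have hle := nhds_le_map_of_not_eventually_const hU hf hxU fun hc =>
      hfnc ⟨_, eqOn_const_of_eventually_const hU hUconn.isPreconnected hf hxU hc⟩
    rw [hx0] at hle
    have hcont : Continuous fun t : ℝ => (t : ℂ) * Complex.exp (θ * Complex.I) := by fun_prop
    have hray : Tendsto (fun t : ℝ => (t : ℂ) * Complex.exp (θ * Complex.I)) (𝓝[>] 0) (𝓝 0) := by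
      simpa using (hcont.tendsto 0).mono_left nhdsWithin_le_nhds
    rw [mem_closure_iff_nhds]
    intro N hN
    have himg : f '' (N ∩ U) ∈ 𝓝 (0 : ℂ) :=
      hle (image_mem_map (inter_mem hN (hU.mem_nhds hxU)))
    obtain ⟨t, ⟨y, ⟨hyN, hyU⟩, hy⟩, ht⟩ :=
      ((hray.eventually_mem himg).and self_mem_nhdsWithin).exists
    exact ⟨y, hyN, hyU, t, ht, hy⟩
end
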